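/- Fix λ₀∈(−2,2), 0<θ≤1 and 0<κ<θ/8. Set a_±=±√(4−λ₀²)/2, c_±=1−λ₀²/4 ± (iλ₀/2)·√(1−λ₀²/4), and φ_±(y)=((a_±+y+iλ₀/2)²−(a_±+iλ₀/2)²)/2 − Log(1+y/(a_±−iλ₀/2)) − c_±·y², where Log is the principal branch of the complex logarithm; φ_± is analytic in a neighborhood of 0 and its Taylor expansion at 0 starts from the third-order term. Then, with ⟨·⟩₀ taken with parameter γ=c_+, one has ⟨exp{−∑_{j=−n}^{n}φ_+(x_j/W)}⟩₀ → 1 as n→∞, and likewise ⟨exp{−∑_{j=−n}^{n}φ_−(x_j/W)}⟩₀ → 1 with γ=c_−. -/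

import Mathlib

open MeasureTheory

/-- Extend `x : Fin m → ℝ` to `ℕ → ℝ` by zero. -/
noncomputable def pad (m : ℕ) (x : Fin m → ℝ) : ℕ → ℝ :=
  fun j => if h : j < m then x ⟨j, h⟩ else 0

/-- `μ_γ(x) = exp{−(1/2)∑_{j=−n+1}^{n}(x_j−x_{j−1})² − (γ/W²)∑_{j=−n}^{n}x_j²}` on `ℝ^N`,
`N = 2n+1` (coordinates relabelled by `Fin N`). -/
noncomputable def muG (m : ℕ) (W : ℝ) (γ : ℂ) (x : Fin m → ℝ) : ℂ :=
  Complex.exp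
    ((((-(1/2) * ∑ j ∈ Finset.Ico 1 m, (pad m x j - pad m x (j-1))^2 : ℝ)) : ℂ)
      - (γ / (W : ℂ)^2) * ((∑ j ∈ Finset.range m, (pad m x j)^2 : ℝ) : ℂ))

/-- `W(n) = N^{(1+θ)/2}` where `N = 2n+1`, so `W² = N^{1+θ}`. -/
noncomputable def Wn (θ : ℝ) (n : ℕ) : ℝ := ((2 * (n : ℝ) + 1)) ^ ((1 + θ) / 2)

/-- `δ(n) = W(n)^{−κ}`. -/
noncomputable def dl (θ κ : ℝ) (n : ℕ) : ℝ := (Wn θ n) ^ (-κ)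

/-- The cube `{x : |x_i| ≤ r for all i}`. -/
def box (m : ℕ) (r : ℝ) : Set (Fin m → ℝ) := {x | ∀ i, |x i| ≤ r}

/-- The normalized average `⟨F⟩₀` over the cube `[−δW, δW]^N` with weight `μ_γ`. -/
noncomputable def avg0 (n : ℕ) (W δ : ℝ) (γ : ℂ) (F : (Fin (2*n+1) → ℝ) → ℂ) : ℂ :=
  (∫ x in box (2*n+1) (δ * W), F x * muG (2*n+1) W γ x) /
    (∫ x in box (2*n+1) (δ * W), muG (2*n+1) W γ x)

/-- `a_+ = √(4−λ₀²)/2`. -/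
noncomputable def aplus (l0 : ℝ) : ℝ := Real.sqrt (4 - l0^2) / 2

/-- `c_± = 1 − λ₀²/4 ± (iλ₀/2)√(1−λ₀²/4)`. -/
noncomputable def cplus (l0 : ℝ) : ℂ :=
  ((1 - l0^2/4 : ℝ) : ℂ) + Complex.I * (l0/2 : ℝ) * (Real.sqrt (1 - l0^2/4) : ℝ)

noncomputable def cminus (l0 : ℝ) : ℂ :=
  ((1 - l0^2/4 : ℝ) : ℂ) - Complex.I * (l0/2 : ℝ) * (Real.sqrt (1 - l0^2/4) : ℝ)

/-- `φ_±(y) = ((a_±+y+iλ₀/2)² − (a_±+iλ₀/2)²)/2 − Log(1+y/(a_±−iλ₀/2)) − c_± y²`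
(with `a = a_±`, `c = c_±`). -/
noncomputable def phiPM (l0 : ℝ) (a : ℝ) (c : ℂ) (y : ℝ) : ℂ :=
  (((a : ℂ) + (y : ℂ) + Complex.I * (l0 : ℂ)/2)^2 - ((a : ℂ) + Complex.I * (l0 : ℂ)/2)^2)/2
    - Complex.log (1 + (y : ℂ)/((a : ℂ) - Complex.I * (l0 : ℂ)/2)) - c * (y : ℂ)^2

/-!
In the variables `y_j = x_j / √W` the average becomes a quotient of partition functions of a chain
whose bonds are Gaussian transition densities of variance `h = 1 / W`, hence a quotient of matrix
elements of powers of a transfer operator. For the free weight `exp (-h γ y²)` Mehler's formula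
diagonalises this operator: its leading eigenvector is an explicit complex Gaussian, and the
remaining spectrum is smaller by a factor `1 - O(h)`, so that a block of order `1 / h` sites is a
rank one operator up to a contraction.

The observable and the cube change the product over a block by a relative amount of order `√h`,
because `φ(y √h)` is cubic. This first-order change is odd, so its matrix element in the even
leading eigenvector vanishes and the effect on the eigenvalue is only of order `h` per block. As
`N ≪ W²`, there are few enough blocks for the total relative error to be `O(√h + N h²) = o(1)`.
Applying this both to `φ` and to `0` shows that numerator and denominator of the average are both
asymptotic to the free partition function.
-/

open ProbabilityTheory (gaussianPDFReal)
open scoped NNReal BoundedContinuousFunction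

namespace BandChain

section SpectralGap

variable {X : Type*} [NormedAddCommGroup X] [NormedSpace ℂ X]

/-- `A` has the simple eigenvalue `1`, with eigenvector `e` and eigenfunctional `α` of norm at
most `M`, and contracts the complementary invariant subspace `ker α` by a factor `4`. -/
structure HasSpectralGap (A : X →L[ℂ] X) (e : X) (α : X →L[ℂ] ℂ) (M : ℝ) : Prop where
  one_le : 1 ≤ M
  norm_vec_le : ‖e‖ ≤ M
  norm_functional_le : ‖α‖ ≤ M
  map_vec : A e = e
  functional_map (f : X) : α (A f) = α f
  functional_vec : α e = 1
  contract (f : X) : ‖A f - α f • e‖ ≤ 1 / 4 * ‖f‖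

namespace HasSpectralGap

variable {A : X →L[ℂ] X} {e : X} {α : X →L[ℂ] ℂ} {M : ℝ}

lemma norm_functional_apply_le (hA : HasSpectralGap A e α M) (f : X) : ‖α f‖ ≤ M * ‖f‖ :=
  (α.le_opNorm f).trans (by gcongr; exact hA.norm_functional_le)

lemma norm_smul_vec_le (hA : HasSpectralGap A e α M) (z : ℂ) : ‖z • e‖ ≤ M * ‖z‖ := by
  rw [norm_smul, mul_comm]
  gcongr
  exact hA.norm_vec_le

lemma norm_sub_smul_le (hA : HasSpectralGap A e α M) (f : X) :
    ‖f - α f • e‖ ≤ 2 * M ^ 2 * ‖f‖ := by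
  have hM := hA.one_le
  calc ‖f - α f • e‖ ≤ ‖f‖ + ‖α f • e‖ := norm_sub_le _ _
    _ ≤ ‖f‖ + M * (M * ‖f‖) := by
      gcongr
      exact (hA.norm_smul_vec_le _).trans (by gcongr; exact hA.norm_functional_apply_le f)
    _ ≤ 2 * M ^ 2 * ‖f‖ := by nlinarith [norm_nonneg f, one_le_pow₀ (n := 2) hM]

lemma norm_map_sub_smul_le (hA : HasSpectralGap A e α M) (f : X) :
    ‖A f - α f • e‖ ≤ 1 / 4 * ‖f - α f • e‖ := by
  simpa [hA.map_vec, hA.functional_vec] using hA.contract (f - α f • e)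

lemma functional_pow (hA : HasSpectralGap A e α M) (f : X) (j : ℕ) : α ((A ^ j) f) = α f := by
  induction j with
  | zero => rfl
  | succ j ih => rw [pow_succ', mul_apply_eq_comp, hA.functional_map, ih]

lemma norm_pow_sub_smul_le (hA : HasSpectralGap A e α M) (f : X) (j : ℕ) :
    ‖(A ^ j) f - α f • e‖ ≤ (1 / 4) ^ j * (2 * M ^ 2 * ‖f‖) := by
  induction j with
  | zero => simpa using hA.norm_sub_smul_le f
  | succ j ih =>
    have h := hA.norm_map_sub_smul_le ((A ^ j) f)
    rw [hA.functional_pow] at h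
    rw [pow_succ', mul_apply_eq_comp, pow_succ']
    linarith

lemma norm_pow_apply_le (hA : HasSpectralGap A e α M) (f : X) (j : ℕ) :
    ‖(A ^ j) f‖ ≤ 3 * M ^ 2 * ‖f‖ := by
  have h₁ : ‖(A ^ j) f - α f • e‖ ≤ 2 * M ^ 2 * ‖f‖ :=
    (hA.norm_pow_sub_smul_le f j).trans <|
      mul_le_of_le_one_left (by have := hA.one_le; positivity)
        (pow_le_one₀ (by norm_num) (by norm_num))
  have h₂ : ‖α f • e‖ ≤ M * (M * ‖f‖) :=
    (hA.norm_smul_vec_le _).trans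
      (by have := hA.one_le; gcongr; exact hA.norm_functional_apply_le f)
  have h₃ := norm_add_le ((A ^ j) f - α f • e) (α f • e)
  rw [sub_add_cancel] at h₃
  linarith

lemma norm_functional_map_add_le (hA : HasSpectralGap A e α M) {E : X →L[ℂ] X} {ε s y : ℝ}
    (hE : ∀ f, ‖E f‖ ≤ ε * ‖f‖) (hEe : ‖α (E e)‖ ≤ ε ^ 2) (hε0 : 0 ≤ ε) {u d : X}
    (hαu : ‖α u‖ ≤ M) (hu : ‖u - α u • e‖ ≤ s) (hαd : ‖α d‖ ≤ 1) (hd : ‖d - α d • e‖ ≤ y) :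
    ‖α (E (u + d))‖ ≤ (M + 1) * ε ^ 2 + M * (ε * (s + y)) := by
  have hM := hA.one_le
  calc ‖α (E (u + d))‖
      = ‖(α u + α d) * α (E e) + α (E ((u - α u • e) + (d - α d • e)))‖ := by
        simp only [map_add, map_sub, map_smul, smul_eq_mul]
        ring_nf
    _ ≤ (M + 1) * ε ^ 2 + M * (ε * (s + y)) := by
      refine (norm_add_le _ _).trans (add_le_add ?_ ?_)
      · rw [norm_mul]
        gcongr
        exact (norm_add_le _ _).trans (add_le_add hαu hαd)
      · refine (hA.norm_functional_apply_le _).trans ?_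
        gcongr
        refine (hE _).trans ?_
        gcongr
        exact (norm_add_le _ _).trans (add_le_add hu hd)

lemma norm_pow_apply_add_le (hA : HasSpectralGap A e α M) {f d : X} (hf : ‖f‖ ≤ 1)
    (hαd : ‖α d‖ ≤ 1) (hd : ‖d - α d • e‖ ≤ 1) (j : ℕ) : ‖(A ^ j) f + d‖ ≤ 5 * M ^ 2 := by
  have hM := hA.one_le
  calc ‖(A ^ j) f + d‖ = ‖(A ^ j) f + α d • e + (d - α d • e)‖ := by congr 1; abel
    _ ≤ 3 * M ^ 2 * 1 + M * 1 + 1 := by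
      refine norm_add₃_le.trans (add_le_add_three ?_ ?_ hd)
      · exact (hA.norm_pow_apply_le f j).trans (by gcongr)
      · exact (hA.norm_smul_vec_le _).trans (by gcongr)
    _ ≤ 5 * M ^ 2 := by nlinarith

lemma norm_functional_map_pow_add_le (hA : HasSpectralGap A e α M) {E : X →L[ℂ] X} {ε : ℝ}
    (hE : ∀ f, ‖E f‖ ≤ ε * ‖f‖) (hEe : ‖α (E e)‖ ≤ ε ^ 2) (hε : 0 ≤ ε) {f d : X} (hf : ‖f‖ ≤ 1)
    (hαd : ‖α d‖ ≤ 1) (hd : ‖d - α d • e‖ ≤ 16 * M ^ 4 * ε) (j : ℕ) :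
    ‖α (E ((A ^ j) f + d))‖ ≤ 18 * M ^ 5 * (ε ^ 2 + 3 / 4 * (1 / 4) ^ j * ε) := by
  have hM := hA.one_le
  set u := (A ^ j) f with hu
  have hαu : ‖α u‖ ≤ M := by
    rw [hu, hA.functional_pow]
    exact (hA.norm_functional_apply_le f).trans (mul_le_of_le_one_right (by linarith) hf)
  have hQu : ‖u - α u • e‖ ≤ (1 / 4) ^ j * (2 * M ^ 2) := by
    rw [hu, hA.functional_pow]
    refine (hA.norm_pow_sub_smul_le f j).trans (mul_le_mul_of_nonneg_left ?_ (by positivity))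
    exact mul_le_of_le_one_right (by positivity) hf
  calc ‖α (E (u + d))‖
      ≤ (M + 1) * ε ^ 2 + M * (ε * ((1 / 4) ^ j * (2 * M ^ 2) + 16 * M ^ 4 * ε)) :=
        hA.norm_functional_map_add_le hE hEe hε hαu hQu hαd hd
    _ = (M + 1 + 16 * M ^ 5) * ε ^ 2 + 2 * M ^ 3 * ((1 / 4) ^ j * ε) := by ring
    _ ≤ 18 * M ^ 5 * ε ^ 2 + 27 / 2 * M ^ 5 * ((1 / 4) ^ j * ε) := by
      have := le_self_pow₀ hM (show 5 ≠ 0 by norm_num)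
      have := one_le_pow₀ hM (n := 5)
      have := pow_le_pow_right₀ hM (show 3 ≤ 5 by norm_num)
      gcongr <;> linarith
    _ = _ := by ring

/-- One step of the recursion for `d j = B ^ j f - A ^ j f`: the component along `e` moves by
`O(ε²)`, up to a geometrically small transient, and the complementary component stays `O(ε)`. -/
lemma norm_pow_sub_pow_step (hA : HasSpectralGap A e α M) {B : X →L[ℂ] X} {ε x : ℝ}
    (hB : ∀ f, ‖(B - A) f‖ ≤ ε * ‖f‖) (hBe : ‖α ((B - A) e)‖ ≤ ε ^ 2) (hε0 : 0 ≤ ε) {f : X}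
    (hf : ‖f‖ ≤ 1) (hε : 36 * M ^ 5 * ε ≤ 1) (j : ℕ) (hx : x ≤ 1)
    (hα : ‖α ((B ^ j) f - (A ^ j) f)‖ ≤ x)
    (hQ : ‖(B ^ j) f - (A ^ j) f - α ((B ^ j) f - (A ^ j) f) • e‖ ≤ 16 * M ^ 4 * ε) :
    ‖α ((B ^ (j + 1)) f - (A ^ (j + 1)) f)‖
        ≤ x + 18 * M ^ 5 * (ε ^ 2 + 3 / 4 * (1 / 4) ^ j * ε) ∧
      ‖(B ^ (j + 1)) f - (A ^ (j + 1)) f - α ((B ^ (j + 1)) f - (A ^ (j + 1)) f) • e‖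
        ≤ 16 * M ^ 4 * ε := by
  have hM := hA.one_le
  set u := (A ^ j) f with hu
  set d := (B ^ j) f - u with hd
  set E := B - A with hE
  have hsucc : (B ^ (j + 1)) f - (A ^ (j + 1)) f = A d + E (u + d) := by
    simp only [pow_succ', mul_apply_eq_comp, hd, hE, map_sub, sub_apply, hu, add_sub_cancel]
    abel
  have hQ1 : 16 * M ^ 4 * ε ≤ 1 := by
    nlinarith [pow_le_pow_right₀ hM (show 4 ≤ 5 by norm_num)]
  have hαE := hA.norm_functional_map_pow_add_le hB hBe hε0 hf (hα.trans hx) hQ j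
  rw [hsucc, map_add, hA.functional_map]
  refine ⟨(norm_add_le _ _).trans (add_le_add hα hαE), ?_⟩
  calc ‖A d + E (u + d) - (α d + α (E (u + d))) • e‖
      = ‖(A d - α d • e) + (E (u + d) - α (E (u + d)) • e)‖ := by rw [add_smul]; congr 1; abel
    _ ≤ 1 / 4 * (16 * M ^ 4 * ε) + 2 * M ^ 2 * (ε * (5 * M ^ 2)) := by
      refine (norm_add_le _ _).trans (add_le_add ?_ ?_)
      · exact (hA.norm_map_sub_smul_le d).trans (by gcongr)
      · refine (hA.norm_sub_smul_le _).trans ?_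
        gcongr
        refine (hB _).trans ?_
        gcongr
        exact hA.norm_pow_apply_add_le hf (hα.trans hx) (hQ.trans hQ1) j
    _ ≤ 16 * M ^ 4 * ε := by nlinarith [pow_pos (show 0 < M by linarith) 4]

/-- First order perturbations of `A` only enter the long products `B ^ b` through their
transversal part, so the error is `O(ε + b ε²)` rather than `O(b ε)`. -/
theorem norm_pow_sub_pow_le (hA : HasSpectralGap A e α M) {B : X →L[ℂ] X} {ε : ℝ}
    (hB : ∀ f, ‖(B - A) f‖ ≤ ε * ‖f‖) (hBe : ‖α ((B - A) e)‖ ≤ ε ^ 2) (hε0 : 0 ≤ ε) {b : ℕ}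
    (hε : 36 * M ^ 5 * (ε + b * ε ^ 2) ≤ 1) {f : X} (hf : ‖f‖ ≤ 1) :
    ‖(B ^ b) f - (A ^ b) f‖ ≤ 52 * M ^ 6 * (ε + b * ε ^ 2) := by
  have hM := hA.one_le
  have key (j : ℕ) (hj : j ≤ b) :
      ‖α ((B ^ j) f - (A ^ j) f)‖ ≤ 18 * M ^ 5 * (j * ε ^ 2 + (2 - (1 / 4) ^ j) * ε) ∧
      ‖(B ^ j) f - (A ^ j) f - α ((B ^ j) f - (A ^ j) f) • e‖ ≤ 16 * M ^ 4 * ε := by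
    induction j with
    | zero =>
      have : 0 ≤ 18 * M ^ 5 * ((2 - 1) * ε) := mul_nonneg (by positivity) (by linarith)
      exact ⟨by simpa using this, by simpa using (by positivity : 0 ≤ 16 * M ^ 4 * ε)⟩
    | succ j ih =>
      obtain ⟨hα, hQ⟩ := ih (by omega)
      have hjb : (j : ℝ) ≤ b := by exact_mod_cast (by omega : j ≤ b)
      have hpow : 0 ≤ ((1 / 4) ^ j : ℝ) := by positivity
      have hx : 18 * M ^ 5 * (j * ε ^ 2 + (2 - (1 / 4) ^ j) * ε) ≤ 1 := by
        refine le_trans ?_ hε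
        rw [show 36 * M ^ 5 * (ε + b * ε ^ 2) = 18 * M ^ 5 * (2 * (ε + b * ε ^ 2)) by ring]
        gcongr
        nlinarith [mul_nonneg hpow hε0, sq_nonneg ε]
      have hε1 : 36 * M ^ 5 * ε ≤ 1 :=
        le_trans (by gcongr; exact le_add_of_nonneg_right (by positivity)) hε
      refine (hA.norm_pow_sub_pow_step hB hBe hε0 hf hε1 j hx hα hQ).imp_left fun h ↦ h.trans_eq ?_
      push_cast
      ring
  obtain ⟨hα, hQ⟩ := key b le_rfl
  set d := (B ^ b) f - (A ^ b) f
  calc ‖d‖ = ‖α d • e + (d - α d • e)‖ := by rw [add_sub_cancel]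
    _ ≤ M * (18 * M ^ 5 * (b * ε ^ 2 + 2 * ε)) + 16 * M ^ 4 * ε := by
      refine (norm_add_le _ _).trans (add_le_add ((hA.norm_smul_vec_le _).trans ?_) hQ)
      gcongr
      refine hα.trans ?_
      gcongr
      exact sub_le_self _ (by positivity)
    _ ≤ 52 * M ^ 6 * (ε + b * ε ^ 2) := by
      have : M ^ 4 * ε ≤ M ^ 6 * ε := by
        gcongr
        · norm_num
      have : 0 ≤ M ^ 6 * (b * ε ^ 2) := by positivity
      linarith

end HasSpectralGap

end SpectralGap

section Transfer

/-- Admissible weights `w` of the transfer operators `f ↦ 𝔼[w(x + Z) f(x + Z)]`. They may jump,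
as indicator functions of intervals do. -/
structure IsWeight (w : ℝ → ℂ) : Prop where
  measurable : Measurable w
  bounded : ∃ C, ∀ y, ‖w y‖ ≤ C

variable {w w' : ℝ → ℂ}

lemma IsWeight.of_norm_le_one (hw : Measurable w) (hw₁ : ∀ y, ‖w y‖ ≤ 1) : IsWeight w :=
  ⟨hw, 1, hw₁⟩

lemma IsWeight.sub (hw : IsWeight w) (hw' : IsWeight w') : IsWeight (w - w') := by
  obtain ⟨hm, C, hC⟩ := hw
  obtain ⟨hm', C', hC'⟩ := hw'
  exact ⟨hm.sub hm', C + C', fun y ↦ (norm_sub_le _ _).trans (add_le_add (hC y) (hC' y))⟩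

lemma IsWeight.mul_bounded (hw : IsWeight w) (f : ℝ →ᵇ ℂ) : IsWeight fun y ↦ w y * f y := by
  obtain ⟨hm, C, hC⟩ := hw
  refine ⟨hm.mul f.continuous.measurable, C * ‖f‖, fun y ↦ ?_⟩
  rw [norm_mul]
  exact mul_le_mul (hC y) (f.norm_coe_le_norm y) (norm_nonneg _) ((norm_nonneg _).trans (hC y))

lemma IsWeight.integrable_mul (hw : IsWeight w) {ℓ : ℝ → ℂ} (hℓ : Integrable ℓ) :
    Integrable fun y ↦ ℓ y * w y :=
  hℓ.mul_bdd hw.measurable.aestronglyMeasurable (Filter.Eventually.of_forall hw.bounded.choose_spec)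

variable (h : ℝ≥0)

lemma gaussianPDFReal_comm (x y : ℝ) : gaussianPDFReal x h y = gaussianPDFReal y h x := by
  simp only [gaussianPDFReal]
  congr 3
  ring

lemma integrable_gaussianPDFReal_mul (hw : IsWeight w) (x : ℝ) :
    Integrable fun y ↦ (gaussianPDFReal x h y : ℂ) * w y :=
  hw.integrable_mul (ProbabilityTheory.integrable_gaussianPDFReal x h).ofReal

variable [NeZero h]

lemma norm_integral_gaussianPDFReal_mul_le {C : ℝ} (hC : ∀ y, ‖w y‖ ≤ C) (x : ℝ) :
    ‖∫ y, (gaussianPDFReal x h y : ℂ) * w y‖ ≤ C := by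
  have hbound (y : ℝ) : ‖(gaussianPDFReal x h y : ℂ) * w y‖ ≤ gaussianPDFReal x h y * C := by
    have hpos := ProbabilityTheory.gaussianPDFReal_nonneg x h y
    rw [norm_mul, Complex.norm_of_nonneg hpos]
    gcongr
    exact hC y
  refine (norm_integral_le_of_norm_le ((ProbabilityTheory.integrable_gaussianPDFReal x h).mul_const
    C) (Filter.Eventually.of_forall hbound)).trans_eq ?_
  rw [integral_mul_const, ProbabilityTheory.integral_gaussianPDFReal_eq_one x (NeZero.ne h),
    one_mul]

lemma gaussianPDFReal_le_of_abs_sub_le_one {x x₀ : ℝ} (hx : |x - x₀| ≤ 1) (y : ℝ) :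
    gaussianPDFReal x h y
      ≤ (√(2 * Real.pi * h))⁻¹ * Real.exp (h : ℝ)⁻¹ * Real.exp (-(4 * h : ℝ)⁻¹ * (y - x₀) ^ 2) := by
  have hh : (0 : ℝ) < h := NNReal.coe_pos.2 (NeZero.pos h)
  rw [gaussianPDFReal, mul_assoc _ (Real.exp _) (Real.exp _), ← Real.exp_add]
  gcongr
  rw [div_le_iff₀ (by positivity)]
  field_simp
  have := sq_le_one_iff_abs_le_one _ |>.2 hx
  nlinarith [sq_nonneg (y - x - (x - x₀))]

lemma continuous_integral_gaussianPDFReal_mul (hw : IsWeight w) :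
    Continuous fun x ↦ ∫ y, (gaussianPDFReal x h y : ℂ) * w y := by
  have hh : (0 : ℝ) < h := NNReal.coe_pos.2 (NeZero.pos h)
  obtain ⟨hm, C, hC⟩ := hw
  refine continuous_iff_continuousAt.2 fun x₀ ↦ ?_
  refine continuousAt_of_dominated (F := fun x y ↦ (gaussianPDFReal x h y : ℂ) * w y)
    (bound := fun y ↦ (√(2 * Real.pi * h))⁻¹ * Real.exp (h : ℝ)⁻¹
      * Real.exp (-(4 * h : ℝ)⁻¹ * (y - x₀) ^ 2) * C) ?_ ?_ ?_ ?_
  · exact Filter.Eventually.of_forall fun x ↦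
      (integrable_gaussianPDFReal_mul h ⟨hm, C, hC⟩ x).aestronglyMeasurable
  · filter_upwards [Metric.closedBall_mem_nhds x₀ one_pos] with x hx
    refine Filter.Eventually.of_forall fun y ↦ ?_
    rw [norm_mul, Complex.norm_of_nonneg (ProbabilityTheory.gaussianPDFReal_nonneg x h y)]
    exact mul_le_mul (gaussianPDFReal_le_of_abs_sub_le_one h hx y) (hC y) (norm_nonneg _)
      (by positivity)
  · exact (((integrable_exp_neg_mul_sq (by positivity)).comp_sub_right x₀).const_mul _).mul_const C
  · refine Filter.Eventually.of_forall fun y ↦ Continuous.continuousAt ?_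
    simp only [gaussianPDFReal]
    fun_prop

/-- The transfer operator `(K f)(x) = 𝔼[w(x + Z) f(x + Z)]`, with `Z` a centred Gaussian of
variance `h`, on bounded continuous functions. -/
noncomputable def transfer (hw : IsWeight w) : (ℝ →ᵇ ℂ) →L[ℂ] (ℝ →ᵇ ℂ) :=
  LinearMap.mkContinuousOfExistsBound
    { toFun f := BoundedContinuousFunction.ofNormedAddCommGroup
        (fun x ↦ ∫ y, (gaussianPDFReal x h y : ℂ) * (w y * f y))
        (continuous_integral_gaussianPDFReal_mul h (hw.mul_bounded f)) _
        (norm_integral_gaussianPDFReal_mul_le h (hw.mul_bounded f).bounded.choose_spec)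
      map_add' f g := by
        ext x
        simp only [BoundedContinuousFunction.coe_ofNormedAddCommGroup,
          BoundedContinuousFunction.add_apply, mul_add]
        exact integral_add (integrable_gaussianPDFReal_mul h (hw.mul_bounded f) x)
          (integrable_gaussianPDFReal_mul h (hw.mul_bounded g) x)
      map_smul' c f := by
        ext x
        simp only [BoundedContinuousFunction.coe_ofNormedAddCommGroup,
          BoundedContinuousFunction.smul_apply, smul_eq_mul, RingHom.id_apply,
          ← integral_const_mul]
        exact integral_congr_ae (Filter.Eventually.of_forall fun y ↦ by ring) }
    ⟨max hw.bounded.choose 0, fun f ↦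
      (BoundedContinuousFunction.norm_le (by positivity)).2 fun x ↦
        norm_integral_gaussianPDFReal_mul_le h (fun y ↦ by
          rw [norm_mul]
          exact mul_le_mul ((hw.bounded.choose_spec y).trans (le_max_left _ _))
            (f.norm_coe_le_norm y) (norm_nonneg _) (by positivity)) x⟩

lemma transfer_apply (hw : IsWeight w) (f : ℝ →ᵇ ℂ) (x : ℝ) :
    transfer h hw f x = ∫ y, (gaussianPDFReal x h y : ℂ) * (w y * f y) := rfl

lemma transfer_sub (hw : IsWeight w) (hw' : IsWeight w') :
    transfer h (hw.sub hw') = transfer h hw - transfer h hw' := by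
  ext f x
  simp only [sub_apply, BoundedContinuousFunction.sub_apply, transfer_apply, Pi.sub_apply, sub_mul,
    mul_sub]
  exact integral_sub (integrable_gaussianPDFReal_mul h (hw.mul_bounded f) x)
    (integrable_gaussianPDFReal_mul h (hw'.mul_bounded f) x)

end Transfer

section Pairing

variable {ℓ : ℝ → ℂ}

lemma integrable_mul_bounded (hℓ : Integrable ℓ) (f : ℝ →ᵇ ℂ) : Integrable fun y ↦ ℓ y * f y :=
  hℓ.mul_bdd f.continuous.aestronglyMeasurable (Filter.Eventually.of_forall f.norm_coe_le_norm)

/-- The functional `f ↦ ∫ ℓ f` on bounded continuous functions. -/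
noncomputable def pairing (hℓ : Integrable ℓ) : (ℝ →ᵇ ℂ) →L[ℂ] ℂ :=
  LinearMap.mkContinuous
    { toFun f := ∫ y, ℓ y * f y
      map_add' f g := by
        simp only [BoundedContinuousFunction.add_apply, mul_add]
        exact integral_add (integrable_mul_bounded hℓ f) (integrable_mul_bounded hℓ g)
      map_smul' c f := by
        simp only [BoundedContinuousFunction.smul_apply, smul_eq_mul, RingHom.id_apply,
          ← integral_const_mul]
        exact integral_congr_ae (Filter.Eventually.of_forall fun y ↦ by ring) }
    (∫ y, ‖ℓ y‖) fun f ↦ by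
      rw [← integral_mul_const]
      refine norm_integral_le_of_norm_le (hℓ.norm.mul_const _)
        (Filter.Eventually.of_forall fun y ↦ ?_)
      rw [norm_mul]
      gcongr
      exact f.norm_coe_le_norm y

lemma pairing_apply (hℓ : Integrable ℓ) (f : ℝ →ᵇ ℂ) : pairing hℓ f = ∫ y, ℓ y * f y := rfl

lemma integrable_pairing_transfer (h : ℝ≥0) [NeZero h] {g : ℝ → ℂ} (hℓ : Integrable ℓ)
    (hg : IsWeight g) :
    Integrable (Function.uncurry fun x y ↦ ℓ x * ((gaussianPDFReal x h y : ℂ) * g y))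
      (volume.prod volume) := by
  obtain ⟨C, hC⟩ := hg.bounded
  have hpdf : Measurable fun z : ℝ × ℝ ↦ (gaussianPDFReal z.1 h z.2 : ℂ) := by
    simp only [gaussianPDFReal]
    fun_prop
  have hmeas : AEStronglyMeasurable
      (Function.uncurry fun x y ↦ ℓ x * ((gaussianPDFReal x h y : ℂ) * g y))
      (volume.prod volume) :=
    hℓ.aestronglyMeasurable.comp_fst.mul
      (hpdf.mul (hg.measurable.comp measurable_snd)).aestronglyMeasurable
  refine (integrable_prod_iff hmeas).2 ⟨Filter.Eventually.of_forall fun x ↦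
    (integrable_gaussianPDFReal_mul h hg x).const_mul (ℓ x),
    (hℓ.norm.mul_const C).mono' hmeas.norm.integral_prod_right' ?_⟩
  refine Filter.Eventually.of_forall fun x ↦ ?_
  rw [Real.norm_of_nonneg (by positivity)]
  simp only [Function.uncurry_apply_pair, norm_mul, integral_const_mul,
    Complex.norm_of_nonneg (ProbabilityTheory.gaussianPDFReal_nonneg _ _ _)]
  gcongr
  calc ∫ y, gaussianPDFReal x h y * ‖g y‖ ≤ ∫ y, gaussianPDFReal x h y * C := by
        refine integral_mono_of_nonneg (Filter.Eventually.of_forall fun y ↦ ?_)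
          ((ProbabilityTheory.integrable_gaussianPDFReal x h).mul_const C)
          (Filter.Eventually.of_forall fun y ↦ ?_)
        · exact mul_nonneg (ProbabilityTheory.gaussianPDFReal_nonneg _ _ _) (norm_nonneg _)
        · exact mul_le_mul_of_nonneg_left (hC y) (ProbabilityTheory.gaussianPDFReal_nonneg _ _ _)
    _ = C := by
        rw [integral_mul_const, ProbabilityTheory.integral_gaussianPDFReal_eq_one x (NeZero.ne h),
          one_mul]

lemma pairing_transfer (h : ℝ≥0) [NeZero h] {w : ℝ → ℂ} (hℓ : Integrable ℓ) (hw : IsWeight w)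
    (f : ℝ →ᵇ ℂ) :
    pairing hℓ (transfer h hw f)
      = ∫ y, (∫ x, ℓ x * gaussianPDFReal y h x) * (w y * f y) := by
  simp only [pairing_apply, transfer_apply, ← integral_const_mul]
  rw [integral_integral_swap (integrable_pairing_transfer h hℓ (hw.mul_bounded f))]
  simp only [← mul_assoc, integral_mul_const, gaussianPDFReal_comm h]

end Pairing

section Chain

/-- The Boltzmann weight of a chain `x_0, …, x_m` with site weights `w` and Gaussian
nearest-neighbour interaction of variance `h`. -/
noncomputable def chainWeight (h : ℝ≥0) (w : ℝ → ℂ) (m : ℕ) (x : Fin (m + 1) → ℝ) : ℂ :=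
  (∏ i, w (x i)) * ∏ i : Fin m, (gaussianPDFReal (x i.castSucc) h (x i.succ) : ℂ)

/-- The partition function of the chain with `m` bonds. -/
noncomputable def partition (h : ℝ≥0) (w : ℝ → ℂ) (m : ℕ) : ℂ :=
  ∫ x : Fin (m + 1) → ℝ, chainWeight h w m x

variable (h : ℝ≥0) {w : ℝ → ℂ}

lemma chainWeight_cons (m : ℕ) (y : ℝ) (x : Fin (m + 1) → ℝ) :
    chainWeight h w (m + 1) (Fin.cons y x) =
      w y * ((gaussianPDFReal y h (x 0) : ℂ) * chainWeight h w m x) := by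
  have hbonds : ∏ i : Fin (m + 1), (gaussianPDFReal ((Fin.cons y x : Fin (m + 2) → ℝ) i.castSucc) h
        ((Fin.cons y x : Fin (m + 2) → ℝ) i.succ) : ℂ) =
      gaussianPDFReal y h (x 0) *
        ∏ i : Fin m, (gaussianPDFReal (x i.castSucc) h (x i.succ) : ℂ) := by
    rw [Fin.prod_univ_succ]
    simp only [Fin.castSucc_zero, ← Fin.succ_castSucc, Fin.cons_zero, Fin.cons_succ]
  rw [chainWeight, hbonds, Fin.prod_univ_succ, chainWeight]
  simp only [Fin.cons_zero, Fin.cons_succ]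
  ring

lemma gaussianPDFReal_le (x y : ℝ) : gaussianPDFReal x h y ≤ (√(2 * Real.pi * h))⁻¹ := by
  rw [gaussianPDFReal]
  refine mul_le_of_le_one_right (by positivity) (Real.exp_le_one_iff.2 ?_)
  rw [neg_div]
  exact neg_nonpos.2 (by positivity)

lemma isWeight_gaussianPDFReal (x : ℝ) : IsWeight fun y ↦ (gaussianPDFReal x h y : ℂ) where
  measurable := by fun_prop
  bounded := ⟨(√(2 * Real.pi * h))⁻¹, fun y ↦ by
    rw [Complex.norm_real, Real.norm_of_nonneg (ProbabilityTheory.gaussianPDFReal_nonneg _ _ _)]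
    exact gaussianPDFReal_le h x y⟩

lemma integrable_mul_chainWeight (hwi : Integrable w) {F : ℝ → ℂ} (hF : IsWeight F) (m : ℕ) :
    Integrable fun x : Fin (m + 1) → ℝ ↦ F (x 0) * chainWeight h w m x := by
  obtain ⟨C, hC⟩ := hF.bounded
  have hprod : Integrable fun x : Fin (m + 1) → ℝ ↦ ∏ i, w (x i) :=
    Integrable.fintype_prod fun _ ↦ hwi
  have hmeas : Measurable fun x : Fin (m + 1) → ℝ ↦
      F (x 0) * ∏ i : Fin m, (gaussianPDFReal (x i.castSucc) h (x i.succ) : ℂ) := by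
    refine (hF.measurable.comp (measurable_pi_apply 0)).mul (Finset.measurable_prod _ fun i _ ↦ ?_)
    simp only [gaussianPDFReal]
    fun_prop
  refine (hprod.mul_bdd (c := C * ∏ _i : Fin m, (√(2 * Real.pi * h))⁻¹)
    hmeas.aestronglyMeasurable (.of_forall fun x ↦ ?_)).congr (.of_forall fun x ↦ ?_)
  · rw [norm_mul, norm_prod]
    have hC₀ : 0 ≤ C := (norm_nonneg _).trans (hC 0)
    gcongr with i
    · exact hC _
    · rw [Complex.norm_real, Real.norm_of_nonneg (ProbabilityTheory.gaussianPDFReal_nonneg _ _ _)]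
      exact gaussianPDFReal_le h _ _
  · simp only [chainWeight]
    ring

lemma integral_mul_chainWeight [NeZero h] (hw : IsWeight w) (hwi : Integrable w) {F : ℝ → ℂ}
    (hF : IsWeight F) (m : ℕ) :
    ∫ x : Fin (m + 1) → ℝ, F (x 0) * chainWeight h w m x =
      ∫ y, F y * (w y * (transfer h hw ^ m) 1 y) := by
  induction m generalizing F with
  | zero =>
    rw [← (volume_preserving_funUnique (Fin 1) ℝ).integral_comp']
    simp only [chainWeight, Finset.univ_eq_empty, Finset.prod_empty, mul_one, pow_zero]
    rfl
  | succ m ih =>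
    have hcons (y : ℝ) (x : Fin (m + 1) → ℝ) :
        (MeasurableEquiv.piFinSuccAbove (fun _ : Fin (m + 2) ↦ ℝ) 0).symm (y, x) =
          Fin.cons y x := by
      ext i
      simp [MeasurableEquiv.piFinSuccAbove, Fin.insertNthEquiv]
    have hvol := (volume_preserving_piFinSuccAbove (fun _ : Fin (m + 2) ↦ ℝ) 0).symm
    have hint := (hvol.integrable_comp_emb (MeasurableEquiv.measurableEmbedding _)).2
      (integrable_mul_chainWeight h hwi hF (m + 1))
    rw [← hvol.integral_comp']
    rw [Measure.volume_eq_prod] at hint ⊢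
    refine (integral_prod _ hint).trans (integral_congr_ae (.of_forall fun y ↦ ?_))
    simp only [hcons, chainWeight_cons, Fin.cons_zero, Function.comp_apply]
    rw [pow_succ', mul_apply_eq_comp, transfer_apply, ← ih (isWeight_gaussianPDFReal h y),
      ← mul_assoc, ← integral_const_mul]
    simp only [mul_assoc]

theorem partition_eq_pairing [NeZero h] (hw : IsWeight w) (hwi : Integrable w) (m : ℕ) :
    partition h w m = pairing hwi ((transfer h hw ^ m) 1) := by
  have hone : IsWeight fun _ ↦ (1 : ℂ) := ⟨measurable_const, 1, by simp⟩
  simpa [partition, pairing_apply] using integral_mul_chainWeight h hw hwi hone m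

end Chain

section Average

/-- The Gaussian factor `exp(-h γ y²)` of a site weight. -/
noncomputable def gaussWeight (h : ℝ) (γ : ℂ) (y : ℝ) : ℂ := Complex.exp (-(h * γ) * y ^ 2)

/-- The factor of a site weight at `s = x_j / W` accounting for the observable and the cube. -/
noncomputable def cutoffExp (φ : ℝ → ℂ) (δ s : ℝ) : ℂ :=
  if |s| ≤ δ then Complex.exp (-φ s) else 0

/-- The site weights of `⟨exp(-∑ φ(x_j / W))⟩₀` in the variables `y_j = √h x_j`, `h = 1 / W`. -/
noncomputable def siteWeight (h : ℝ) (γ : ℂ) (φ : ℝ → ℂ) (δ y : ℝ) : ℂ :=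
  gaussWeight h γ y * cutoffExp φ δ (√h * y)

lemma pad_val {m : ℕ} (x : Fin m → ℝ) (i : Fin m) : pad m x i = x i := by
  simp [pad]

lemma muG_succ (m : ℕ) (W : ℝ) (γ : ℂ) (x : Fin (m + 1) → ℝ) :
    muG (m + 1) W γ x = (∏ i : Fin (m + 1), Complex.exp (-(γ / W ^ 2) * x i ^ 2)) *
      ∏ i : Fin m, Complex.exp (-(x i.succ - x i.castSucc) ^ 2 / 2) := by
  have hsites : ∑ j ∈ Finset.range (m + 1), (pad (m + 1) x j) ^ 2 = ∑ i, x i ^ 2 := by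
    simp only [Finset.sum_range, pad_val]
  have hbonds : ∑ j ∈ Finset.Ico 1 (m + 1), (pad (m + 1) x j - pad (m + 1) x (j - 1)) ^ 2 =
      ∑ i : Fin m, (x i.succ - x i.castSucc) ^ 2 := by
    rw [Finset.sum_Ico_eq_sum_range, Nat.add_sub_cancel, Finset.sum_range]
    refine Finset.sum_congr rfl fun i _ ↦ ?_
    rw [← pad_val x i.succ, ← pad_val x i.castSucc, Fin.val_succ, Fin.val_castSucc,
      add_comm 1, Nat.add_sub_cancel]
  rw [muG, hsites, hbonds, ← Complex.exp_sum, ← Complex.exp_sum, ← Complex.exp_add,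
    ← Finset.mul_sum, ← Finset.sum_div, Finset.sum_neg_distrib]
  push_cast
  ring_nf

lemma measurableSet_box (m : ℕ) (r : ℝ) : MeasurableSet (box m r) := by
  rw [show box m r = ⋂ i, {x : Fin m → ℝ | |x i| ≤ r} by ext; simp [box]]
  exact MeasurableSet.iInter fun i ↦ measurableSet_le (measurable_pi_apply i).abs measurable_const

variable {W : ℝ} {h : ℝ≥0}

lemma cexp_eq_mul_gaussianPDFReal (hh : h ≠ 0) (hW : W * h = 1) (s t : ℝ) :
    Complex.exp (-((√W : ℝ) * (t : ℂ) - (√W : ℝ) * s) ^ 2 / 2) =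
      (√(2 * Real.pi * h) : ℝ) * (gaussianPDFReal s h t : ℂ) := by
  have : (h : ℝ) ≠ 0 := by exact_mod_cast hh
  have hpi : (√(2 * Real.pi * h)) ≠ 0 := by positivity
  have hW₀ : 0 ≤ W := by
    rw [eq_inv_of_mul_eq_one_left hW]
    positivity
  have hsq : (√W : ℂ) ^ 2 = W := by exact_mod_cast Real.sq_sqrt hW₀
  rw [gaussianPDFReal, Complex.ofReal_mul, Complex.ofReal_inv,
    mul_inv_cancel_left₀ (by exact_mod_cast hpi), Complex.ofReal_exp]
  congr 1
  rw [← mul_sub, mul_pow, hsq, eq_inv_of_mul_eq_one_left hW]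
  push_cast
  field_simp

lemma indicator_mul_muG_eq (hh : h ≠ 0) (hW : W * h = 1) (γ : ℂ) (φ : ℝ → ℂ) (δ : ℝ) (m : ℕ)
    (x : Fin (m + 1) → ℝ) :
    (box (m + 1) (δ * W)).indicator
        (fun x ↦ Complex.exp (-(∑ j, φ (x j / W))) * muG (m + 1) W γ x) (√W • x) =
      (√(2 * Real.pi * h) : ℝ) ^ m * chainWeight h (siteWeight h γ φ δ) m x := by
  have hW' : W = (h : ℝ)⁻¹ := eq_inv_of_mul_eq_one_left hW
  have hh₀ : (0 : ℝ) < h := by exact_mod_cast pos_iff_ne_zero.2 hh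
  have hW₀ : 0 < W := hW' ▸ inv_pos.2 hh₀
  have hsq : ((√W : ℝ) : ℂ) ^ 2 = W := by exact_mod_cast Real.sq_sqrt hW₀.le
  have hscale (t : ℝ) : √W * t / W = √h * t := by
    have := Real.mul_self_sqrt hh₀.le
    rw [hW', Real.sqrt_inv]
    field_simp
    linear_combination (-t) * this
  have hmem (t : ℝ) : |√W * t| ≤ δ * W ↔ |√h * t| ≤ δ := by
    rw [← hscale, abs_div, abs_of_pos hW₀, div_le_iff₀ hW₀]
  have hgauss (t : ℝ) : Complex.exp (-(γ / W ^ 2) * ((√W * t : ℝ) : ℂ) ^ 2) =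
      gaussWeight h γ t := by
    rw [gaussWeight, Complex.ofReal_mul, mul_pow, hsq, hW']
    push_cast
    field_simp
  simp only [chainWeight, siteWeight]
  by_cases hx : √W • x ∈ box (m + 1) (δ * W)
  · have hx' (i) : |√h * x i| ≤ δ := (hmem _).1 (hx i)
    simp only [Set.indicator_of_mem hx, muG_succ, Pi.smul_apply, smul_eq_mul, hgauss, hscale,
      cutoffExp, hx', if_true, ← Finset.sum_neg_distrib, Complex.exp_sum, Finset.prod_mul_distrib]
    simp only [Complex.ofReal_mul, cexp_eq_mul_gaussianPDFReal hh hW, Finset.prod_mul_distrib,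
      Finset.prod_const, Finset.card_univ, Fintype.card_fin]
    ring
  · obtain ⟨i, hi⟩ := not_forall.1 hx
    have hcut : cutoffExp φ δ (√h * x i) = 0 := if_neg ((hmem _).not.1 hi)
    rw [Set.indicator_of_notMem hx, Finset.prod_eq_zero (Finset.mem_univ i)
      (by rw [hcut, mul_zero]),
      zero_mul, mul_zero]

lemma integral_box_exp_mul_muG (hh : h ≠ 0) (hW : W * h = 1) (γ : ℂ) (φ : ℝ → ℂ) (δ : ℝ) (m : ℕ) :
    ∫ x in box (m + 1) (δ * W), Complex.exp (-(∑ j, φ (x j / W))) * muG (m + 1) W γ x =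
      (√W ^ (m + 1) * √(2 * Real.pi * h) ^ m : ℝ) * partition h (siteWeight h γ φ δ) m := by
  have hW₀ : 0 < W := by
    rw [eq_inv_of_mul_eq_one_left hW]
    positivity
  have hscale := Measure.integral_comp_smul volume ((box (m + 1) (δ * W)).indicator
    (fun x ↦ Complex.exp (-(∑ j, φ (x j / W))) * muG (m + 1) W γ x)) (√W)
  have hpow : 0 < √W ^ (m + 1) := by positivity
  simp only [indicator_mul_muG_eq hh hW, integral_const_mul, Module.finrank_fintype_fun_eq_card,
    Fintype.card_fin, abs_of_pos (inv_pos.2 hpow)] at hscale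
  rw [integral_indicator (measurableSet_box _ _), eq_inv_smul_iff₀ hpow.ne', Complex.real_smul,
    ← mul_assoc] at hscale
  rw [← hscale, partition]
  push_cast
  rfl

theorem avg0_exp_neg_sum (hh : h ≠ 0) (hW : W * h = 1) (γ : ℂ) (φ : ℝ → ℂ) (δ : ℝ) (n : ℕ) :
    avg0 n W δ γ (fun x ↦ Complex.exp (-(∑ j, φ (x j / W)))) =
      partition h (siteWeight h γ φ δ) (2 * n) / partition h (siteWeight h γ 0 δ) (2 * n) := by
  have hW₀ : 0 < W := by
    rw [eq_inv_of_mul_eq_one_left hW]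
    positivity
  have hconst : ((√W ^ (2 * n + 1) * √(2 * Real.pi * h) ^ (2 * n) : ℝ) : ℂ) ≠ 0 := by
    exact_mod_cast (by positivity : √W ^ (2 * n + 1) * √(2 * Real.pi * h) ^ (2 * n) ≠ 0)
  have hnorm := integral_box_exp_mul_muG hh hW γ 0 δ (2 * n)
  simp only [Pi.zero_apply, Finset.sum_const_zero, neg_zero, Complex.exp_zero, one_mul] at hnorm
  rw [avg0, integral_box_exp_mul_muG hh hW, hnorm, mul_div_mul_left _ _ hconst]

end Average

section GaussianIntegrals

lemma cpow_two_inv_sq (z : ℂ) : (z ^ (2⁻¹ : ℂ)) ^ 2 = z := Complex.cpow_ofNat_inv_pow z 2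

lemma cpow_two_inv_ne_zero {z : ℂ} (hz : z ≠ 0) : z ^ (2⁻¹ : ℂ) ≠ 0 :=
  Complex.cpow_ne_zero_iff_of_exponent_ne_zero (by norm_num) |>.2 hz

lemma norm_cpow_two_inv (z : ℂ) : ‖z ^ (2⁻¹ : ℂ)‖ = √‖z‖ := by
  rw [← Real.sqrt_sq (norm_nonneg (z ^ (2⁻¹ : ℂ))), ← norm_pow, cpow_two_inv_sq]

lemma ofReal_mul_cpow_two_inv {r : ℝ} (hr : 0 < r) {z : ℂ} (hz : z ≠ 0) :
    ((r : ℂ) * z) ^ (2⁻¹ : ℂ) = (√r : ℝ) * z ^ (2⁻¹ : ℂ) := by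
  have hr' : (r : ℂ) ≠ 0 := by exact_mod_cast hr.ne'
  rw [Complex.cpow_def_of_ne_zero (mul_ne_zero hr' hz), Complex.log_ofReal_mul hr hz, add_mul,
    Complex.exp_add, ← Complex.cpow_def_of_ne_zero hz, Real.sqrt_eq_rpow, Complex.ofReal_cpow hr.le,
    Complex.cpow_def_of_ne_zero hr', Complex.ofReal_log hr.le]
  norm_num

lemma norm_cexp_mul_sq (b : ℂ) (y : ℝ) : ‖Complex.exp (b * y ^ 2)‖ = Real.exp (b.re * y ^ 2) := by
  rw [Complex.norm_exp, ← Complex.ofReal_pow, Complex.re_mul_ofReal]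

lemma norm_cexp_sub_one_le (z : ℂ) : ‖Complex.exp z - 1‖ ≤ ‖z‖ * Real.exp ‖z‖ := by
  simpa using Complex.norm_exp_sub_sum_le_norm_mul_exp z 1

lemma ne_zero_of_re_pos {z : ℂ} (hz : 0 < z.re) : z ≠ 0 := by
  rintro rfl
  simp at hz

variable {h : ℝ≥0}

lemma integral_gaussianPDFReal_mul_cexp [NeZero h] {b : ℂ} (hb : 0 < (1 + 2 * h * b).re) (s : ℂ)
    (x : ℝ) :
    ∫ y, (gaussianPDFReal x h y : ℂ) * Complex.exp (-b * y ^ 2 + s * y) =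
      (1 + 2 * h * b)⁻¹ ^ (2⁻¹ : ℂ) *
        Complex.exp ((-b * x ^ 2 + s * x + h * s ^ 2 / 2) / (1 + 2 * h * b)) := by
  have hh : (0 : ℝ) < h := NNReal.coe_pos.2 (NeZero.pos h)
  have hh' : (h : ℂ) ≠ 0 := by exact_mod_cast hh.ne'
  have hb' : 1 + 2 * h * b ≠ 0 := ne_zero_of_re_pos hb
  have hπ : 0 < 2 * Real.pi * h := by positivity
  have hroot : ((√(2 * Real.pi * h) : ℝ) : ℂ) ≠ 0 := by exact_mod_cast (Real.sqrt_pos.2 hπ).ne'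
  have hcoef : -((1 + 2 * h * b) / (2 * h)) = -b - 1 / (2 * h) := by field_simp; ring
  have hre : (-((1 + 2 * h * b) / (2 * h))).re < 0 := by
    rw [Complex.neg_re, show ∀ z : ℂ, z / (2 * h) = z / (2 * h : ℝ) by intro z; push_cast; rfl,
      Complex.div_ofReal_re]
    exact neg_neg_of_pos (div_pos hb (by positivity))
  have hfun (y : ℝ) : (gaussianPDFReal x h y : ℂ) * Complex.exp (-b * y ^ 2 + s * y) =
      (√(2 * Real.pi * h) : ℂ)⁻¹ * Complex.exp (-((1 + 2 * h * b) / (2 * h)) * y ^ 2 +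
        (s + x / h) * y + -x ^ 2 / (2 * h)) := by
    rw [gaussianPDFReal]
    push_cast
    rw [mul_assoc, ← Complex.exp_add, hcoef]
    congr 2
    field_simp
    ring
  have hconst : (Real.pi : ℂ) / - -((1 + 2 * h * b) / (2 * h)) =
      (2 * Real.pi * h : ℝ) * (1 + 2 * h * b)⁻¹ := by
    push_cast
    field_simp
  simp only [hfun]
  rw [integral_const_mul, integral_cexp_quadratic hre, one_div, hconst,
    ofReal_mul_cpow_two_inv hπ (inv_ne_zero hb'), mul_assoc (_ : ℂ) _ (Complex.exp _),
    inv_mul_cancel_left₀ hroot]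
  congr 2
  field_simp
  ring

lemma integral_gaussianPDFReal_mul_cexp_sq [NeZero h] {b : ℂ} (hb : 0 < (1 + 2 * h * b).re)
    (x : ℝ) :
    ∫ y, (gaussianPDFReal x h y : ℂ) * Complex.exp (-b * y ^ 2) =
      (1 + 2 * h * b)⁻¹ ^ (2⁻¹ : ℂ) * Complex.exp (-(b / (1 + 2 * h * b)) * x ^ 2) := by
  have hs := integral_gaussianPDFReal_mul_cexp hb 0 x
  simp only [zero_mul, add_zero, ne_eq, OfNat.ofNat_ne_zero, not_false_eq_true, zero_pow, mul_zero,
    zero_div] at hs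
  rw [hs]
  congr 2
  ring

lemma integral_gaussianPDFReal_mul_exp_sq [NeZero h] {b : ℝ} (hb : 0 < 1 + 2 * h * b) (x : ℝ) :
    ∫ y, gaussianPDFReal x h y * Real.exp (-b * y ^ 2) =
      (√(1 + 2 * h * b))⁻¹ * Real.exp (-(b / (1 + 2 * h * b)) * x ^ 2) := by
  have hb' : 0 < (1 + 2 * (h : ℂ) * b).re := by
    rw [show 1 + 2 * (h : ℂ) * b = (1 + 2 * h * b : ℝ) by push_cast; rfl]
    exact hb
  have hcast := integral_gaussianPDFReal_mul_cexp_sq hb' x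
  have hroot : (1 + 2 * (h : ℂ) * b)⁻¹ ^ (2⁻¹ : ℂ) = ((√(1 + 2 * h * b))⁻¹ : ℝ) := by
    rw [← Real.sqrt_inv, Real.sqrt_eq_rpow, Complex.ofReal_cpow (by positivity)]
    push_cast
    norm_num
  rw [hroot] at hcast
  have hint : ((∫ y, gaussianPDFReal x h y * Real.exp (-b * y ^ 2) : ℝ) : ℂ) =
      ∫ y, (gaussianPDFReal x h y : ℂ) * Complex.exp (-b * y ^ 2) := by
    rw [← integral_complex_ofReal]
    push_cast
    rfl
  rw [← hint] at hcast
  exact_mod_cast hcast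

lemma re_div_one_add_nonneg {b : ℂ} (hb : 0 ≤ b.re) : 0 ≤ (b / (1 + 2 * h * b)).re := by
  have hre : ((h : ℝ) : ℂ).re = h := Complex.ofReal_re h
  have him : ((h : ℝ) : ℂ).im = 0 := Complex.ofReal_im h
  rw [Complex.div_re, ← add_div]
  refine div_nonneg ?_ (Complex.normSq_nonneg _)
  simp only [Complex.add_re, Complex.one_re, Complex.mul_re, Complex.mul_im, Complex.add_im,
    Complex.one_im, Complex.re_ofNat, Complex.im_ofNat, hre, him]
  nlinarith [mul_nonneg h.2 (mul_self_nonneg b.re), mul_nonneg h.2 (mul_self_nonneg b.im)]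

end GaussianIntegrals

section FreeOperator

lemma norm_gaussWeight (h : ℝ) (γ : ℂ) (y : ℝ) :
    ‖gaussWeight h γ y‖ = Real.exp (-(h * γ.re) * y ^ 2) := by
  rw [gaussWeight, norm_cexp_mul_sq, Complex.neg_re, Complex.re_ofReal_mul]

lemma measurable_gaussWeight (h : ℝ) (γ : ℂ) : Measurable (gaussWeight h γ) := by
  unfold gaussWeight
  fun_prop

/-- The Gaussian `exp(-b x²)` as a bounded continuous function. -/
noncomputable def gaussian (b : ℂ) (hb : 0 ≤ b.re) : ℝ →ᵇ ℂ :=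
  .ofNormedAddCommGroup (fun x ↦ Complex.exp (-b * x ^ 2)) (by fun_prop) 1 fun x ↦ by
    rw [norm_cexp_mul_sq, Real.exp_le_one_iff, Complex.neg_re, neg_mul]
    exact neg_nonpos.2 (by positivity)

lemma gaussian_apply (b : ℂ) (hb : 0 ≤ b.re) (x : ℝ) :
    gaussian b hb x = Complex.exp (-b * x ^ 2) := rfl

lemma norm_gaussian_le (b : ℂ) (hb : 0 ≤ b.re) : ‖gaussian b hb‖ ≤ 1 :=
  BoundedContinuousFunction.norm_ofNormedAddCommGroup_le _ zero_le_one _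

/-- `Ω` is the frequency of the complex harmonic oscillator discretized by the transfer operator
with weight `exp(-h γ y²)`; the constants `c` and `M` control it uniformly in the step `h`. -/
structure IsFrequency (h : ℝ≥0) (γ Ω : ℂ) (c M : ℝ) : Prop where
  sq_eq : Ω ^ 2 = 2 * γ + h ^ 2 * γ ^ 2
  pos : 0 < c
  mul_le_re : 16 * c ≤ γ.re
  mul_sq_le_re : 128 * c ^ 2 ≤ γ.re
  mul_step_le : 8 * c * h ≤ 1
  gap : 8 * c ≤ (Ω - h * γ).re
  norm_add_le : ‖Ω‖ + h * ‖γ‖ ≤ M * c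

/-- The ratio of consecutive eigenvalues of the free transfer operator. -/
noncomputable def eigenRatio (h : ℝ≥0) (γ Ω : ℂ) : ℂ := 1 + h ^ 2 * γ - h * Ω

/-- The leading eigenvalue of the free transfer operator. -/
noncomputable def topEigenvalue (h : ℝ≥0) (γ Ω : ℂ) : ℂ := eigenRatio h γ Ω ^ (2⁻¹ : ℂ)

variable {h : ℝ≥0} {γ Ω : ℂ} {c M : ℝ}

namespace IsFrequency

section Frequency

lemma re_pos (H : IsFrequency h γ Ω c M) : 0 < γ.re := by
  linarith [H.mul_le_re, H.pos]

lemma isWeight (H : IsFrequency h γ Ω c M) : IsWeight (gaussWeight h γ) :=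
  .of_norm_le_one (measurable_gaussWeight h γ) fun y ↦ by
    have := H.re_pos
    rw [norm_gaussWeight, Real.exp_le_one_iff, neg_mul]
    exact neg_nonpos.2 (by positivity)

lemma eight_mul_le_re (H : IsFrequency h γ Ω c M) : 8 * c ≤ Ω.re := by
  have hgap := H.gap
  have := mul_nonneg h.coe_nonneg H.re_pos.le
  rw [Complex.sub_re, Complex.re_ofReal_mul] at hgap
  linarith

lemma eight_mul_le_re_add (H : IsFrequency h γ Ω c M) : 8 * c ≤ (Ω + h * γ).re := by
  have hgap := H.gap
  have := mul_nonneg h.coe_nonneg H.re_pos.le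
  rw [Complex.sub_re, Complex.re_ofReal_mul] at hgap
  rw [Complex.add_re, Complex.re_ofReal_mul]
  linarith

lemma re_freq_pos (H : IsFrequency h γ Ω c M) : 0 < Ω.re := by
  linarith [H.eight_mul_le_re, H.pos]

lemma freq_ne_zero (H : IsFrequency h γ Ω c M) : Ω ≠ 0 := ne_zero_of_re_pos H.re_freq_pos

lemma norm_freq_le (H : IsFrequency h γ Ω c M) : ‖Ω‖ ≤ M * c :=
  (le_add_of_nonneg_right (by positivity)).trans H.norm_add_le

lemma eight_le (H : IsFrequency h γ Ω c M) : 8 ≤ M :=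
  le_of_mul_le_mul_right (H.eight_mul_le_re.trans ((Complex.re_le_norm _).trans H.norm_freq_le))
    H.pos

lemma eigenRatio_mul (H : IsFrequency h γ Ω c M) :
    eigenRatio h γ Ω * (1 + h ^ 2 * γ + h * Ω) = 1 := by
  rw [eigenRatio]
  linear_combination (-(h : ℂ) ^ 2) * H.sq_eq

lemma eigenRatio_inv (H : IsFrequency h γ Ω c M) :
    (eigenRatio h γ Ω)⁻¹ = 1 + h ^ 2 * γ + h * Ω :=
  inv_eq_of_mul_eq_one_right H.eigenRatio_mul

lemma eigenRatio_ne_zero (H : IsFrequency h γ Ω c M) : eigenRatio h γ Ω ≠ 0 :=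
  left_ne_zero_of_mul_eq_one H.eigenRatio_mul

lemma topEigenvalue_ne_zero (H : IsFrequency h γ Ω c M) : topEigenvalue h γ Ω ≠ 0 :=
  cpow_two_inv_ne_zero H.eigenRatio_ne_zero

lemma one_add_le_norm_eigenRatio_inv (H : IsFrequency h γ Ω c M) :
    1 + 8 * c * h ≤ ‖(eigenRatio h γ Ω)⁻¹‖ := by
  refine le_trans ?_ (Complex.re_le_norm _)
  have hre : (1 + (h : ℂ) ^ 2 * γ + h * Ω).re = 1 + h ^ 2 * γ.re + h * Ω.re := by
    rw [Complex.add_re, Complex.add_re, Complex.one_re, ← Complex.ofReal_pow, Complex.re_ofReal_mul,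
      Complex.re_ofReal_mul]
  have := mul_le_mul_of_nonneg_left H.eight_mul_le_re h.coe_nonneg
  have := mul_nonneg (sq_nonneg (h : ℝ)) H.re_pos.le
  rw [H.eigenRatio_inv, hre]
  linarith

lemma norm_eigenRatio_pow_le (H : IsFrequency h γ Ω c M) (m : ℕ) :
    ‖eigenRatio h γ Ω ^ m‖ ≤ (1 + 8 * c * (m * h))⁻¹ := by
  have hc := H.pos
  refine le_inv_of_le_inv₀ (by positivity) ?_
  calc 1 + 8 * c * (m * h) = 1 + m * (8 * c * h) := by ring
    _ ≤ (1 + 8 * c * h) ^ m := one_add_mul_le_pow (by linarith [mul_nonneg hc.le h.coe_nonneg]) m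
    _ ≤ ‖(eigenRatio h γ Ω)⁻¹‖ ^ m := by gcongr; exact H.one_add_le_norm_eigenRatio_inv
    _ = ‖eigenRatio h γ Ω ^ m‖⁻¹ := by rw [← norm_pow, inv_pow, norm_inv]

lemma norm_eigenRatio_pow_le_one (H : IsFrequency h γ Ω c M) (m : ℕ) :
    ‖eigenRatio h γ Ω ^ m‖ ≤ 1 := by
  have hc := H.pos
  exact (H.norm_eigenRatio_pow_le m).trans (inv_le_one_of_one_le₀ (by
    linarith [mul_nonneg hc.le (mul_nonneg m.cast_nonneg h.coe_nonneg)]))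

lemma norm_topEigenvalue_inv_pow_le (H : IsFrequency h γ Ω c M) (j : ℕ) :
    ‖(topEigenvalue h γ Ω)⁻¹ ^ j‖ ≤ Real.exp (M * c * (j * h)) := by
  have hM := H.eight_le
  have hc := H.pos
  have hstep : ‖(eigenRatio h γ Ω)⁻¹‖ ≤ 1 + M * c * h := by
    rw [H.eigenRatio_inv]
    calc ‖1 + (h : ℂ) ^ 2 * γ + h * Ω‖ ≤ ‖(1 : ℂ)‖ + ‖(h : ℂ) ^ 2 * γ‖ + ‖(h : ℂ) * Ω‖ :=
          norm_add₃_le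
      _ = 1 + h * (‖Ω‖ + h * ‖γ‖) := by
        rw [norm_one, norm_mul, norm_mul, norm_pow, Complex.norm_of_nonneg h.coe_nonneg]
        ring
      _ ≤ 1 + h * (M * c) := by gcongr; exact H.norm_add_le
      _ = 1 + M * c * h := by ring
  have hroot : ‖(topEigenvalue h γ Ω)⁻¹‖ ≤ 1 + M * c * h := by
    have hone : 1 ≤ 1 + M * c * h := le_add_of_nonneg_right (by positivity)
    refine le_of_sq_le_sq ?_ (by positivity)
    rw [← norm_pow, inv_pow, topEigenvalue, cpow_two_inv_sq]
    exact hstep.trans (le_self_pow₀ hone two_ne_zero)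
  calc ‖(topEigenvalue h γ Ω)⁻¹ ^ j‖ = ‖(topEigenvalue h γ Ω)⁻¹‖ ^ j := norm_pow _ _
    _ ≤ (M * c * h + 1) ^ j := by rw [add_comm _ (1 : ℝ)]; gcongr
    _ ≤ Real.exp (M * c * h) ^ j := by gcongr; exact Real.add_one_le_exp _
    _ = Real.exp (M * c * (j * h)) := by rw [← Real.exp_nat_mul]; ring_nf

end Frequency

end IsFrequency

end FreeOperator

section GroundState

lemma re_div_two (z : ℂ) : (z / 2).re = z.re / 2 := by
  simp

lemma gaussWeight_mul_cexp (h : ℝ) (γ b : ℂ) (y : ℝ) :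
    gaussWeight h γ y * Complex.exp (-b * y ^ 2) = Complex.exp (-(h * γ + b) * y ^ 2) := by
  rw [gaussWeight, ← Complex.exp_add]
  ring_nf

lemma coe_pos_of_neZero (h : ℝ≥0) [NeZero h] : (0 : ℝ) < h := NNReal.coe_pos.2 (NeZero.pos h)

lemma coe_ne_zero_of_neZero (h : ℝ≥0) [NeZero h] : (h : ℂ) ≠ 0 := by
  exact_mod_cast (coe_pos_of_neZero h).ne'

variable {h : ℝ≥0} {γ Ω : ℂ} {c M : ℝ}

lemma re_one_add_pos {b : ℂ} (hb : 0 ≤ b.re) : 0 < (1 + 2 * (h : ℂ) * b).re := by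
  rw [show 2 * (h : ℂ) = (2 * h : ℝ) by push_cast; rfl, Complex.add_re, Complex.one_re,
    Complex.re_ofReal_mul]
  positivity

lemma one_sub_sq_ne_zero {Q : ℂ} (hQ : ‖Q‖ < 1) : 1 - Q ^ 2 ≠ 0 := by
  refine sub_ne_zero.2 fun hone ↦ ?_
  have : ‖Q‖ ^ 2 = 1 := by rw [← norm_pow, ← hone, norm_one]
  exact (pow_lt_one₀ (norm_nonneg Q) hQ two_ne_zero).ne this

/-- The integral of the product of the left and right ground states, before normalization. -/
noncomputable def groundMass (Ω : ℂ) : ℂ := (Real.pi / Ω) ^ (2⁻¹ : ℂ)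

/-- The density of the eigenfunctional of the free transfer operator. -/
noncomputable def groundDensity (h : ℝ≥0) (γ Ω : ℂ) (y : ℝ) : ℂ :=
  (groundMass Ω)⁻¹ * Complex.exp (-((Ω + h * γ) / 2) * y ^ 2)

/-- The exponent of the Mehler kernel at contraction ratio `Q`: apart from the conjugation by the
ground state, an Ornstein–Uhlenbeck transition density with mean `Q x` and variance
`(1 - Q²) / (2 Ω)`. -/
noncomputable def mehlerExponent (h : ℝ≥0) (γ Ω Q : ℂ) (x y : ℝ) : ℂ :=
  -(Ω / (1 - Q ^ 2)) * (y - Q * x) ^ 2 + (Ω - h * γ) / 2 * (y ^ 2 - x ^ 2)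

/-- Half the inverse variance in `y` of the Mehler kernel. -/
noncomputable def mehlerCoeff (h : ℝ≥0) (γ Ω Q : ℂ) : ℂ := Ω / (1 - Q ^ 2) - (Ω - h * γ) / 2

lemma mehlerExponent_eq (Q : ℂ) (x y : ℝ) :
    mehlerExponent h γ Ω Q x y = -mehlerCoeff h γ Ω Q * y ^ 2 + 2 * Ω * Q * x / (1 - Q ^ 2) * y +
      -(Ω * Q ^ 2 / (1 - Q ^ 2) + (Ω - h * γ) / 2) * x ^ 2 := by
  rw [mehlerExponent, mehlerCoeff]
  ring

lemma integrable_cexp_mehlerExponent {Q : ℂ} (hQ : 0 < (mehlerCoeff h γ Ω Q).re) (x : ℝ) :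
    Integrable fun y : ℝ ↦ Complex.exp (mehlerExponent h γ Ω Q x y) := by
  simp only [mehlerExponent_eq]
  exact integrable_cexp_quadratic hQ _ _

namespace IsFrequency

lemma re_smul_add_nonneg (H : IsFrequency h γ Ω c M) {b : ℂ} (hb : 0 ≤ b.re) :
    0 ≤ (h * γ + b).re := by
  rw [Complex.add_re, Complex.re_ofReal_mul]
  exact add_nonneg (mul_nonneg h.coe_nonneg H.re_pos.le) hb

lemma re_half_sub_nonneg (H : IsFrequency h γ Ω c M) : 0 ≤ ((Ω - h * γ) / 2).re := by
  rw [re_div_two]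
  linarith [H.gap, H.pos]

lemma re_half_add_pos (H : IsFrequency h γ Ω c M) : 0 < ((Ω + h * γ) / 2).re := by
  rw [re_div_two]
  linarith [H.eight_mul_le_re_add, H.pos]

/-- The eigenvector of the free transfer operator for its leading eigenvalue. -/
noncomputable def groundState (H : IsFrequency h γ Ω c M) : ℝ →ᵇ ℂ :=
  gaussian ((Ω - h * γ) / 2) H.re_half_sub_nonneg

lemma groundState_apply (H : IsFrequency h γ Ω c M) (x : ℝ) :
    H.groundState x = Complex.exp (-((Ω - h * γ) / 2) * x ^ 2) := rfl

lemma groundState_zero (H : IsFrequency h γ Ω c M) : H.groundState 0 = 1 := by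
  simp [groundState_apply]

lemma integral_cexp_mul_groundState (H : IsFrequency h γ Ω c M) :
    ∫ y : ℝ, Complex.exp (-((Ω + h * γ) / 2) * y ^ 2) * H.groundState y =
      groundMass Ω := by
  rw [groundMass, ← one_div, ← integral_gaussian_complex H.re_freq_pos]
  refine integral_congr_ae (.of_forall fun y ↦ ?_)
  simp only [groundState_apply]
  rw [← Complex.exp_add]
  ring_nf

lemma one_add_half_eq (H : IsFrequency h γ Ω c M) :
    1 + 2 * h * ((Ω + h * γ) / 2) = (eigenRatio h γ Ω)⁻¹ := by
  rw [H.eigenRatio_inv]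
  ring

lemma half_add_div_eq (H : IsFrequency h γ Ω c M) :
    (Ω + h * γ) / 2 / (1 + 2 * h * ((Ω + h * γ) / 2)) = (Ω - h * γ) / 2 := by
  rw [H.one_add_half_eq, div_inv_eq_mul, eigenRatio]
  linear_combination (-(h : ℂ) / 2) * H.sq_eq

lemma integrable_groundDensity (H : IsFrequency h γ Ω c M) : Integrable (groundDensity h γ Ω) :=
  (integrable_cexp_neg_mul_sq H.re_half_add_pos).const_mul _

/-- The eigenfunctional of the free transfer operator, equal to `1` on the ground state. -/
noncomputable def groundFunctional (H : IsFrequency h γ Ω c M) : (ℝ →ᵇ ℂ) →L[ℂ] ℂ :=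
  pairing H.integrable_groundDensity

lemma groundMass_ne_zero (H : IsFrequency h γ Ω c M) : groundMass Ω ≠ 0 :=
  cpow_two_inv_ne_zero (div_ne_zero (by exact_mod_cast Real.pi_ne_zero) H.freq_ne_zero)

theorem groundFunctional_groundState (H : IsFrequency h γ Ω c M) :
    H.groundFunctional H.groundState = 1 := by
  simp only [groundFunctional, pairing_apply, groundDensity, mul_assoc]
  rw [integral_const_mul, H.integral_cexp_mul_groundState, inv_mul_cancel₀ H.groundMass_ne_zero]

variable [NeZero h]

/-- The transfer operator of the Gaussian chain. -/
noncomputable def freeTransfer (H : IsFrequency h γ Ω c M) : (ℝ →ᵇ ℂ) →L[ℂ] (ℝ →ᵇ ℂ) :=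
  transfer h H.isWeight

lemma freeTransfer_gaussian (H : IsFrequency h γ Ω c M) {b : ℂ} (hb : 0 ≤ b.re) (x : ℝ) :
    H.freeTransfer (gaussian b hb) x = (1 + 2 * h * (h * γ + b))⁻¹ ^ (2⁻¹ : ℂ) *
      Complex.exp (-((h * γ + b) / (1 + 2 * h * (h * γ + b))) * x ^ 2) := by
  simp only [freeTransfer, transfer_apply, gaussian_apply, gaussWeight_mul_cexp]
  exact integral_gaussianPDFReal_mul_cexp_sq (re_one_add_pos (H.re_smul_add_nonneg hb)) x

theorem freeTransfer_groundState (H : IsFrequency h γ Ω c M) :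
    H.freeTransfer H.groundState = topEigenvalue h γ Ω • H.groundState := by
  ext x
  have hsum : h * γ + (Ω - h * γ) / 2 = (Ω + h * γ) / 2 := by ring
  rw [groundState, H.freeTransfer_gaussian, hsum, H.half_add_div_eq, H.one_add_half_eq, inv_inv]
  rfl

lemma integral_groundDensity_mul_gaussianPDFReal (H : IsFrequency h γ Ω c M) (y : ℝ) :
    (∫ x, groundDensity h γ Ω x * gaussianPDFReal y h x) * gaussWeight h γ y =
      topEigenvalue h γ Ω * groundDensity h γ Ω y := by
  have hgauss := integral_gaussianPDFReal_mul_cexp_sq (h := h)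
    (re_one_add_pos H.re_half_add_pos.le) y
  rw [H.half_add_div_eq, H.one_add_half_eq, inv_inv, ← topEigenvalue] at hgauss
  have hsum : h * γ + (Ω - h * γ) / 2 = (Ω + h * γ) / 2 := by ring
  simp only [groundDensity, mul_assoc]
  rw [integral_const_mul]
  simp only [mul_comm (Complex.exp _) (gaussianPDFReal _ _ _ : ℂ)]
  rw [hgauss, mul_assoc, mul_assoc, mul_comm (Complex.exp _), gaussWeight_mul_cexp, hsum]
  ring

theorem groundFunctional_freeTransfer (H : IsFrequency h γ Ω c M) (f : ℝ →ᵇ ℂ) :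
    H.groundFunctional (H.freeTransfer f) = topEigenvalue h γ Ω * H.groundFunctional f := by
  rw [groundFunctional, freeTransfer, pairing_transfer, pairing_apply, ← integral_const_mul]
  simp only [← mul_assoc, H.integral_groundDensity_mul_gaussianPDFReal]

lemma freq_eq (H : IsFrequency h γ Ω c M) :
    Ω = ((eigenRatio h γ Ω)⁻¹ - eigenRatio h γ Ω) / (2 * h) := by
  have := coe_ne_zero_of_neZero h
  rw [H.eigenRatio_inv, eigenRatio]
  field_simp
  ring

lemma smul_eq (H : IsFrequency h γ Ω c M) :
    h * γ = ((eigenRatio h γ Ω)⁻¹ + eigenRatio h γ Ω - 2) / (2 * h) := by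
  have := coe_ne_zero_of_neZero h
  rw [H.eigenRatio_inv, eigenRatio]
  field_simp
  ring

lemma norm_eigenRatio_lt_one (H : IsFrequency h γ Ω c M) : ‖eigenRatio h γ Ω‖ < 1 := by
  have hpos := mul_pos H.pos (coe_pos_of_neZero h)
  rw [← inv_inv (eigenRatio h γ Ω), norm_inv]
  exact inv_lt_one_of_one_lt₀ (by linarith [H.one_add_le_norm_eigenRatio_inv])

lemma one_add_mehlerCoeff (H : IsFrequency h γ Ω c M) {Q : ℂ} (hQ : 1 - Q ^ 2 ≠ 0) :
    1 + 2 * h * mehlerCoeff h γ Ω Q =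
      (1 - (eigenRatio h γ Ω * Q) ^ 2) / (eigenRatio h γ Ω * (1 - Q ^ 2)) := by
  have := coe_ne_zero_of_neZero h
  have hq := H.eigenRatio_ne_zero
  have hΩ := H.freq_eq
  have hγ := H.smul_eq
  generalize eigenRatio h γ Ω = q at *
  rw [mehlerCoeff, hγ, hΩ]
  field_simp
  ring

lemma mehlerCoeff_mul (H : IsFrequency h γ Ω c M) {Q : ℂ} (hQ : 1 - Q ^ 2 ≠ 0)
    (hqQ : 1 - (eigenRatio h γ Ω * Q) ^ 2 ≠ 0) :
    mehlerCoeff h γ Ω (eigenRatio h γ Ω * Q) =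
      h * γ + mehlerCoeff h γ Ω Q / (1 + 2 * h * mehlerCoeff h γ Ω Q) := by
  rw [H.one_add_mehlerCoeff hQ]
  have := coe_ne_zero_of_neZero h
  have hq := H.eigenRatio_ne_zero
  have hΩ := H.freq_eq
  have hγ := H.smul_eq
  generalize eigenRatio h γ Ω = q at *
  rw [mul_pow q Q] at hqQ
  rw [mehlerCoeff, mehlerCoeff, hγ, hΩ, mul_pow q Q]
  field_simp
  ring

lemma mehlerExponent_mul (H : IsFrequency h γ Ω c M) {Q : ℂ} (hQ : 1 - Q ^ 2 ≠ 0)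
    (hqQ : 1 - (eigenRatio h γ Ω * Q) ^ 2 ≠ 0) (x y : ℝ) :
    mehlerExponent h γ Ω (eigenRatio h γ Ω * Q) x y =
      -(Ω * Q ^ 2 / (1 - Q ^ 2) + (Ω - h * γ) / 2) * x ^ 2 +
        (-mehlerCoeff h γ Ω Q * y ^ 2 + 2 * Ω * Q * x / (1 - Q ^ 2) * y +
          h * (2 * Ω * Q * x / (1 - Q ^ 2)) ^ 2 / 2) / (1 + 2 * h * mehlerCoeff h γ Ω Q) +
        -(h * γ) * y ^ 2 := by
  rw [H.one_add_mehlerCoeff hQ]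
  have := coe_ne_zero_of_neZero h
  have hq := H.eigenRatio_ne_zero
  have hΩ := H.freq_eq
  have hγ := H.smul_eq
  generalize eigenRatio h γ Ω = q at *
  rw [mul_pow q Q] at hqQ
  rw [mehlerExponent, mehlerCoeff, mul_pow q Q, hγ, hΩ]
  field_simp
  ring

lemma mehlerExponent_eigenRatio (H : IsFrequency h γ Ω c M) (x y : ℝ) :
    mehlerExponent h γ Ω (eigenRatio h γ Ω) x y =
      -(y - x) ^ 2 / (2 * h) + -(h * γ) * y ^ 2 := by
  have hQ := one_sub_sq_ne_zero H.norm_eigenRatio_lt_one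
  have := coe_ne_zero_of_neZero h
  have hq := H.eigenRatio_ne_zero
  have hΩ := H.freq_eq
  have hγ := H.smul_eq
  generalize eigenRatio h γ Ω = q at *
  rw [mehlerExponent, hγ, hΩ]
  field_simp
  ring

lemma mehlerCoeff_eigenRatio (H : IsFrequency h γ Ω c M) :
    mehlerCoeff h γ Ω (eigenRatio h γ Ω) = h * γ + ((2 * h)⁻¹ : ℝ) := by
  have hQ := one_sub_sq_ne_zero H.norm_eigenRatio_lt_one
  have := coe_ne_zero_of_neZero h
  have hq := H.eigenRatio_ne_zero
  have hΩ := H.freq_eq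
  have hγ := H.smul_eq
  generalize eigenRatio h γ Ω = q at *
  push_cast
  rw [mehlerCoeff, hγ, hΩ]
  field_simp
  ring

lemma norm_eigenRatio_pow_lt_one (H : IsFrequency h γ Ω c M) {m : ℕ} (hm : m ≠ 0) :
    ‖eigenRatio h γ Ω ^ m‖ < 1 := by
  rw [norm_pow]
  exact pow_lt_one₀ (norm_nonneg _) H.norm_eigenRatio_lt_one hm

lemma one_sub_eigenRatio_pow_sq_ne_zero (H : IsFrequency h γ Ω c M) {m : ℕ} (hm : m ≠ 0) :
    1 - (eigenRatio h γ Ω ^ m) ^ 2 ≠ 0 :=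
  one_sub_sq_ne_zero (H.norm_eigenRatio_pow_lt_one hm)

lemma re_mehlerCoeff_pos (H : IsFrequency h γ Ω c M) (m : ℕ) :
    0 < (mehlerCoeff h γ Ω (eigenRatio h γ Ω ^ (m + 1))).re := by
  have hh := coe_pos_of_neZero h
  have hγ := mul_pos hh H.re_pos
  induction m with
  | zero =>
    rw [zero_add, pow_one, H.mehlerCoeff_eigenRatio, Complex.add_re, Complex.ofReal_re,
      Complex.re_ofReal_mul]
    positivity
  | succ m ih =>
    have hQ := H.one_sub_eigenRatio_pow_sq_ne_zero m.succ_ne_zero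
    have hqQ := H.one_sub_eigenRatio_pow_sq_ne_zero (m + 1).succ_ne_zero
    rw [Nat.succ_eq_add_one, pow_succ' _ (m + 1)] at hqQ
    rw [pow_succ' _ (m + 1), H.mehlerCoeff_mul hQ hqQ, Complex.add_re, Complex.re_ofReal_mul]
    exact add_pos_of_pos_of_nonneg hγ (re_div_one_add_nonneg ih.le)

lemma integral_cexp_mehlerExponent_mul_gaussianPDFReal (H : IsFrequency h γ Ω c M) {Q : ℂ}
    (hre : 0 < (mehlerCoeff h γ Ω Q).re) (hQ : 1 - Q ^ 2 ≠ 0)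
    (hqQ : 1 - (eigenRatio h γ Ω * Q) ^ 2 ≠ 0) (x y : ℝ) :
    (∫ u, Complex.exp (mehlerExponent h γ Ω Q x u) * gaussianPDFReal y h u) * gaussWeight h γ y =
      (1 + 2 * h * mehlerCoeff h γ Ω Q)⁻¹ ^ (2⁻¹ : ℂ) *
        Complex.exp (mehlerExponent h γ Ω (eigenRatio h γ Ω * Q) x y) := by
  have hsplit (u : ℝ) : Complex.exp (mehlerExponent h γ Ω Q x u) * gaussianPDFReal y h u =
      Complex.exp (-(Ω * Q ^ 2 / (1 - Q ^ 2) + (Ω - h * γ) / 2) * x ^ 2) * (gaussianPDFReal y h u *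
        Complex.exp (-mehlerCoeff h γ Ω Q * u ^ 2 + 2 * Ω * Q * x / (1 - Q ^ 2) * u)) := by
    rw [mehlerExponent_eq, Complex.exp_add]
    ring
  simp only [hsplit]
  rw [integral_const_mul, integral_gaussianPDFReal_mul_cexp (re_one_add_pos hre.le),
    H.mehlerExponent_mul hQ hqQ, Complex.exp_add, Complex.exp_add, gaussWeight]
  ring

/-- Mehler's formula. -/
theorem exists_freeTransfer_pow_succ_eq (H : IsFrequency h γ Ω c M) (m : ℕ) :
    ∃ D : ℂ, ∀ (f : ℝ →ᵇ ℂ) (x : ℝ), (H.freeTransfer ^ (m + 1)) f x =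
      D * ∫ y, Complex.exp (mehlerExponent h γ Ω (eigenRatio h γ Ω ^ (m + 1)) x y) * f y := by
  induction m with
  | zero =>
    refine ⟨((√(2 * Real.pi * h))⁻¹ : ℝ), fun f x ↦ ?_⟩
    rw [zero_add, pow_one, pow_one, freeTransfer, transfer_apply, ← integral_const_mul]
    refine integral_congr_ae (.of_forall fun y ↦ ?_)
    simp only
    rw [H.mehlerExponent_eigenRatio, Complex.exp_add, gaussianPDFReal, gaussWeight]
    push_cast
    ring
  | succ m ih =>
    obtain ⟨D, hD⟩ := ih
    set Q := eigenRatio h γ Ω ^ (m + 1) with hQdef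
    have hre : 0 < (mehlerCoeff h γ Ω Q).re := H.re_mehlerCoeff_pos m
    have hQ : 1 - Q ^ 2 ≠ 0 := H.one_sub_eigenRatio_pow_sq_ne_zero m.succ_ne_zero
    have hqQ := H.one_sub_eigenRatio_pow_sq_ne_zero (m + 1).succ_ne_zero
    rw [Nat.succ_eq_add_one, pow_succ' _ (m + 1), ← hQdef] at hqQ
    refine ⟨D * (1 + 2 * h * mehlerCoeff h γ Ω Q)⁻¹ ^ (2⁻¹ : ℂ), fun f x ↦ ?_⟩
    have hpair : ∫ y, Complex.exp (mehlerExponent h γ Ω Q x y) * H.freeTransfer f y =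
        pairing (integrable_cexp_mehlerExponent hre x) (H.freeTransfer f) := rfl
    rw [pow_succ, mul_apply_eq_comp, hD, hpair, freeTransfer, pairing_transfer, mul_assoc,
      ← integral_const_mul ((1 + 2 * h * mehlerCoeff h γ Ω Q)⁻¹ ^ (2⁻¹ : ℂ)), pow_succ' _ (m + 1),
      ← hQdef]
    congr 1
    refine integral_congr_ae (.of_forall fun y ↦ ?_)
    simp only [← mul_assoc]
    rw [H.integral_cexp_mehlerExponent_mul_gaussianPDFReal hre hQ hqQ]

end IsFrequency

end GroundState

section Gap

variable {h : ℝ≥0} {γ Ω : ℂ} {c M : ℝ}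

/-- The part of the Mehler exponent that couples its two variables: the exponent of the ratio
between the Mehler kernel and its rank-one limit. -/
noncomputable def mehlerCoupling (Ω Q : ℂ) (x y : ℝ) : ℂ :=
  -(Ω * Q * (Q * (x ^ 2 + y ^ 2) - 2 * x * y) / (1 - Q ^ 2))

lemma mehlerExponent_eq_add_coupling {Q : ℂ} (hQ : 1 - Q ^ 2 ≠ 0) (x y : ℝ) :
    mehlerExponent h γ Ω Q x y = -((Ω - h * γ) / 2) * x ^ 2 + -((Ω + h * γ) / 2) * y ^ 2 +
      mehlerCoupling Ω Q x y := by
  rw [mehlerExponent, mehlerCoupling]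
  field_simp
  ring

lemma norm_mehlerCoupling_le {Q : ℂ} (hQ : ‖Q‖ ≤ 1 / 2) (x y : ℝ) :
    ‖mehlerCoupling Ω Q x y‖ ≤ 2 * ‖Ω‖ * ‖Q‖ * (x ^ 2 + y ^ 2) := by
  have hden : 3 / 4 ≤ ‖1 - Q ^ 2‖ := by
    have hsq : ‖Q ^ 2‖ ≤ 1 / 4 := by rw [norm_pow]; nlinarith [norm_nonneg Q]
    have := norm_sub_norm_le (1 : ℂ) (Q ^ 2)
    rw [norm_one] at this
    linarith
  have hxy : ‖(2 * x * y : ℂ)‖ ≤ x ^ 2 + y ^ 2 := by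
    rw [norm_mul, norm_mul, Complex.norm_ofNat, Complex.norm_real, Complex.norm_real,
      Real.norm_eq_abs, Real.norm_eq_abs, ← sq_abs x, ← sq_abs y]
    exact two_mul_le_add_sq _ _
  have hsum : ‖(x ^ 2 + y ^ 2 : ℂ)‖ = x ^ 2 + y ^ 2 := by
    rw [← Complex.norm_of_nonneg (show 0 ≤ x ^ 2 + y ^ 2 by positivity)]
    push_cast
    rfl
  have hnum : ‖Q * (x ^ 2 + y ^ 2 : ℂ) - 2 * x * y‖ ≤ 3 / 2 * (x ^ 2 + y ^ 2) :=
    calc ‖Q * (x ^ 2 + y ^ 2 : ℂ) - 2 * x * y‖ ≤ ‖Q‖ * (x ^ 2 + y ^ 2) + (x ^ 2 + y ^ 2) := by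
          refine (norm_sub_le _ _).trans (add_le_add ?_ hxy)
          rw [norm_mul, hsum]
      _ ≤ 1 / 2 * (x ^ 2 + y ^ 2) + (x ^ 2 + y ^ 2) := by gcongr
      _ = 3 / 2 * (x ^ 2 + y ^ 2) := by ring
  rw [mehlerCoupling, norm_neg, norm_div, norm_mul, norm_mul]
  calc ‖Ω‖ * ‖Q‖ * ‖Q * (x ^ 2 + y ^ 2 : ℂ) - 2 * x * y‖ / ‖1 - Q ^ 2‖
      ≤ ‖Ω‖ * ‖Q‖ * (3 / 2 * (x ^ 2 + y ^ 2)) / (3 / 4) := by gcongr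
    _ = 2 * ‖Ω‖ * ‖Q‖ * (x ^ 2 + y ^ 2) := by ring

lemma norm_integral_le_of_norm_le_exp_neg_mul_sq {b C : ℝ} (hb : 0 < b) {g : ℝ → ℂ}
    (hg : ∀ y, ‖g y‖ ≤ C * Real.exp (-b * y ^ 2)) : ‖∫ y, g y‖ ≤ C * √(Real.pi / b) := by
  refine (norm_integral_le_of_norm_le ((integrable_exp_neg_mul_sq hb).const_mul C)
    (.of_forall hg)).trans_eq ?_
  rw [integral_const_mul, integral_gaussian]

namespace IsFrequency

lemma norm_le_half (H : IsFrequency h γ Ω c M) {Q : ℂ} (hQ : 2 * M * ‖Q‖ ≤ 1) : ‖Q‖ ≤ 1 / 2 := by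
  nlinarith [H.eight_le, norm_nonneg Q]

lemma norm_cexp_mehlerCoupling_sub_one_le (H : IsFrequency h γ Ω c M) {Q : ℂ}
    (hQ : 2 * M * ‖Q‖ ≤ 1) (x y : ℝ) :
    ‖Complex.exp (mehlerCoupling Ω Q x y) - 1‖ ≤
      2 * M * ‖Q‖ * Real.exp (2 * c * (x ^ 2 + y ^ 2)) := by
  have hc := H.pos
  have hM := H.eight_le
  set S := x ^ 2 + y ^ 2
  set z := mehlerCoupling Ω Q x y
  have hz : ‖z‖ ≤ 2 * M * ‖Q‖ * (c * S) :=
    calc ‖z‖ ≤ 2 * ‖Ω‖ * ‖Q‖ * S := norm_mehlerCoupling_le (H.norm_le_half hQ) x y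
      _ ≤ 2 * (M * c) * ‖Q‖ * S := by gcongr; exact H.norm_freq_le
      _ = 2 * M * ‖Q‖ * (c * S) := by ring
  have hz' : ‖z‖ ≤ c * S := hz.trans (mul_le_of_le_one_left (by positivity) hQ)
  calc ‖Complex.exp z - 1‖ ≤ ‖z‖ * Real.exp ‖z‖ := norm_cexp_sub_one_le z
    _ ≤ 2 * M * ‖Q‖ * Real.exp (c * S) * Real.exp (c * S) := by
        gcongr
        exact hz.trans (by gcongr; linarith [Real.add_one_le_exp (c * S)])
    _ = 2 * M * ‖Q‖ * Real.exp (2 * c * S) := by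
        rw [mul_assoc, ← Real.exp_add]
        ring_nf

lemma norm_cexp_neg_half_sub_le (H : IsFrequency h γ Ω c M) (x : ℝ) :
    ‖Complex.exp (-((Ω - h * γ) / 2) * x ^ 2)‖ ≤ Real.exp (-(4 * c) * x ^ 2) := by
  rw [norm_cexp_mul_sq, Complex.neg_re, re_div_two]
  gcongr
  linarith [H.gap]

lemma norm_cexp_neg_half_add_le (H : IsFrequency h γ Ω c M) (y : ℝ) :
    ‖Complex.exp (-((Ω + h * γ) / 2) * y ^ 2)‖ ≤ Real.exp (-(4 * c) * y ^ 2) := by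
  rw [norm_cexp_mul_sq, Complex.neg_re, re_div_two]
  gcongr
  linarith [H.eight_mul_le_re_add]

lemma norm_cexp_mehlerExponent_sub_le (H : IsFrequency h γ Ω c M) {Q : ℂ}
    (hQ : 2 * M * ‖Q‖ ≤ 1) (x y : ℝ) :
    ‖Complex.exp (mehlerExponent h γ Ω Q x y) -
      Complex.exp (-((Ω - h * γ) / 2) * x ^ 2) * Complex.exp (-((Ω + h * γ) / 2) * y ^ 2)‖ ≤
      2 * M * ‖Q‖ * Real.exp (-(2 * c) * y ^ 2) := by
  have hc := H.pos
  have hM := H.eight_le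
  have hQ₁ : 1 - Q ^ 2 ≠ 0 := one_sub_sq_ne_zero ((H.norm_le_half hQ).trans_lt (by norm_num))
  rw [mehlerExponent_eq_add_coupling hQ₁, Complex.exp_add, Complex.exp_add, ← mul_sub_one,
    norm_mul, norm_mul]
  calc _ ≤ Real.exp (-(4 * c) * x ^ 2) * Real.exp (-(4 * c) * y ^ 2) *
        (2 * M * ‖Q‖ * Real.exp (2 * c * (x ^ 2 + y ^ 2))) := by
        gcongr
        · exact H.norm_cexp_neg_half_sub_le x
        · exact H.norm_cexp_neg_half_add_le y
        · exact H.norm_cexp_mehlerCoupling_sub_one_le hQ x y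
    _ = 2 * M * ‖Q‖ * Real.exp (-(2 * c) * x ^ 2 + -(2 * c) * y ^ 2) := by
        rw [mul_left_comm, ← Real.exp_add, ← Real.exp_add]
        ring_nf
    _ ≤ 2 * M * ‖Q‖ * Real.exp (-(2 * c) * y ^ 2) := by
        gcongr
        linarith [mul_nonneg hc.le (sq_nonneg x)]

lemma sqrt_pi_div_le (H : IsFrequency h γ Ω c M) :
    √(Real.pi / (2 * c)) ≤ M * ‖groundMass Ω‖ := by
  have hc := H.pos
  have hM := H.eight_le
  have hΩ : 0 < ‖Ω‖ := norm_pos_iff.2 H.freq_ne_zero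
  rw [groundMass, norm_cpow_two_inv, norm_div, Complex.norm_of_nonneg Real.pi_pos.le]
  refine Real.sqrt_le_iff.2 ⟨by positivity, ?_⟩
  rw [mul_pow, Real.sq_sqrt (by positivity), ← mul_div_assoc, div_le_div_iff₀ (by positivity) hΩ]
  calc Real.pi * ‖Ω‖ ≤ Real.pi * (M * c) := by gcongr; exact H.norm_freq_le
    _ = Real.pi * c * M * 1 := by ring
    _ ≤ Real.pi * c * M * (2 * M) := by gcongr; linarith
    _ = M ^ 2 * Real.pi * (2 * c) := by ring

lemma norm_groundDensity_le (H : IsFrequency h γ Ω c M) (y : ℝ) :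
    ‖groundDensity h γ Ω y‖ ≤
      ‖groundMass Ω‖⁻¹ * Real.exp (-(4 * c) * y ^ 2) := by
  rw [groundDensity, norm_mul, norm_inv]
  gcongr
  exact H.norm_cexp_neg_half_add_le y

lemma norm_integral_le_of_norm_le_exp (H : IsFrequency h γ Ω c M) {g : ℝ → ℂ} {C : ℝ}
    (hg : ∀ y, ‖g y‖ ≤ C * Real.exp (-(2 * c) * y ^ 2)) :
    ‖∫ y, g y‖ ≤ C * (M * ‖groundMass Ω‖) := by
  have hc := H.pos
  have hC : 0 ≤ C := by simpa using (norm_nonneg _).trans (hg 0)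
  refine (norm_integral_le_of_norm_le_exp_neg_mul_sq (by positivity) hg).trans ?_
  gcongr
  exact H.sqrt_pi_div_le

lemma norm_groundState_le (H : IsFrequency h γ Ω c M) : ‖H.groundState‖ ≤ 1 :=
  norm_gaussian_le _ _

lemma norm_groundState_apply_le (H : IsFrequency h γ Ω c M) (x : ℝ) :
    ‖H.groundState x‖ ≤ Real.exp (-(4 * c) * x ^ 2) :=
  H.norm_cexp_neg_half_sub_le x

lemma norm_groundFunctional_apply_le (H : IsFrequency h γ Ω c M) (f : ℝ →ᵇ ℂ) :
    ‖H.groundFunctional f‖ ≤ M * ‖f‖ := by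
  have hc := H.pos
  have hmass := norm_ne_zero_iff.2 H.groundMass_ne_zero
  have hbound (y : ℝ) : ‖groundDensity h γ Ω y * f y‖ ≤
      ‖groundMass Ω‖⁻¹ * ‖f‖ * Real.exp (-(2 * c) * y ^ 2) := by
    rw [norm_mul, mul_right_comm]
    gcongr
    · exact (H.norm_groundDensity_le y).trans (by gcongr; linarith)
    · exact f.norm_coe_le_norm y
  refine (H.norm_integral_le_of_norm_le_exp hbound).trans_eq ?_
  field_simp

lemma norm_groundFunctional_le (H : IsFrequency h γ Ω c M) : ‖H.groundFunctional‖ ≤ M :=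
  ContinuousLinearMap.opNorm_le_bound _ (by linarith [H.eight_le]) H.norm_groundFunctional_apply_le

lemma groundMass_mul_groundFunctional (H : IsFrequency h γ Ω c M) (f : ℝ →ᵇ ℂ) :
    groundMass Ω * H.groundFunctional f =
      ∫ y : ℝ, Complex.exp (-((Ω + h * γ) / 2) * y ^ 2) * f y := by
  simp only [groundFunctional, pairing_apply, groundDensity, mul_assoc]
  rw [integral_const_mul, mul_inv_cancel_left₀ H.groundMass_ne_zero]

lemma norm_integral_mehler_sub_le (H : IsFrequency h γ Ω c M) {Q : ℂ}
    (hre : 0 < (mehlerCoeff h γ Ω Q).re) (hQ : 2 * M * ‖Q‖ ≤ 1) (f : ℝ →ᵇ ℂ) (x : ℝ) :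
    ‖(∫ y, Complex.exp (mehlerExponent h γ Ω Q x y) * f y) -
      H.groundState x * (groundMass Ω * H.groundFunctional f)‖ ≤
      2 * M ^ 2 * ‖Q‖ * ‖groundMass Ω‖ * ‖f‖ := by
  have hM := H.eight_le
  have hbound (y : ℝ) : ‖Complex.exp (mehlerExponent h γ Ω Q x y) * f y -
      H.groundState x * (Complex.exp (-((Ω + h * γ) / 2) * y ^ 2) * f y)‖ ≤
      2 * M * ‖Q‖ * ‖f‖ * Real.exp (-(2 * c) * y ^ 2) := by
    rw [← mul_assoc, ← sub_mul, norm_mul, mul_right_comm]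
    gcongr
    · exact H.norm_cexp_mehlerExponent_sub_le hQ x y
    · exact f.norm_coe_le_norm y
  rw [groundMass_mul_groundFunctional, ← integral_const_mul, ← integral_sub
    (integrable_mul_bounded (integrable_cexp_mehlerExponent hre x) f)
    ((integrable_mul_bounded (integrable_cexp_neg_mul_sq H.re_half_add_pos) f).const_mul _)]
  exact (H.norm_integral_le_of_norm_le_exp hbound).trans_eq (by ring)

lemma norm_integral_mehler_zero_sub_le (H : IsFrequency h γ Ω c M) {Q : ℂ}
    (hre : 0 < (mehlerCoeff h γ Ω Q).re) (hQ : 2 * M * ‖Q‖ ≤ 1) :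
    ‖(∫ y, Complex.exp (mehlerExponent h γ Ω Q 0 y) * H.groundState y) - groundMass Ω‖ ≤
      2 * M ^ 2 * ‖Q‖ * ‖groundMass Ω‖ := by
  have hM := H.eight_le
  have hmehler := H.norm_integral_mehler_sub_le hre hQ H.groundState 0
  rw [H.groundFunctional_groundState, mul_one, H.groundState_zero, one_mul] at hmehler
  exact hmehler.trans (mul_le_of_le_one_right (by positivity) H.norm_groundState_le)

lemma half_norm_groundMass_le (H : IsFrequency h γ Ω c M) {Q : ℂ}
    (hre : 0 < (mehlerCoeff h γ Ω Q).re) (hQ : 4 * M ^ 2 * ‖Q‖ ≤ 1) :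
    ‖groundMass Ω‖ / 2 ≤ ‖∫ y, Complex.exp (mehlerExponent h γ Ω Q 0 y) * H.groundState y‖ := by
  have hM := H.eight_le
  have hsub := H.norm_integral_mehler_zero_sub_le hre (le_trans (by gcongr ?_ * _; nlinarith) hQ)
  have htri := norm_sub_norm_le (groundMass Ω)
    (∫ y, Complex.exp (mehlerExponent h γ Ω Q 0 y) * H.groundState y)
  rw [norm_sub_rev] at htri
  nlinarith [norm_nonneg (groundMass Ω)]

variable [NeZero h]

lemma freeTransfer_pow_groundState (H : IsFrequency h γ Ω c M) (m : ℕ) :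
    (H.freeTransfer ^ m) H.groundState = topEigenvalue h γ Ω ^ m • H.groundState := by
  induction m with
  | zero => simp
  | succ m ih =>
    rw [pow_succ', mul_apply_eq_comp, ih, map_smul, H.freeTransfer_groundState, smul_smul, pow_succ]

lemma groundFunctional_freeTransfer_pow (H : IsFrequency h γ Ω c M) (m : ℕ) (f : ℝ →ᵇ ℂ) :
    H.groundFunctional ((H.freeTransfer ^ m) f) =
      topEigenvalue h γ Ω ^ m * H.groundFunctional f := by
  induction m with
  | zero => simp
  | succ m ih =>
    rw [pow_succ', mul_apply_eq_comp, H.groundFunctional_freeTransfer, ih, pow_succ', mul_assoc]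

/-- Normalizing Mehler's formula by its value on the ground state at the origin removes the
unknown prefactor. -/
lemma norm_freeTransfer_pow_sub_le (H : IsFrequency h γ Ω c M) {m : ℕ} (hm : m ≠ 0)
    (hQ : 4 * M ^ 2 * ‖eigenRatio h γ Ω ^ m‖ ≤ 1) (f : ℝ →ᵇ ℂ) (x : ℝ) :
    ‖(topEigenvalue h γ Ω)⁻¹ ^ m * (H.freeTransfer ^ m) f x -
      H.groundFunctional f * H.groundState x‖ ≤ 8 * M ^ 3 * ‖eigenRatio h γ Ω ^ m‖ * ‖f‖ := by
  have hM := H.eight_le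
  obtain ⟨k, rfl⟩ := Nat.exists_eq_succ_of_ne_zero hm
  rw [Nat.succ_eq_add_one] at hQ ⊢
  obtain ⟨D, hD⟩ := H.exists_freeTransfer_pow_succ_eq k
  have hre := H.re_mehlerCoeff_pos k
  set Q := eigenRatio h γ Ω ^ (k + 1)
  have hQ' : 2 * M * ‖Q‖ ≤ 1 := le_trans (by gcongr ?_ * _; nlinarith) hQ
  set s := groundMass Ω
  have hs : 0 < ‖s‖ := norm_pos_iff.2 H.groundMass_ne_zero
  set N : (ℝ →ᵇ ℂ) → ℝ → ℂ := fun f x ↦ ∫ y, Complex.exp (mehlerExponent h γ Ω Q x y) * f y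
  have hn₀ : ‖N H.groundState 0 - s‖ ≤ 2 * M ^ 2 * ‖Q‖ * ‖s‖ :=
    H.norm_integral_mehler_zero_sub_le hre hQ'
  have hn₀_ge : ‖s‖ / 2 ≤ ‖N H.groundState 0‖ := H.half_norm_groundMass_le hre hQ
  have hn₀_ne : N H.groundState 0 ≠ 0 := norm_pos_iff.1 (by linarith)
  have hD₀ : topEigenvalue h γ Ω ^ (k + 1) = D * N H.groundState 0 := by
    rw [← hD, H.freeTransfer_pow_groundState, BoundedContinuousFunction.smul_apply,
      H.groundState_zero, smul_eq_mul, mul_one]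
  have hD_ne : D ≠ 0 := left_ne_zero_of_mul (hD₀ ▸ pow_ne_zero _ H.topEigenvalue_ne_zero)
  have hdiff : (topEigenvalue h γ Ω)⁻¹ ^ (k + 1) * (H.freeTransfer ^ (k + 1)) f x -
      H.groundFunctional f * H.groundState x =
      (N f x - H.groundState x * (s * H.groundFunctional f) -
        H.groundFunctional f * H.groundState x * (N H.groundState 0 - s)) / N H.groundState 0 := by
    rw [hD, inv_pow, hD₀]
    field_simp
    ring
  have hαe : ‖H.groundFunctional f * H.groundState x‖ ≤ M * ‖f‖ * 1 := by
    rw [norm_mul]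
    gcongr
    · exact H.norm_groundFunctional_apply_le f
    · exact (H.groundState.norm_coe_le_norm x).trans H.norm_groundState_le
  rw [hdiff, norm_div, div_le_iff₀ (by linarith)]
  calc _ ≤ 2 * M ^ 2 * ‖Q‖ * ‖s‖ * ‖f‖ + M * ‖f‖ * 1 * (2 * M ^ 2 * ‖Q‖ * ‖s‖) := by
        refine (norm_sub_le _ _).trans (add_le_add (H.norm_integral_mehler_sub_le hre hQ' f x) ?_)
        rw [norm_mul]
        gcongr
    _ = 2 * M ^ 2 * ‖Q‖ * ‖f‖ * ‖s‖ * (1 + M) := by ring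
    _ ≤ 2 * M ^ 2 * ‖Q‖ * ‖f‖ * ‖s‖ * (2 * M) := by gcongr; linarith
    _ = 8 * M ^ 3 * ‖Q‖ * ‖f‖ * (‖s‖ / 2) := by ring
    _ ≤ _ := by gcongr

theorem hasSpectralGap (H : IsFrequency h γ Ω c M) {m : ℕ}
    (hQ : 32 * M ^ 3 * ‖eigenRatio h γ Ω ^ m‖ ≤ 1) :
    HasSpectralGap ((topEigenvalue h γ Ω)⁻¹ ^ m • H.freeTransfer ^ m) H.groundState
      H.groundFunctional M := by
  have hM := H.eight_le
  have hlam : (topEigenvalue h γ Ω)⁻¹ ^ m * topEigenvalue h γ Ω ^ m = 1 := by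
    rw [← mul_pow, inv_mul_cancel₀ H.topEigenvalue_ne_zero, one_pow]
  refine ⟨by linarith, H.norm_groundState_le.trans (by linarith), H.norm_groundFunctional_le, ?_,
    fun f ↦ ?_, H.groundFunctional_groundState, fun f ↦ ?_⟩
  · rw [smul_apply, H.freeTransfer_pow_groundState, smul_smul, hlam, one_smul]
  · rw [smul_apply, map_smul, H.groundFunctional_freeTransfer_pow, smul_eq_mul,
      ← mul_assoc, hlam, one_mul]
  · have hm : m ≠ 0 := by
      rintro rfl
      rw [pow_zero, norm_one] at hQ
      nlinarith [pow_le_pow_left₀ (by norm_num) hM 3]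
    refine (BoundedContinuousFunction.norm_le (by positivity)).2 fun x ↦ ?_
    calc _ ≤ 8 * M ^ 3 * ‖eigenRatio h γ Ω ^ m‖ * ‖f‖ :=
          H.norm_freeTransfer_pow_sub_le hm (le_trans (by gcongr ?_ * _; nlinarith) hQ) f x
      _ ≤ 1 / 4 * ‖f‖ := by
          gcongr
          linarith

end IsFrequency

end Gap

section GaussianDecay

lemma exp_mul_exp_succ (a h : ℝ) (j : ℕ) :
    Real.exp (a * (j * h)) * Real.exp (a * h) = Real.exp (a * ((j + 1 : ℕ) * h)) := by
  rw [← Real.exp_add]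
  push_cast
  ring_nf

variable {h : ℝ≥0} {s p : ℝ}

lemma inv_sqrt_one_add_le {b : ℝ} (hsh : 4 * s * h ≤ 1) (hs : 0 ≤ s) (hb : -s ≤ b) :
    (√(1 + 2 * h * b))⁻¹ ≤ Real.exp (2 * s * h) := by
  have hh := h.coe_nonneg
  have hhb : -(s * h) ≤ h * b := by linarith [mul_le_mul_of_nonneg_left hb hh]
  have hsh₀ : 0 ≤ s * h := by positivity
  have hsqrt : Real.exp (-(2 * s * h)) ≤ √(1 + 2 * h * b) := by
    refine Real.le_sqrt_of_sq_le ?_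
    calc Real.exp (-(2 * s * h)) ^ 2 = (Real.exp (4 * s * h))⁻¹ := by
          rw [← Real.exp_nat_mul, ← Real.exp_neg]
          ring_nf
      _ ≤ (4 * s * h + 1)⁻¹ := inv_anti₀ (by linarith) (Real.add_one_le_exp _)
      _ ≤ 1 - 2 * (s * h) := by
        rw [inv_le_iff_one_le_mul₀ (by linarith)]
        nlinarith
      _ ≤ 1 + 2 * h * b := by linarith
  rw [← inv_inv (Real.exp _), ← Real.exp_neg]
  exact inv_anti₀ (Real.exp_pos _) hsqrt

lemma min_le_div_one_add {a : ℝ} (hsp : 16 * s ^ 2 ≤ p) (hsh : 4 * s * h ≤ 1) (ha : -s ≤ a) :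
    min (a + p * h / 2) s ≤ (a + p * h) / (1 + 2 * h * (a + p * h)) := by
  have hh := h.coe_nonneg
  have hp : 0 ≤ p * h := mul_nonneg ((by positivity : 0 ≤ 16 * s ^ 2).trans hsp) hh
  have hph : 16 * s ^ 2 * h ≤ p * h := by gcongr
  set b := a + p * h
  have hhb : -(s * h) ≤ h * b := by nlinarith
  have hden : 1 / 2 ≤ 1 + 2 * h * b := by linarith
  rw [le_div_iff₀ (by linarith)]
  rcases le_total b (2 * s) with hbs | hbs
  · refine (mul_le_mul_of_nonneg_right (min_le_left _ _) (by linarith)).trans ?_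
    rcases le_total b 0 with hb₀ | hb₀
    · have hbsq : b ^ 2 ≤ s ^ 2 := by nlinarith
      have := mul_le_mul_of_nonneg_left hbsq hh
      have := mul_le_mul_of_nonneg_left hden hp
      nlinarith
    · have hbsq : b ^ 2 ≤ (2 * s) ^ 2 := by gcongr
      have := mul_le_mul_of_nonneg_left hbsq hh
      have := mul_nonneg hp (mul_nonneg hh hb₀)
      nlinarith
  · refine (mul_le_mul_of_nonneg_right (min_le_right _ _) (by linarith)).trans ?_
    nlinarith

variable [NeZero h] {w : ℝ → ℂ}

lemma norm_transfer_apply_le_exp (hsp : 16 * s ^ 2 ≤ p) (hsh : 4 * s * h ≤ 1) (hs : 0 ≤ s)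
    (hw : IsWeight w) {f : ℝ →ᵇ ℂ} {C a : ℝ} (ha : -s ≤ a)
    (hf : ∀ y, ‖w y * f y‖ ≤ C * Real.exp (-(a + p * h) * y ^ 2)) (x : ℝ) :
    ‖transfer h hw f x‖ ≤
      C * Real.exp (2 * s * h) * Real.exp (-min (a + p * h / 2) s * x ^ 2) := by
  have hC : 0 ≤ C := by simpa using (norm_nonneg _).trans (hf 0)
  have hp : 0 ≤ p * h := mul_nonneg ((by positivity : 0 ≤ 16 * s ^ 2).trans hsp) h.coe_nonneg
  have hb : -s ≤ a + p * h := by linarith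
  have hpos : 0 < 1 + 2 * h * (a + p * h) := by nlinarith [h.coe_nonneg]
  have hgauss := integral_gaussianPDFReal_mul_exp_sq hpos x
  have hint : Integrable fun y ↦ gaussianPDFReal x h y * Real.exp (-(a + p * h) * y ^ 2) :=
    .of_integral_ne_zero (by rw [hgauss]; positivity)
  have hbound (y : ℝ) : ‖(gaussianPDFReal x h y : ℂ) * (w y * f y)‖ ≤
      C * (gaussianPDFReal x h y * Real.exp (-(a + p * h) * y ^ 2)) := by
    have hN := ProbabilityTheory.gaussianPDFReal_nonneg x h y
    rw [norm_mul, Complex.norm_of_nonneg hN, mul_left_comm]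
    exact mul_le_mul_of_nonneg_left (hf y) hN
  calc ‖transfer h hw f x‖ ≤ ∫ y, C * (gaussianPDFReal x h y * Real.exp (-(a + p * h) * y ^ 2)) :=
        norm_integral_le_of_norm_le (hint.const_mul C) (.of_forall hbound)
    _ = C * (√(1 + 2 * h * (a + p * h)))⁻¹ *
        Real.exp (-((a + p * h) / (1 + 2 * h * (a + p * h))) * x ^ 2) := by
        rw [integral_const_mul, hgauss]
        ring
    _ ≤ C * Real.exp (2 * s * h) * Real.exp (-min (a + p * h / 2) s * x ^ 2) := by
        gcongr
        · exact inv_sqrt_one_add_le hsh hs hb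
        · exact min_le_div_one_add hsp hsh ha

lemma norm_transfer_pow_apply_le_exp (hsp : 16 * s ^ 2 ≤ p) (hsh : 4 * s * h ≤ 1) (hs : 0 ≤ s)
    (hw : IsWeight w) (hwp : ∀ y, ‖w y‖ ≤ Real.exp (-(p * h) * y ^ 2)) {f : ℝ →ᵇ ℂ} {C a : ℝ}
    (ha : -s ≤ a) (hf : ∀ y, ‖f y‖ ≤ C * Real.exp (-a * y ^ 2)) (j : ℕ) (x : ℝ) :
    ‖(transfer h hw ^ j) f x‖ ≤
      C * Real.exp (2 * s * (j * h)) * Real.exp (-min (a + j * (p * h / 2)) s * x ^ 2) := by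
  have hC : 0 ≤ C := by simpa using (norm_nonneg _).trans (hf 0)
  have hp : 0 ≤ p * h := mul_nonneg ((by positivity : 0 ≤ 16 * s ^ 2).trans hsp) h.coe_nonneg
  induction j generalizing x with
  | zero =>
    refine (hf x).trans ?_
    simp only [CharP.cast_eq_zero, zero_mul, mul_zero, Real.exp_zero, mul_one, add_zero]
    gcongr
    exact min_le_left _ _
  | succ j ih =>
    have hj : 0 ≤ j * (p * h / 2) := by positivity
    have hrate : -s ≤ min (a + j * (p * h / 2)) s := le_min (by linarith) (by linarith)
    have hwf (y : ℝ) : ‖w y * (transfer h hw ^ j) f y‖ ≤ C * Real.exp (2 * s * (j * h)) *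
        Real.exp (-(min (a + j * (p * h / 2)) s + p * h) * y ^ 2) := by
      rw [norm_mul, neg_add_rev, add_mul, Real.exp_add, mul_left_comm]
      exact mul_le_mul (hwp y) (ih y) (norm_nonneg _) (Real.exp_pos _).le
    rw [pow_succ', mul_apply_eq_comp]
    refine (norm_transfer_apply_le_exp hsp hsh hs hw hrate hwf x).trans ?_
    have hmin : min (a + (j + 1 : ℕ) * (p * h / 2)) s ≤
        min (min (a + j * (p * h / 2)) s + p * h / 2) s := by
      push_cast
      refine le_min ?_ (min_le_right _ _)
      rw [← min_add_add_right]
      exact min_le_min (by linarith) (by linarith)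
    rw [mul_assoc C, exp_mul_exp_succ]
    gcongr

variable {w' : ℝ → ℂ} {η : ℝ}

lemma norm_transfer_sub_apply_le_exp (hsp : 16 * s ^ 2 ≤ p) (hsh : 4 * s * h ≤ 1) (hs : 0 ≤ s)
    (hw : IsWeight w) (hw' : IsWeight w') (hwp : ∀ y, ‖w y‖ ≤ Real.exp (-(p * h) * y ^ 2))
    (hη : ∀ y, ‖w' y - w y‖ ≤ η * Real.exp (s / 2 * y ^ 2) * Real.exp (-(p * h) * y ^ 2))
    {f f' : ℝ →ᵇ ℂ} {C D r : ℝ} (hr : -s ≤ r)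
    (hf' : ∀ y, ‖f' y‖ ≤ C * Real.exp (-(r + s / 2) * y ^ 2))
    (hf : ∀ y, ‖f' y - f y‖ ≤ D * Real.exp (-r * y ^ 2)) (x : ℝ) :
    ‖transfer h hw' f' x - transfer h hw f x‖ ≤
      (η * C + D) * Real.exp (2 * s * h) * Real.exp (-min (r + p * h / 2) s * x ^ 2) := by
  have hη₀ : 0 ≤ η := by simpa using (norm_nonneg _).trans (hη 0)
  have hsplit : transfer h hw' f' x - transfer h hw f x =
      transfer h (hw'.sub hw) f' x + transfer h hw (f' - f) x := by
    rw [transfer_sub h hw' hw, map_sub]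
    simp only [sub_apply, BoundedContinuousFunction.sub_apply]
    ring
  have hweight (y : ℝ) : ‖(w' - w) y * f' y‖ ≤ η * C * Real.exp (-(r + p * h) * y ^ 2) := by
    calc ‖(w' - w) y * f' y‖ ≤ _ := (norm_mul_le _ _).trans
          (mul_le_mul (hη y) (hf' y) (norm_nonneg _) (by positivity))
      _ = η * C * (Real.exp (s / 2 * y ^ 2) * Real.exp (-(p * h) * y ^ 2) *
          Real.exp (-(r + s / 2) * y ^ 2)) := by ring
      _ = η * C * Real.exp (-(r + p * h) * y ^ 2) := by
        rw [← Real.exp_add, ← Real.exp_add]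
        ring_nf
  have hfun (y : ℝ) : ‖w y * (f' - f) y‖ ≤ D * Real.exp (-(r + p * h) * y ^ 2) := by
    rw [norm_mul, neg_add_rev, add_mul, Real.exp_add, mul_left_comm]
    exact mul_le_mul (hwp y) (hf y) (norm_nonneg _) (Real.exp_pos _).le
  rw [hsplit]
  refine (norm_add_le_of_le (norm_transfer_apply_le_exp hsp hsh hs (hw'.sub hw) hr hweight x)
    (norm_transfer_apply_le_exp hsp hsh hs hw hr hfun x)).trans_eq ?_
  ring

lemma norm_transfer_pow_sub_apply_le_exp (hsp : 16 * s ^ 2 ≤ p) (hsh : 4 * s * h ≤ 1) (hs : 0 ≤ s)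
    (hw : IsWeight w) (hw' : IsWeight w') (hwp : ∀ y, ‖w y‖ ≤ Real.exp (-(p * h) * y ^ 2))
    (hwp' : ∀ y, ‖w' y‖ ≤ Real.exp (-(p * h) * y ^ 2))
    (hη : ∀ y, ‖w' y - w y‖ ≤ η * Real.exp (s / 2 * y ^ 2) * Real.exp (-(p * h) * y ^ 2))
    {f : ℝ →ᵇ ℂ} {C a : ℝ} (ha : 0 ≤ a) (hf : ∀ y, ‖f y‖ ≤ C * Real.exp (-a * y ^ 2))
    (l : ℕ) (x : ℝ) :
    ‖(transfer h hw' ^ l) f x - (transfer h hw ^ l) f x‖ ≤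
      l * (η * C * Real.exp (2 * s * (l * h))) *
        Real.exp (-(min (a + l * (p * h / 2)) s - s / 2) * x ^ 2) := by
  have hC : 0 ≤ C := by simpa using (norm_nonneg _).trans (hf 0)
  have hη₀ : 0 ≤ η := by simpa using (norm_nonneg _).trans (hη 0)
  have hp : 0 ≤ p * h := mul_nonneg ((by positivity : 0 ≤ 16 * s ^ 2).trans hsp) h.coe_nonneg
  induction l generalizing x with
  | zero => simp only [pow_zero, sub_self, norm_zero, CharP.cast_eq_zero, zero_mul, le_refl]
  | succ l ih =>
    have hl : 0 ≤ l * (p * h / 2) := by positivity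
    have hrate : -s ≤ min (a + l * (p * h / 2)) s - s / 2 :=
      le_sub_iff_add_le.2 (le_min (by linarith) (by linarith))
    have hpow (y : ℝ) := norm_transfer_pow_apply_le_exp hsp hsh hs hw' hwp' (by linarith) hf l y
    have hmin : min (a + (l + 1 : ℕ) * (p * h / 2)) s - s / 2 ≤
        min (min (a + l * (p * h / 2)) s - s / 2 + p * h / 2) s := by
      push_cast
      refine le_min ?_ (by linarith [min_le_right (a + (l + 1) * (p * h / 2)) s])
      rw [sub_add_eq_add_sub, ← min_add_add_right]
      exact sub_le_sub_right (min_le_min (by linarith) (by linarith)) _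
    rw [pow_succ', pow_succ', mul_apply_eq_comp, mul_apply_eq_comp]
    refine (norm_transfer_sub_apply_le_exp hsp hsh hs hw hw' hwp hη hrate
      (by simpa only [sub_add_cancel] using hpow) ih x).trans ?_
    calc _ = (l + 1 : ℕ) * (η * C * (Real.exp (2 * s * (l * h)) * Real.exp (2 * s * h))) *
          Real.exp (-min (min (a + l * (p * h / 2)) s - s / 2 + p * h / 2) s * x ^ 2) := by
          push_cast
          ring
      _ ≤ _ := by
        rw [exp_mul_exp_succ]
        gcongr

end GaussianDecay

section Perturbation

/-- `w` is a perturbation of size `ε` of the Gaussian weight, and its even part is a perturbation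
of size `ε²`. -/
structure IsSmallPerturbation (h : ℝ≥0) (γ : ℂ) (c ε : ℝ) (w : ℝ → ℂ) : Prop where
  measurable : Measurable w
  nonneg : 0 ≤ ε
  norm_le : ∀ y, ‖w y‖ ≤ Real.exp (-(γ.re / 2 * h) * y ^ 2)
  norm_sub_le : ∀ y, ‖w y - gaussWeight h γ y‖ ≤
    ε * h * Real.exp (c * y ^ 2) * Real.exp (-(γ.re / 2 * h) * y ^ 2)
  norm_even_le : ∀ y, ‖(w y - gaussWeight h γ y) + (w (-y) - gaussWeight h γ (-y))‖ ≤
    ε ^ 2 * h * Real.exp (c * y ^ 2)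

/-- A bound for the relative effect over the time `t` of a perturbation of unit size. -/
noncomputable def duhamelBound (M c t : ℝ) : ℝ := t * Real.exp ((M + 4) * c * t)

variable {h : ℝ≥0} {γ Ω : ℂ} {c M ε : ℝ} {w : ℝ → ℂ}

lemma IsSmallPerturbation.norm_le_one (P : IsSmallPerturbation h γ c ε w) (hγ : 0 < γ.re) (y : ℝ) :
    ‖w y‖ ≤ 1 :=
  (P.norm_le y).trans <| by
    rw [Real.exp_le_one_iff, neg_mul]
    exact neg_nonpos.2 (by positivity)

lemma IsSmallPerturbation.isWeight (P : IsSmallPerturbation h γ c ε w) (hγ : 0 < γ.re) :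
    IsWeight w :=
  .of_norm_le_one P.measurable (P.norm_le_one hγ)

namespace IsFrequency

lemma norm_gaussWeight_le (H : IsFrequency h γ Ω c M) (y : ℝ) :
    ‖gaussWeight h γ y‖ ≤ Real.exp (-(γ.re / 2 * h) * y ^ 2) := by
  rw [norm_gaussWeight, Real.exp_le_exp]
  refine mul_le_mul_of_nonneg_right ?_ (sq_nonneg y)
  linarith [mul_nonneg h.coe_nonneg H.re_pos.le]

variable [NeZero h]

/-- The transfer operator of the perturbed chain. -/
noncomputable def perturbedTransfer (H : IsFrequency h γ Ω c M)
    (P : IsSmallPerturbation h γ c ε w) : (ℝ →ᵇ ℂ) →L[ℂ] (ℝ →ᵇ ℂ) :=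
  transfer h (P.isWeight H.re_pos)

lemma norm_perturbedTransfer_pow_sub_apply_le (H : IsFrequency h γ Ω c M)
    (P : IsSmallPerturbation h γ c ε w) {f : ℝ →ᵇ ℂ} {C a : ℝ} (ha : 0 ≤ a)
    (hf : ∀ y, ‖f y‖ ≤ C * Real.exp (-a * y ^ 2)) {l : ℕ} (hl : 2 * c ≤ a + l * (γ.re / 2 * h / 2))
    (x : ℝ) :
    ‖(topEigenvalue h γ Ω)⁻¹ ^ l * ((H.perturbedTransfer P ^ l) f x - (H.freeTransfer ^ l) f x)‖ ≤
      duhamelBound M c (l * h) * ε * C * Real.exp (-c * x ^ 2) := by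
  have hc := H.pos
  have hstep := H.mul_step_le
  have hη (y : ℝ) : ‖w y - gaussWeight h γ y‖ ≤
      ε * h * Real.exp (2 * c / 2 * y ^ 2) * Real.exp (-(γ.re / 2 * h) * y ^ 2) := by
    rw [mul_div_cancel_left₀ c two_ne_zero]
    exact P.norm_sub_le y
  have hdiff := norm_transfer_pow_sub_apply_le_exp (s := 2 * c) (p := γ.re / 2)
    (by linarith [H.mul_sq_le_re]) (by linarith) (by linarith) H.isWeight (P.isWeight H.re_pos)
    H.norm_gaussWeight_le P.norm_le hη ha hf l x
  rw [min_eq_right hl] at hdiff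
  calc _ ≤ Real.exp (M * c * (l * h)) * (l * (ε * h * C * Real.exp (2 * (2 * c) * (l * h))) *
        Real.exp (-(2 * c - 2 * c / 2) * x ^ 2)) := by
        rw [norm_mul]
        exact mul_le_mul (H.norm_topEigenvalue_inv_pow_le l) hdiff (norm_nonneg _)
          (Real.exp_pos _).le
    _ = l * h * (Real.exp (M * c * (l * h)) * Real.exp (2 * (2 * c) * (l * h))) * ε * C *
        Real.exp (-c * x ^ 2) := by ring_nf
    _ = _ := by
        rw [duhamelBound, ← Real.exp_add]
        ring_nf

lemma groundFunctional_transfer (H : IsFrequency h γ Ω c M) (hw : IsWeight w) (f : ℝ →ᵇ ℂ) :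
    H.groundFunctional (transfer h hw f) =
      topEigenvalue h γ Ω * (groundMass Ω)⁻¹ * ∫ y, H.groundState y * (w y * f y) := by
  rw [groundFunctional, pairing_transfer, ← integral_const_mul]
  refine integral_congr_ae (.of_forall fun y ↦ ?_)
  have hgauss : gaussWeight h γ y ≠ 0 := Complex.exp_ne_zero _
  have hdensity : groundDensity h γ Ω y =
      (groundMass Ω)⁻¹ * (gaussWeight h γ y * H.groundState y) := by
    rw [groundDensity, groundState_apply, gaussWeight_mul_cexp]
    ring_nf
  have hint : ∫ x, groundDensity h γ Ω x * gaussianPDFReal y h x =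
      topEigenvalue h γ Ω * (groundMass Ω)⁻¹ * H.groundState y := by
    refine mul_right_cancel₀ hgauss ?_
    rw [H.integral_groundDensity_mul_gaussianPDFReal, hdensity]
    ring
  simp only [hint, mul_assoc]

end IsFrequency

end Perturbation

section SecondOrder

lemma integral_eq_integral_add_comp_neg {g : ℝ → ℂ} (hg : Integrable g) :
    ∫ y, g y = 2⁻¹ * ∫ y, (g y + g (-y)) := by
  rw [integral_add hg hg.comp_neg, integral_neg_eq_self]
  ring

lemma duhamelBound_nonneg {M c t : ℝ} (ht : 0 ≤ t) : 0 ≤ duhamelBound M c t :=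
  mul_nonneg ht (Real.exp_pos _).le

lemma duhamelBound_mono {M c t t' : ℝ} (hM : 0 ≤ M) (hc : 0 ≤ c) (ht : 0 ≤ t) (htt' : t ≤ t') :
    duhamelBound M c t ≤ duhamelBound M c t' := by
  unfold duhamelBound
  gcongr
  exact ht.trans htt'

variable {h : ℝ≥0} {γ Ω : ℂ} {c M ε : ℝ} {w : ℝ → ℂ}

namespace IsFrequency

lemma norm_groundState_mul_sub_le (H : IsFrequency h γ Ω c M) (P : IsSmallPerturbation h γ c ε w)
    (y : ℝ) : ‖H.groundState y * (w y - gaussWeight h γ y)‖ ≤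
      ε * h * Real.exp (-(3 * c) * y ^ 2) := by
  have := H.pos
  have hε := P.nonneg
  have hone : Real.exp (-(γ.re / 2 * h) * y ^ 2) ≤ 1 := by
    have := H.re_pos
    rw [Real.exp_le_one_iff, neg_mul]
    exact neg_nonpos.2 (by positivity)
  rw [norm_mul]
  calc _ ≤ Real.exp (-(4 * c) * y ^ 2) * (ε * h * Real.exp (c * y ^ 2) * 1) := by
        gcongr
        · exact H.norm_groundState_apply_le y
        · exact (P.norm_sub_le y).trans (by gcongr)
    _ = ε * h * Real.exp (-(3 * c) * y ^ 2) := by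
        rw [mul_one, mul_left_comm, ← Real.exp_add]
        ring_nf

lemma integrable_groundState_mul (H : IsFrequency h γ Ω c M) (hw : IsWeight w) (f : ℝ →ᵇ ℂ) :
    Integrable fun y ↦ H.groundState y * (w y * f y) := by
  have hc := H.pos
  refine (hw.mul_bounded f).integrable_mul (integrable_cexp_neg_mul_sq ?_)
  rw [re_div_two]
  linarith [H.gap]

lemma norm_integral_groundState_sq_mul_sub_le (H : IsFrequency h γ Ω c M)
    (P : IsSmallPerturbation h γ c ε w) :
    ‖∫ y, H.groundState y * ((w y - gaussWeight h γ y) * H.groundState y)‖ ≤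
      ε ^ 2 * h * (M * ‖groundMass Ω‖) := by
  have hc := H.pos
  set g : ℝ → ℂ := fun y ↦ H.groundState y * ((w y - gaussWeight h γ y) * H.groundState y) with hg
  have hint : Integrable g :=
    H.integrable_groundState_mul ((P.isWeight H.re_pos).sub H.isWeight) H.groundState
  have heven (y : ℝ) : ‖g y + g (-y)‖ ≤ ε ^ 2 * h * Real.exp (-(2 * c) * y ^ 2) := by
    have hneg : H.groundState (-y) = H.groundState y := by
      rw [groundState_apply, groundState_apply, Complex.ofReal_neg, neg_sq]
    have hsum : g y + g (-y) = H.groundState y * H.groundState y *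
        ((w y - gaussWeight h γ y) + (w (-y) - gaussWeight h γ (-y))) := by
      simp only [hg, hneg]
      ring
    rw [hsum, norm_mul, norm_mul]
    calc _ ≤ Real.exp (-(4 * c) * y ^ 2) * Real.exp (-(4 * c) * y ^ 2) *
          (ε ^ 2 * h * Real.exp (c * y ^ 2)) := by
          gcongr
          · exact H.norm_groundState_apply_le y
          · exact H.norm_groundState_apply_le y
          · exact P.norm_even_le y
      _ = ε ^ 2 * h * Real.exp (-(7 * c) * y ^ 2) := by
          rw [mul_left_comm, ← Real.exp_add, ← Real.exp_add]
          ring_nf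
      _ ≤ ε ^ 2 * h * Real.exp (-(2 * c) * y ^ 2) := by
          gcongr
          linarith
  rw [integral_eq_integral_add_comp_neg hint, norm_mul, norm_inv, Complex.norm_ofNat]
  linarith [H.norm_integral_le_of_norm_le_exp heven, norm_nonneg (∫ y, (g y + g (-y)))]

variable [NeZero h]

lemma norm_smul_perturbedTransfer_pow_groundState_sub_le (H : IsFrequency h γ Ω c M)
    (P : IsSmallPerturbation h γ c ε w) (j : ℕ) (y : ℝ) :
    ‖((topEigenvalue h γ Ω)⁻¹ ^ j • (H.perturbedTransfer P ^ j) H.groundState - H.groundState) y‖ ≤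
      duhamelBound M c (j * h) * ε * Real.exp (-c * y ^ 2) := by
  have hc := H.pos
  have hγ := H.re_pos
  have hj : 0 ≤ j * (γ.re / 2 * h / 2) := by positivity
  have hfree : H.groundState =
      (topEigenvalue h γ Ω)⁻¹ ^ j • (H.freeTransfer ^ j) H.groundState := by
    rw [H.freeTransfer_pow_groundState, smul_smul, ← mul_pow,
      inv_mul_cancel₀ H.topEigenvalue_ne_zero, one_pow, one_smul]
  have hdecay (y : ℝ) : ‖H.groundState y‖ ≤ 1 * Real.exp (-(4 * c) * y ^ 2) := by
    rw [one_mul]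
    exact H.norm_groundState_apply_le y
  nth_rw 2 [hfree]
  rw [← smul_sub, ← mul_one (duhamelBound M c (j * h) * ε)]
  exact H.norm_perturbedTransfer_pow_sub_apply_le P (by positivity) hdecay (by linarith) y

lemma groundFunctional_perturbedTransfer_sub_add (H : IsFrequency h γ Ω c M)
    (P : IsSmallPerturbation h γ c ε w) (f g : ℝ →ᵇ ℂ) :
    H.groundFunctional ((H.perturbedTransfer P - H.freeTransfer) (f + g)) =
      topEigenvalue h γ Ω * (groundMass Ω)⁻¹ *
        ((∫ y, H.groundState y * ((w y - gaussWeight h γ y) * f y)) +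
          ∫ y, H.groundState y * ((w y - gaussWeight h γ y) * g y)) := by
  have hw : IsWeight fun y ↦ w y - gaussWeight h γ y := (P.isWeight H.re_pos).sub H.isWeight
  have htransfer : H.perturbedTransfer P - H.freeTransfer = transfer h hw :=
    (transfer_sub h (P.isWeight H.re_pos) H.isWeight).symm
  rw [htransfer, H.groundFunctional_transfer, ← integral_add (H.integrable_groundState_mul hw f)
    (H.integrable_groundState_mul hw g)]
  simp only [BoundedContinuousFunction.add_apply, mul_add]

/-- By parity, the first-order effect of the perturbation on the eigenvalue involves only the even
part of the weight. -/
lemma norm_groundFunctional_step_le (H : IsFrequency h γ Ω c M) (P : IsSmallPerturbation h γ c ε w)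
    (j : ℕ) :
    ‖(topEigenvalue h γ Ω)⁻¹ ^ (j + 1) * H.groundFunctional
      ((H.perturbedTransfer P - H.freeTransfer) ((H.perturbedTransfer P ^ j) H.groundState))‖ ≤
      M * (1 + duhamelBound M c (j * h)) * ε ^ 2 * h := by
  have hε := P.nonneg
  set g := (H.perturbedTransfer P ^ j) H.groundState
  set d := (topEigenvalue h γ Ω)⁻¹ ^ j • g - H.groundState with hd
  have hg : (topEigenvalue h γ Ω)⁻¹ ^ j • g = H.groundState + d := by rw [hd]; abel
  have hdrift (y : ℝ) : ‖H.groundState y * ((w y - gaussWeight h γ y) * d y)‖ ≤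
      duhamelBound M c (j * h) * ε ^ 2 * h * Real.exp (-(2 * c) * y ^ 2) := by
    have hc := H.pos
    rw [← mul_assoc, norm_mul]
    calc _ ≤ ε * h * Real.exp (-(3 * c) * y ^ 2) *
          (duhamelBound M c (j * h) * ε * Real.exp (-c * y ^ 2)) := by
          gcongr
          · exact H.norm_groundState_mul_sub_le P y
          · exact H.norm_smul_perturbedTransfer_pow_groundState_sub_le P j y
      _ = duhamelBound M c (j * h) * ε ^ 2 * h * Real.exp (-(4 * c) * y ^ 2) := by
          rw [mul_mul_mul_comm, ← Real.exp_add]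
          ring_nf
      _ ≤ _ := by
          have hB : 0 ≤ duhamelBound M c (j * h) := duhamelBound_nonneg (by positivity)
          gcongr
          linarith
  have hscale : (topEigenvalue h γ Ω)⁻¹ ^ (j + 1) * H.groundFunctional
      ((H.perturbedTransfer P - H.freeTransfer) g) = (topEigenvalue h γ Ω)⁻¹ * H.groundFunctional
        ((H.perturbedTransfer P - H.freeTransfer) (H.groundState + d)) := by
    rw [← hg, map_smul, map_smul, smul_eq_mul, pow_succ', mul_assoc]
  have hmass : 0 < ‖groundMass Ω‖ := norm_pos_iff.2 H.groundMass_ne_zero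
  rw [hscale, H.groundFunctional_perturbedTransfer_sub_add P, mul_assoc (topEigenvalue h γ Ω),
    inv_mul_cancel_left₀ H.topEigenvalue_ne_zero, norm_mul, norm_inv, inv_mul_le_iff₀ hmass]
  calc _ ≤ _ := norm_add_le_of_le (H.norm_integral_groundState_sq_mul_sub_le P)
        (H.norm_integral_le_of_norm_le_exp hdrift)
    _ = _ := by ring

end IsFrequency

end SecondOrder

section Block

/-- A time over which the free chain forgets its initial condition. -/
noncomputable def blockTime (c M : ℝ) : ℝ := 4 * M ^ 3 / c + 1

/-- The constant in the bounds for the effect of a perturbation over one block. -/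
noncomputable def blockConst (c M : ℝ) : ℝ :=
  M * (blockTime c M + 1) * (1 + duhamelBound M c (blockTime c M + 1))

variable {h : ℝ≥0} {γ Ω : ℂ} {c M ε : ℝ} {w : ℝ → ℂ}

namespace IsFrequency

lemma one_le_blockTime (H : IsFrequency h γ Ω c M) : 1 ≤ blockTime c M := by
  have hc := H.pos
  have hM := H.eight_le
  exact le_add_of_nonneg_left (by positivity)

lemma add_one_le_blockConst (H : IsFrequency h γ Ω c M) :
    1 + duhamelBound M c (blockTime c M + 1) ≤ blockConst c M := by
  have hM := H.eight_le
  have hT := H.one_le_blockTime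
  have hB : 0 ≤ duhamelBound M c (blockTime c M + 1) := duhamelBound_nonneg (by linarith)
  exact le_mul_of_one_le_left (by linarith) (one_le_mul_of_one_le_of_one_le (by linarith)
    (by linarith))

lemma one_le_blockConst (H : IsFrequency h γ Ω c M) : 1 ≤ blockConst c M := by
  have hT := H.one_le_blockTime
  have hB : 0 ≤ duhamelBound M c (blockTime c M + 1) := duhamelBound_nonneg (by linarith)
  linarith [H.add_one_le_blockConst]

lemma two_mul_le_of_half_le (H : IsFrequency h γ Ω c M) {l : ℕ} (hl : 1 / 2 ≤ l * (h : ℝ)) :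
    2 * c ≤ 0 + l * (γ.re / 2 * h / 2) := by
  nlinarith [H.mul_le_re, H.pos]

variable [NeZero h]

lemma norm_groundFunctional_pow_sub_one_le (H : IsFrequency h γ Ω c M)
    (P : IsSmallPerturbation h γ c ε w) {t : ℝ} {l : ℕ} (hl : l * h ≤ t) :
    ‖(topEigenvalue h γ Ω)⁻¹ ^ l * H.groundFunctional ((H.perturbedTransfer P ^ l) H.groundState) -
      1‖ ≤ l * (M * (1 + duhamelBound M c t) * ε ^ 2 * h) := by
  induction l with
  | zero => simp [H.groundFunctional_groundState]
  | succ l ih =>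
    have hc := H.pos
    have hM := H.eight_le
    have hlt : l * h ≤ t := le_trans (by gcongr; exact l.le_succ) hl
    set g := (H.perturbedTransfer P ^ l) H.groundState
    have hstep : (topEigenvalue h γ Ω)⁻¹ ^ (l + 1) *
        H.groundFunctional ((H.perturbedTransfer P ^ (l + 1)) H.groundState) - 1 =
        (topEigenvalue h γ Ω)⁻¹ ^ (l + 1) *
          H.groundFunctional ((H.perturbedTransfer P - H.freeTransfer) g) +
        ((topEigenvalue h γ Ω)⁻¹ ^ l * H.groundFunctional g - 1) := by
      rw [pow_succ' (H.perturbedTransfer P), mul_apply_eq_comp, sub_apply, map_sub,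
        H.groundFunctional_freeTransfer, pow_succ']
      linear_combination ((topEigenvalue h γ Ω)⁻¹ ^ l * H.groundFunctional g) *
        inv_mul_cancel₀ H.topEigenvalue_ne_zero
    rw [hstep]
    calc _ ≤ M * (1 + duhamelBound M c (l * h)) * ε ^ 2 * h +
          l * (M * (1 + duhamelBound M c t) * ε ^ 2 * h) :=
          norm_add_le_of_le (H.norm_groundFunctional_step_le P l) (ih hlt)
      _ ≤ M * (1 + duhamelBound M c t) * ε ^ 2 * h +
          l * (M * (1 + duhamelBound M c t) * ε ^ 2 * h) := by
          gcongr
          exact duhamelBound_mono (by linarith) hc.le (by positivity) hlt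
      _ = (l + 1 : ℕ) * (M * (1 + duhamelBound M c t) * ε ^ 2 * h) := by
          push_cast
          ring

lemma block_hasSpectralGap (H : IsFrequency h γ Ω c M) {m : ℕ} (hm : blockTime c M ≤ m * h) :
    HasSpectralGap ((topEigenvalue h γ Ω)⁻¹ ^ m • H.freeTransfer ^ m) H.groundState
      H.groundFunctional M := by
  have hc := H.pos
  have hM := H.eight_le
  refine H.hasSpectralGap ?_
  calc 32 * M ^ 3 * ‖eigenRatio h γ Ω ^ m‖ ≤ 32 * M ^ 3 * (1 + 8 * c * (m * h))⁻¹ := by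
        gcongr
        exact H.norm_eigenRatio_pow_le m
    _ ≤ 1 := by
        rw [mul_inv_le_iff₀ (by positivity), one_mul]
        calc 32 * M ^ 3 = 8 * c * (4 * M ^ 3 / c) := by field_simp; ring
          _ ≤ 8 * c * (m * h) := by
              gcongr
              exact (le_add_of_nonneg_right zero_le_one).trans hm
          _ ≤ 1 + 8 * c * (m * h) := by linarith

lemma norm_block_sub_le (H : IsFrequency h γ Ω c M) (P : IsSmallPerturbation h γ c ε w) {m : ℕ}
    (hm : blockTime c M ≤ m * h) (hm' : m * h ≤ blockTime c M + 1) (f : ℝ →ᵇ ℂ) :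
    ‖((topEigenvalue h γ Ω)⁻¹ ^ m • H.perturbedTransfer P ^ m -
      (topEigenvalue h γ Ω)⁻¹ ^ m • H.freeTransfer ^ m) f‖ ≤ blockConst c M * ε * ‖f‖ := by
  have hc := H.pos
  have hM := H.eight_le
  have hε := P.nonneg
  have hT := H.one_le_blockTime
  have hbound : duhamelBound M c (m * h) ≤ blockConst c M :=
    (duhamelBound_mono (by linarith) hc.le (by linarith) hm').trans
      (by linarith [H.add_one_le_blockConst])
  have hconst := H.one_le_blockConst
  refine (BoundedContinuousFunction.norm_le (by positivity)).2 fun x ↦ ?_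
  calc _ ≤ duhamelBound M c (m * h) * ε * ‖f‖ * Real.exp (-c * x ^ 2) := by
        simp only [sub_apply, smul_apply, BoundedContinuousFunction.sub_apply,
          BoundedContinuousFunction.smul_apply, smul_eq_mul, ← mul_sub]
        refine H.norm_perturbedTransfer_pow_sub_apply_le P le_rfl (fun y ↦ ?_)
          (H.two_mul_le_of_half_le (by linarith)) x
        simpa using f.norm_coe_le_norm y
    _ ≤ blockConst c M * ε * ‖f‖ * 1 := by
        gcongr
        rw [Real.exp_le_one_iff, neg_mul]
        exact neg_nonpos.2 (by positivity)
    _ = blockConst c M * ε * ‖f‖ := mul_one _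

lemma norm_groundFunctional_block_sub_le (H : IsFrequency h γ Ω c M)
    (P : IsSmallPerturbation h γ c ε w) {m : ℕ} (hm : m * h ≤ blockTime c M + 1) :
    ‖H.groundFunctional (((topEigenvalue h γ Ω)⁻¹ ^ m • H.perturbedTransfer P ^ m -
      (topEigenvalue h γ Ω)⁻¹ ^ m • H.freeTransfer ^ m) H.groundState)‖ ≤
      (blockConst c M * ε) ^ 2 := by
  have hM := H.eight_le
  have hconst := H.one_le_blockConst
  have hT := H.one_le_blockTime
  have hB : 0 ≤ duhamelBound M c (blockTime c M + 1) := duhamelBound_nonneg (by linarith)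
  have hfree : (topEigenvalue h γ Ω)⁻¹ ^ m * topEigenvalue h γ Ω ^ m = 1 := by
    rw [← mul_pow, inv_mul_cancel₀ H.topEigenvalue_ne_zero, one_pow]
  simp only [sub_apply, smul_apply, map_sub, map_smul, H.groundFunctional_freeTransfer_pow,
    H.groundFunctional_groundState, smul_eq_mul, mul_one, hfree]
  calc _ ≤ m * (M * (1 + duhamelBound M c (blockTime c M + 1)) * ε ^ 2 * h) :=
        H.norm_groundFunctional_pow_sub_one_le P hm
    _ = m * h * (M * (1 + duhamelBound M c (blockTime c M + 1)) * ε ^ 2) := by ring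
    _ ≤ (blockTime c M + 1) * (M * (1 + duhamelBound M c (blockTime c M + 1)) * ε ^ 2) := by
        gcongr
    _ = blockConst c M * ε ^ 2 := by rw [blockConst]; ring
    _ ≤ blockConst c M ^ 2 * ε ^ 2 := by gcongr; exact le_self_pow₀ hconst two_ne_zero
    _ = (blockConst c M * ε) ^ 2 := by ring

theorem norm_block_pow_sub_le (H : IsFrequency h γ Ω c M) (P : IsSmallPerturbation h γ c ε w)
    {m b : ℕ} (hm : blockTime c M ≤ m * h) (hm' : m * h ≤ blockTime c M + 1)
    (hb : 36 * M ^ 5 * (blockConst c M * ε + b * (blockConst c M * ε) ^ 2) ≤ 1)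
    {f : ℝ →ᵇ ℂ} (hf : ‖f‖ ≤ 1) :
    ‖(((topEigenvalue h γ Ω)⁻¹ ^ m • H.perturbedTransfer P ^ m) ^ b) f -
      (((topEigenvalue h γ Ω)⁻¹ ^ m • H.freeTransfer ^ m) ^ b) f‖ ≤
      52 * M ^ 6 * (blockConst c M * ε + b * (blockConst c M * ε) ^ 2) :=
  (H.block_hasSpectralGap hm).norm_pow_sub_pow_le (H.norm_block_sub_le P hm hm')
    (H.norm_groundFunctional_block_sub_le P hm')
    (mul_nonneg (by linarith [H.one_le_blockConst]) P.nonneg) hb hf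

end IsFrequency

end Block

section Boundary

lemma smul_pow_apply {X : Type*} [NormedAddCommGroup X] [NormedSpace ℂ X] (a : ℂ) (K : X →L[ℂ] X)
    (b : ℕ) (x : X) : ((a • K) ^ b) x = a ^ b • (K ^ b) x := by
  rw [smul_pow, smul_apply]

variable {h : ℝ≥0} {γ Ω : ℂ} {c M ε : ℝ} {w : ℝ → ℂ}

lemma IsSmallPerturbation.integrable [NeZero h] (P : IsSmallPerturbation h γ c ε w)
    (hγ : 0 < γ.re) : Integrable w :=
  (integrable_exp_neg_mul_sq (mul_pos (half_pos hγ) (coe_pos_of_neZero h))).mono'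
    P.measurable.aestronglyMeasurable (.of_forall P.norm_le)

namespace IsFrequency

lemma isSmallPerturbation_gaussWeight (H : IsFrequency h γ Ω c M) :
    IsSmallPerturbation h γ c 0 (gaussWeight h γ) where
  measurable := measurable_gaussWeight h γ
  nonneg := le_rfl
  norm_le := H.norm_gaussWeight_le
  norm_sub_le := by simp
  norm_even_le := by simp

variable [NeZero h]

lemma norm_freeTransfer_pow_apply_le (H : IsFrequency h γ Ω c M) (f : ℝ →ᵇ ℂ) {r : ℕ}
    (hr : 1 / 2 ≤ r * (h : ℝ)) (y : ℝ) :
    ‖(topEigenvalue h γ Ω)⁻¹ ^ r * (H.freeTransfer ^ r) f y‖ ≤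
      Real.exp ((M + 4) * c * (r * h)) * ‖f‖ * Real.exp (-(2 * c) * y ^ 2) := by
  have hc := H.pos
  have hstep := H.mul_step_le
  have hdecay := norm_transfer_pow_apply_le_exp (s := 2 * c) (p := γ.re / 2) (C := ‖f‖) (a := 0)
    (by linarith [H.mul_sq_le_re]) (by linarith) (by linarith) H.isWeight H.norm_gaussWeight_le
    (by linarith) (fun y ↦ by simpa using f.norm_coe_le_norm y) r y
  rw [min_eq_right (H.two_mul_le_of_half_le hr)] at hdecay
  calc _ ≤ Real.exp (M * c * (r * h)) * (‖f‖ * Real.exp (2 * (2 * c) * (r * h)) *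
        Real.exp (-(2 * c) * y ^ 2)) := by
        rw [norm_mul]
        exact mul_le_mul (H.norm_topEigenvalue_inv_pow_le r) hdecay (norm_nonneg _)
          (Real.exp_pos _).le
    _ = Real.exp (M * c * (r * h) + 2 * (2 * c) * (r * h)) * ‖f‖ * Real.exp (-(2 * c) * y ^ 2) := by
        rw [Real.exp_add]
        ring
    _ = _ := by ring_nf

/-- The functional through which the last `r` steps of the chain act on the previous ones, with the
growth of the free chain divided out. -/
noncomputable def boundaryFunctional (H : IsFrequency h γ Ω c M)
    (P : IsSmallPerturbation h γ c ε w) (r : ℕ) : (ℝ →ᵇ ℂ) →L[ℂ] ℂ :=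
  (topEigenvalue h γ Ω)⁻¹ ^ r • (pairing (P.integrable H.re_pos)).comp (H.perturbedTransfer P ^ r)

lemma boundaryFunctional_apply (H : IsFrequency h γ Ω c M) (P : IsSmallPerturbation h γ c ε w)
    (r : ℕ) (f : ℝ →ᵇ ℂ) : H.boundaryFunctional P r f =
      ∫ y, w y * ((topEigenvalue h γ Ω)⁻¹ ^ r * (H.perturbedTransfer P ^ r) f y) := by
  simp only [mul_left_comm (w _), integral_const_mul]
  rfl

lemma integrable_mul_perturbedTransfer_pow (H : IsFrequency h γ Ω c M)
    (P : IsSmallPerturbation h γ c ε w) (r : ℕ) (f : ℝ →ᵇ ℂ) :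
    Integrable fun y ↦ w y * ((topEigenvalue h γ Ω)⁻¹ ^ r * (H.perturbedTransfer P ^ r) f y) :=
  integrable_mul_bounded (P.integrable H.re_pos)
    ((topEigenvalue h γ Ω)⁻¹ ^ r • (H.perturbedTransfer P ^ r) f)

lemma boundaryFunctional_block_pow (H : IsFrequency h γ Ω c M)
    (P : IsSmallPerturbation h γ c ε w) (r m b : ℕ) :
    H.boundaryFunctional P r ((((topEigenvalue h γ Ω)⁻¹ ^ m • H.perturbedTransfer P ^ m) ^ b) 1) =
      (topEigenvalue h γ Ω)⁻¹ ^ (r + m * b) * partition h w (r + m * b) := by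
  rw [partition_eq_pairing h (P.isWeight H.re_pos) (P.integrable H.re_pos), smul_pow_apply,
    map_smul, ← pow_mul, ← pow_mul, pow_add, pow_add, mul_apply_eq_comp, smul_eq_mul, mul_comm,
    mul_right_comm]
  rfl

lemma norm_mul_perturbedTransfer_pow_sub_le (H : IsFrequency h γ Ω c M)
    (P : IsSmallPerturbation h γ c ε w) {r : ℕ} (hr : 1 / 2 ≤ r * (h : ℝ)) (f : ℝ →ᵇ ℂ) (y : ℝ) :
    ‖w y * ((topEigenvalue h γ Ω)⁻¹ ^ r *
      ((H.perturbedTransfer P ^ r) f y - (H.freeTransfer ^ r) f y))‖ ≤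
      duhamelBound M c (r * h) * ε * ‖f‖ * Real.exp (-c * y ^ 2) := by
  rw [norm_mul, ← one_mul (_ * Real.exp _)]
  exact mul_le_mul (P.norm_le_one H.re_pos y)
    (H.norm_perturbedTransfer_pow_sub_apply_le P le_rfl
      (fun z ↦ by simpa using f.norm_coe_le_norm z) (H.two_mul_le_of_half_le hr) y)
    (norm_nonneg _) zero_le_one

lemma norm_sub_mul_freeTransfer_pow_le (H : IsFrequency h γ Ω c M)
    (P : IsSmallPerturbation h γ c ε w) {r : ℕ} (hr : 1 / 2 ≤ r * (h : ℝ)) (f : ℝ →ᵇ ℂ) (y : ℝ) :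
    ‖(w y - gaussWeight h γ y) * ((topEigenvalue h γ Ω)⁻¹ ^ r * (H.freeTransfer ^ r) f y)‖ ≤
      duhamelBound M c (r * h) * ε * ‖f‖ * Real.exp (-c * y ^ 2) := by
  have hε := P.nonneg
  have hγ := H.re_pos
  have hr' : (h : ℝ) ≤ r * h := by
    have : r ≠ 0 := by
      rintro rfl
      norm_num at hr
    exact le_mul_of_one_le_left h.coe_nonneg (by exact_mod_cast Nat.one_le_iff_ne_zero.2 this)
  have hexp : Real.exp (-(γ.re / 2 * h) * y ^ 2) ≤ 1 := by
    rw [Real.exp_le_one_iff, neg_mul]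
    exact neg_nonpos.2 (by positivity)
  calc _ ≤ (ε * (r * h) * Real.exp (c * y ^ 2) * 1) *
        (Real.exp ((M + 4) * c * (r * h)) * ‖f‖ * Real.exp (-(2 * c) * y ^ 2)) := by
        rw [norm_mul]
        refine mul_le_mul ((P.norm_sub_le y).trans ?_)
          (H.norm_freeTransfer_pow_apply_le f hr y) (norm_nonneg _) (by positivity)
        gcongr
    _ = (r * h) * Real.exp ((M + 4) * c * (r * h)) * ε * ‖f‖ *
        Real.exp (c * y ^ 2 + -(2 * c) * y ^ 2) := by
        rw [Real.exp_add]
        ring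
    _ = _ := by rw [duhamelBound]; ring_nf

lemma norm_boundaryFunctional_apply_sub_le (H : IsFrequency h γ Ω c M)
    (P : IsSmallPerturbation h γ c ε w) {r : ℕ} (hr : 1 / 2 ≤ r * (h : ℝ)) (f : ℝ →ᵇ ℂ) :
    ‖H.boundaryFunctional P r f - H.boundaryFunctional H.isSmallPerturbation_gaussWeight r f‖ ≤
      2 * duhamelBound M c (r * h) * ε * ‖f‖ * √(Real.pi / c) := by
  rw [boundaryFunctional_apply, boundaryFunctional_apply, ← integral_sub
    (H.integrable_mul_perturbedTransfer_pow P r f) (H.integrable_mul_perturbedTransfer_pow _ r f)]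
  refine norm_integral_le_of_norm_le_exp_neg_mul_sq H.pos fun y ↦ ?_
  refine (congrArg norm ?_).trans_le ((norm_add_le_of_le
    (H.norm_mul_perturbedTransfer_pow_sub_le P hr f y)
    (H.norm_sub_mul_freeTransfer_pow_le P hr f y)).trans_eq (by ring))
  rw [freeTransfer, perturbedTransfer, perturbedTransfer]
  ring

lemma norm_freeBoundaryFunctional_apply_le (H : IsFrequency h γ Ω c M) {r : ℕ}
    (hr : 1 / 2 ≤ r * (h : ℝ)) (f : ℝ →ᵇ ℂ) :
    ‖H.boundaryFunctional H.isSmallPerturbation_gaussWeight r f‖ ≤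
      2 * duhamelBound M c (r * h) * ‖f‖ * √(Real.pi / c) := by
  have hc := H.pos
  rw [boundaryFunctional_apply]
  refine norm_integral_le_of_norm_le_exp_neg_mul_sq hc fun y ↦ ?_
  have hw := H.isSmallPerturbation_gaussWeight.norm_le_one H.re_pos y
  calc _ ≤ 1 * (Real.exp ((M + 4) * c * (r * h)) * ‖f‖ * Real.exp (-(2 * c) * y ^ 2)) := by
        rw [norm_mul]
        exact mul_le_mul hw (H.norm_freeTransfer_pow_apply_le f hr y) (norm_nonneg _) zero_le_one
    _ ≤ 2 * (r * h) * (Real.exp ((M + 4) * c * (r * h)) * ‖f‖ * Real.exp (-c * y ^ 2)) := by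
        gcongr <;> linarith
    _ = _ := by
        rw [duhamelBound]
        ring

end IsFrequency

end Boundary

section FreePartition

/-- The determinant of the covariance form of a free chain of `l` steps, relative to `γ = 0`; it
solves the recurrence `u (l + 2) = (2 + 2 h² γ) u (l + 1) - u l`. -/
noncomputable def freeDet (h : ℝ≥0) (γ Ω : ℂ) (l : ℕ) : ℂ :=
  ((Ω + h * γ) * (eigenRatio h γ Ω)⁻¹ ^ l + (Ω - h * γ) * eigenRatio h γ Ω ^ l) / (2 * Ω)

variable {h : ℝ≥0} {γ Ω : ℂ} {c M : ℝ}

namespace IsFrequency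

lemma freeDet_zero (H : IsFrequency h γ Ω c M) : freeDet h γ Ω 0 = 1 := by
  have hΩ := H.freq_ne_zero
  rw [freeDet]
  field_simp
  ring

lemma freeDet_succ_sub (H : IsFrequency h γ Ω c M) (l : ℕ) :
    freeDet h γ Ω (l + 1) - freeDet h γ Ω l = h * ((Ω + h * γ) ^ 2 * (eigenRatio h γ Ω)⁻¹ ^ l -
      (Ω - h * γ) ^ 2 * eigenRatio h γ Ω ^ l) / (2 * Ω) := by
  have hsucc : eigenRatio h γ Ω ^ (l + 1) = eigenRatio h γ Ω ^ l * (1 + h ^ 2 * γ - h * Ω) :=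
    pow_succ _ _
  have hisucc : (eigenRatio h γ Ω)⁻¹ ^ (l + 1) =
      (eigenRatio h γ Ω)⁻¹ ^ l * (1 + h ^ 2 * γ + h * Ω) := by rw [pow_succ, H.eigenRatio_inv]
  rw [freeDet, freeDet, hsucc, hisucc]
  ring

lemma freeDet_recurrence (H : IsFrequency h γ Ω c M) (l : ℕ) :
    freeDet h γ Ω (l + 2) - freeDet h γ Ω (l + 1) =
      freeDet h γ Ω (l + 1) - freeDet h γ Ω l + 2 * h ^ 2 * γ * freeDet h γ Ω (l + 1) := by
  have hsucc : eigenRatio h γ Ω ^ (l + 1) = eigenRatio h γ Ω ^ l * (1 + h ^ 2 * γ - h * Ω) :=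
    pow_succ _ _
  have hisucc : (eigenRatio h γ Ω)⁻¹ ^ (l + 1) =
      (eigenRatio h γ Ω)⁻¹ ^ l * (1 + h ^ 2 * γ + h * Ω) := by rw [pow_succ, H.eigenRatio_inv]
  rw [H.freeDet_succ_sub, H.freeDet_succ_sub, freeDet, hsucc, hisucc]
  linear_combination h ^ 2 / (2 * Ω) * ((Ω + h * γ) * (eigenRatio h γ Ω)⁻¹ ^ l +
    (Ω - h * γ) * eigenRatio h γ Ω ^ l) * H.sq_eq

lemma norm_sq_sub_sq_mul_div_le (H : IsFrequency h γ Ω c M) (l : ℕ) :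
    ‖((Ω + h * γ) ^ 2 - (Ω - h * γ) ^ 2 * (eigenRatio h γ Ω ^ l) ^ 2) / (2 * Ω)‖ ≤ M ^ 2 * c := by
  have hc := H.pos
  have hq : ‖(eigenRatio h γ Ω ^ l) ^ 2‖ ≤ 1 := by
    rw [norm_pow]
    exact pow_le_one₀ (norm_nonneg _) (H.norm_eigenRatio_pow_le_one l)
  have hγ : ‖(h : ℂ) * γ‖ = h * ‖γ‖ := by simp
  have hadd : ‖Ω + h * γ‖ ≤ M * c := (_root_.norm_add_le _ _).trans (hγ ▸ H.norm_add_le)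
  have hsub : ‖Ω - h * γ‖ ≤ M * c := (norm_sub_le _ _).trans (hγ ▸ H.norm_add_le)
  have hΩ : 8 * c ≤ ‖Ω‖ := H.eight_mul_le_re.trans (Complex.re_le_norm _)
  rw [norm_div, norm_mul, Complex.norm_two]
  calc _ ≤ ((M * c) ^ 2 + (M * c) ^ 2 * 1) / (2 * (8 * c)) := by
        gcongr
        refine norm_sub_le_of_le ?_ ?_
        · rw [norm_pow]
          gcongr
        · rw [norm_mul, norm_pow]
          gcongr
    _ = M ^ 2 * c / 8 := by
        field_simp
        ring
    _ ≤ M ^ 2 * c := by linarith [mul_nonneg (sq_nonneg M) hc.le]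

variable [NeZero h]

lemma exists_freeTransfer_pow_one_eq (H : IsFrequency h γ Ω c M) (l : ℕ) :
    ∃ D a : ℂ, 0 ≤ a.re ∧ D ^ 2 * freeDet h γ Ω l = 1 ∧
      2 * h * (a + h * γ) * freeDet h γ Ω l = freeDet h γ Ω (l + 1) - freeDet h γ Ω l ∧
      ∀ x, (H.freeTransfer ^ l) 1 x = D * Complex.exp (-a * x ^ 2) := by
  induction l with
  | zero =>
    refine ⟨1, 0, le_rfl, by simp [H.freeDet_zero], ?_, by simp⟩
    rw [H.freeDet_succ_sub, H.freeDet_zero]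
    field_simp [H.freq_ne_zero]
    ring
  | succ l ih =>
    obtain ⟨D, a, ha, hD, hu, happly⟩ := ih
    set v := 1 + 2 * h * (h * γ + a) with hv
    have hv0 : v ≠ 0 := ne_zero_of_re_pos (re_one_add_pos (H.re_smul_add_nonneg ha))
    have hstep : freeDet h γ Ω (l + 1) = v * freeDet h γ Ω l := by
      rw [hv]
      linear_combination -hu
    refine ⟨D * v⁻¹ ^ (2⁻¹ : ℂ), (h * γ + a) / v,
      re_div_one_add_nonneg (H.re_smul_add_nonneg ha), ?_, ?_, fun x ↦ ?_⟩
    · rw [mul_pow, cpow_two_inv_sq, hstep]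
      field_simp
      exact hD
    · rw [H.freeDet_recurrence, hstep]
      have hcancel : (h * γ + a) / v * v = h * γ + a := div_mul_cancel₀ _ hv0
      linear_combination 2 * h * freeDet h γ Ω l * hcancel
    · have hpow : (H.freeTransfer ^ l) 1 = D • gaussian a ha := by
        ext y
        exact happly y
      rw [pow_succ', mul_apply_eq_comp, hpow, map_smul, BoundedContinuousFunction.smul_apply,
        H.freeTransfer_gaussian]
      exact (mul_assoc _ _ _).symm

lemma partition_gaussWeight_sq_mul (H : IsFrequency h γ Ω c M) (l : ℕ) :
    partition h (gaussWeight h γ) l ^ 2 * (freeDet h γ Ω (l + 1) - freeDet h γ Ω l) =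
      2 * Real.pi * h := by
  have hint := H.isSmallPerturbation_gaussWeight.integrable H.re_pos
  obtain ⟨D, a, ha, hD, hu, happly⟩ := H.exists_freeTransfer_pow_one_eq l
  have hb : 0 < (h * γ + a).re := by
    rw [Complex.add_re, Complex.re_ofReal_mul]
    exact add_pos_of_pos_of_nonneg (mul_pos (coe_pos_of_neZero h) H.re_pos) ha
  have hne : (h * γ + a : ℂ) ≠ 0 := ne_zero_of_re_pos hb
  rw [partition_eq_pairing h H.isWeight hint, pairing_apply]
  change (∫ y, gaussWeight h γ y * (H.freeTransfer ^ l) 1 y) ^ 2 * _ = _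
  simp only [happly, mul_left_comm _ D, integral_const_mul, gaussWeight_mul_cexp]
  rw [integral_gaussian_complex hb, mul_pow, one_div, cpow_two_inv_sq, ← hu]
  field_simp
  linear_combination h * (h * γ + a) * hD

lemma inv_pow_mul_partition_gaussWeight_sq_mul (H : IsFrequency h γ Ω c M) (l : ℕ) :
    ((topEigenvalue h γ Ω)⁻¹ ^ l * partition h (gaussWeight h γ) l) ^ 2 *
      (((Ω + h * γ) ^ 2 - (Ω - h * γ) ^ 2 * (eigenRatio h γ Ω ^ l) ^ 2) / (2 * Ω)) =
      2 * Real.pi := by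
  set q := eigenRatio h γ Ω with hq
  have hsq : ((topEigenvalue h γ Ω)⁻¹ ^ l) ^ 2 = q⁻¹ ^ l := by
    rw [pow_right_comm, inv_pow, topEigenvalue, cpow_two_inv_sq]
  have hql : q⁻¹ ^ l * q ^ l = 1 := by
    rw [← mul_pow, inv_mul_cancel₀ H.eigenRatio_ne_zero, one_pow]
  have hZ := H.partition_gaussWeight_sq_mul l
  rw [H.freeDet_succ_sub, ← hq] at hZ
  refine mul_left_cancel₀ (coe_ne_zero_of_neZero h) ?_
  rw [mul_pow, hsq]
  linear_combination hZ + partition h (gaussWeight h γ) l ^ 2 * h * (Ω - h * γ) ^ 2 / (2 * Ω) *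
    q ^ l * (-hql)

lemma one_le_sqrt_mul_norm_partition_gaussWeight (H : IsFrequency h γ Ω c M) (l : ℕ) :
    1 ≤ √(M ^ 2 * c) * ‖(topEigenvalue h γ Ω)⁻¹ ^ l * partition h (gaussWeight h γ) l‖ := by
  have hc := H.pos
  have hM := H.eight_le
  have hnorm := congrArg norm (H.inv_pow_mul_partition_gaussWeight_sq_mul l)
  rw [norm_mul, norm_pow, norm_mul _ (Real.pi : ℂ), Complex.norm_two,
    Complex.norm_of_nonneg Real.pi_nonneg] at hnorm
  rw [← one_le_sq_iff₀ (by positivity), mul_pow, Real.sq_sqrt (by positivity), mul_comm]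
  calc 1 ≤ 2 * Real.pi := by linarith [Real.pi_gt_three]
    _ = _ := hnorm.symm
    _ ≤ _ := by
        gcongr
        exact H.norm_sq_sub_sq_mul_div_le l

end IsFrequency

end FreePartition

section Comparison

lemma exists_block_decomposition {h T : ℝ} (hh : 0 < h) (hh1 : h ≤ 1) (hT : 1 ≤ T) {l : ℕ}
    (hl : 1 / 2 ≤ l * h) :
    ∃ m b r : ℕ, r + m * b = l ∧ T ≤ m * h ∧ m * h ≤ T + 1 ∧ 1 / 2 ≤ r * h ∧
      r * h ≤ 2 * (T + 1) ∧ b ≤ l * h := by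
  obtain ⟨m, hm, hm'⟩ : ∃ m : ℕ, T ≤ m * h ∧ m * h ≤ T + 1 := by
    refine ⟨⌈T / h⌉₊, (div_le_iff₀ hh).1 (Nat.le_ceil _), ?_⟩
    calc ⌈T / h⌉₊ * h ≤ (T / h + 1) * h := by
          gcongr
          exact (Nat.ceil_lt_add_one (by positivity)).le
      _ = T + h := by field_simp
      _ ≤ T + 1 := by gcongr
  obtain hlm | hlm := lt_or_ge l m
  · refine ⟨m, 0, l, by simp, hm, hm', hl, ?_, by simpa using by positivity⟩
    have : l * h ≤ m * h := by gcongr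
    linarith
  · have hm0 : 0 < m := Nat.pos_of_ne_zero <| by
      rintro rfl
      norm_num at hm
      linarith
    have hdiv : 1 ≤ l / m := (Nat.one_le_div_iff hm0).2 hlm
    have hsum : (l % m + m) + m * (l / m - 1) = l := by
      rw [Nat.mul_sub, mul_one, add_assoc,
        Nat.add_sub_cancel' (by simpa using Nat.mul_le_mul_left m hdiv), Nat.mod_add_div]
    refine ⟨m, l / m - 1, l % m + m, hsum, hm, hm', ?_, ?_, ?_⟩
    · push_cast
      nlinarith [Nat.cast_nonneg (α := ℝ) (l % m)]
    · have hmod : ((l % m : ℕ) : ℝ) * h ≤ m * h := by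
        gcongr
        exact (Nat.mod_lt l hm0).le
      push_cast
      linarith
    · have hle : ((l / m - 1 : ℕ) : ℝ) * m ≤ l := by
        exact_mod_cast (by lia : (l / m - 1) * m ≤ l)
      calc ((l / m - 1 : ℕ) : ℝ) ≤ (l / m - 1 : ℕ) * (m * h) :=
            le_mul_of_one_le_right (by positivity) (hT.trans hm)
        _ = (l / m - 1 : ℕ) * m * h := by ring
        _ ≤ l * h := by gcongr

/-- The constant in the comparison of the perturbed partition function with the free one. -/
noncomputable def comparisonConst (c M : ℝ) : ℝ :=
  2 * duhamelBound M c (2 * (blockTime c M + 1)) * √(Real.pi / c) *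
    (4 * M ^ 2 + 52 * M ^ 6 * blockConst c M ^ 2) * √(M ^ 2 * c)

variable {h : ℝ≥0} [NeZero h] {γ Ω : ℂ} {c M ε : ℝ} {w : ℝ → ℂ}

namespace IsFrequency

lemma norm_perturbed_block_pow_one_le (H : IsFrequency h γ Ω c M)
    (P : IsSmallPerturbation h γ c ε w) {m b : ℕ} (hm : blockTime c M ≤ m * h)
    (hm' : m * h ≤ blockTime c M + 1)
    (hb : 36 * M ^ 5 * (blockConst c M * ε + b * (blockConst c M * ε) ^ 2) ≤ 1) :
    ‖(((topEigenvalue h γ Ω)⁻¹ ^ m • H.perturbedTransfer P ^ m) ^ b) 1‖ ≤ 4 * M ^ 2 := by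
  have hM := H.eight_le
  have hfree := (H.block_hasSpectralGap hm).norm_pow_apply_le 1 b
  have hdiff := H.norm_block_pow_sub_le P hm hm' hb (f := 1) norm_one.le
  rw [norm_one, mul_one] at hfree
  refine (norm_le_norm_add_norm_sub' _ _).trans ((add_le_add hfree hdiff).trans ?_)
  calc _ = 3 * M ^ 2 + 52 / 36 * M *
        (36 * M ^ 5 * (blockConst c M * ε + b * (blockConst c M * ε) ^ 2)) := by ring
    _ ≤ 3 * M ^ 2 + 52 / 36 * M * 1 := by gcongr
    _ ≤ 4 * M ^ 2 := by nlinarith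

lemma norm_boundaryFunctional_sub_le (H : IsFrequency h γ Ω c M)
    (P : IsSmallPerturbation h γ c ε w) {t : ℝ} {r : ℕ} (hr : 1 / 2 ≤ r * (h : ℝ))
    (hr' : r * h ≤ t) (f g : ℝ →ᵇ ℂ) :
    ‖H.boundaryFunctional P r f - H.boundaryFunctional H.isSmallPerturbation_gaussWeight r g‖ ≤
      2 * duhamelBound M c t * √(Real.pi / c) * (ε * ‖f‖ + ‖f - g‖) := by
  have hc := H.pos
  have hε := P.nonneg
  have hmono : duhamelBound M c (r * h) ≤ duhamelBound M c t :=
    duhamelBound_mono (by linarith [H.eight_le]) hc.le (by positivity) hr'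
  calc _ = ‖(H.boundaryFunctional P r f -
          H.boundaryFunctional H.isSmallPerturbation_gaussWeight r f) +
        H.boundaryFunctional H.isSmallPerturbation_gaussWeight r (f - g)‖ := by
        rw [map_sub, sub_add_sub_cancel]
    _ ≤ 2 * duhamelBound M c (r * h) * ε * ‖f‖ * √(Real.pi / c) +
        2 * duhamelBound M c (r * h) * ‖f - g‖ * √(Real.pi / c) :=
        norm_add_le_of_le (H.norm_boundaryFunctional_apply_sub_le P hr f)
          (H.norm_freeBoundaryFunctional_apply_le hr (f - g))
    _ ≤ 2 * duhamelBound M c t * ε * ‖f‖ * √(Real.pi / c) +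
        2 * duhamelBound M c t * ‖f - g‖ * √(Real.pi / c) := by gcongr
    _ = _ := by ring

lemma norm_partition_sub_le_of_blocks (H : IsFrequency h γ Ω c M)
    (P : IsSmallPerturbation h γ c ε w) {t : ℝ} {m b r : ℕ} (hm : blockTime c M ≤ m * h)
    (hm' : m * h ≤ blockTime c M + 1) (hr : 1 / 2 ≤ r * (h : ℝ))
    (hr' : r * h ≤ 2 * (blockTime c M + 1)) (hb : b ≤ t)
    (hsmall : 36 * M ^ 5 * (blockConst c M ^ 2 * (ε + t * ε ^ 2)) ≤ 1) :
    ‖(topEigenvalue h γ Ω)⁻¹ ^ (r + m * b) * (partition h w (r + m * b) -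
      partition h (gaussWeight h γ) (r + m * b))‖ ≤
      2 * duhamelBound M c (2 * (blockTime c M + 1)) * √(Real.pi / c) *
        (4 * M ^ 2 + 52 * M ^ 6 * blockConst c M ^ 2) * (ε + t * ε ^ 2) := by
  have hε := P.nonneg
  have hM := H.eight_le
  have ht : 0 ≤ t := b.cast_nonneg.trans hb
  have hT := H.one_le_blockTime
  have hD := duhamelBound_nonneg (M := M) (c := c) (t := 2 * (blockTime c M + 1)) (by linarith)
  have hsum : blockConst c M * ε + b * (blockConst c M * ε) ^ 2 ≤
      blockConst c M ^ 2 * (ε + t * ε ^ 2) :=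
    calc _ ≤ blockConst c M ^ 2 * ε + t * (blockConst c M * ε) ^ 2 := by
          gcongr
          exact le_self_pow₀ H.one_le_blockConst two_ne_zero
      _ = _ := by ring
  have hsum' : 36 * M ^ 5 * (blockConst c M * ε + b * (blockConst c M * ε) ^ 2) ≤ 1 :=
    le_trans (by gcongr) hsmall
  rw [mul_sub, ← H.boundaryFunctional_block_pow P,
    ← H.boundaryFunctional_block_pow H.isSmallPerturbation_gaussWeight]
  calc _ ≤ 2 * duhamelBound M c (2 * (blockTime c M + 1)) * √(Real.pi / c) *
        ((ε + t * ε ^ 2) * (4 * M ^ 2) +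
          52 * M ^ 6 * (blockConst c M ^ 2 * (ε + t * ε ^ 2))) := by
        refine (H.norm_boundaryFunctional_sub_le P hr hr' _ _).trans ?_
        gcongr
        · exact le_add_of_nonneg_right (by positivity)
        · exact H.norm_perturbed_block_pow_one_le P hm hm' hsum'
        · refine (H.norm_block_pow_sub_le P hm hm' hsum' norm_one.le).trans ?_
          gcongr
    _ = _ := by ring

theorem norm_partition_sub_le (H : IsFrequency h γ Ω c M) (P : IsSmallPerturbation h γ c ε w)
    (hh : (h : ℝ) ≤ 1) {l : ℕ} (hl : 1 / 2 ≤ l * (h : ℝ))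
    (hsmall : 36 * M ^ 5 * (blockConst c M ^ 2 * (ε + l * h * ε ^ 2)) ≤ 1) :
    ‖partition h w l - partition h (gaussWeight h γ) l‖ ≤
      comparisonConst c M * (ε + l * h * ε ^ 2) * ‖partition h (gaussWeight h γ) l‖ := by
  have hε := P.nonneg
  have hT := H.one_le_blockTime
  have hD := duhamelBound_nonneg (M := M) (c := c) (t := 2 * (blockTime c M + 1)) (by linarith)
  obtain ⟨m, b, r, rfl, hm, hm', hr, hr', hb⟩ :=
    exists_block_decomposition (coe_pos_of_neZero h) hh hT hl
  set a := (topEigenvalue h γ Ω)⁻¹ ^ (r + m * b)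
  have ha : 0 < ‖a‖ := norm_pos_iff.2 (pow_ne_zero _ (inv_ne_zero H.topEigenvalue_ne_zero))
  refine le_of_mul_le_mul_left ?_ ha
  rw [← norm_mul]
  refine (H.norm_partition_sub_le_of_blocks P hm hm' hr hr' hb hsmall).trans
    ((le_mul_of_one_le_right (by have := H.eight_le; positivity)
      (H.one_le_sqrt_mul_norm_partition_gaussWeight (r + m * b))).trans_eq ?_)
  rw [comparisonConst, norm_mul]
  ring

end IsFrequency

end Comparison

section Limit

open Filter Topology

lemma IsFrequency.partition_gaussWeight_ne_zero {h : ℝ≥0} [NeZero h] {γ Ω : ℂ} {c M : ℝ}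
    (H : IsFrequency h γ Ω c M) (l : ℕ) : partition h (gaussWeight h γ) l ≠ 0 := fun h0 ↦ by
  have := H.one_le_sqrt_mul_norm_partition_gaussWeight l
  rw [h0, mul_zero, norm_zero, mul_zero] at this
  exact zero_lt_one.not_ge this

theorem tendsto_partition_div_partition_gaussWeight {ι : Type*} {F : Filter ι} {h : ι → ℝ≥0}
    [∀ i, NeZero (h i)] {γ : ℂ} {Ω : ι → ℂ} {c M : ℝ} {ε : ι → ℝ} {w : ι → ℝ → ℂ} {l : ι → ℕ}
    (H : ∀ᶠ i in F, IsFrequency (h i) γ (Ω i) c M)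
    (P : ∀ᶠ i in F, IsSmallPerturbation (h i) γ c (ε i) (w i))
    (hh : ∀ᶠ i in F, (h i : ℝ) ≤ 1) (hl : ∀ᶠ i in F, 1 / 2 ≤ l i * (h i : ℝ))
    (hε : Tendsto (fun i ↦ ε i + l i * h i * ε i ^ 2) F (𝓝 0)) :
    Tendsto (fun i ↦ partition (h i) (w i) (l i) / partition (h i) (gaussWeight (h i) γ) (l i))
      F (𝓝 1) := by
  have hsmall : ∀ᶠ i in F,
      36 * M ^ 5 * (blockConst c M ^ 2 * (ε i + l i * h i * ε i ^ 2)) ≤ 1 := by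
    have hlim := (hε.const_mul (blockConst c M ^ 2)).const_mul (36 * M ^ 5)
    rw [mul_zero, mul_zero] at hlim
    exact hlim.eventually_le_const zero_lt_one
  rw [tendsto_iff_norm_sub_tendsto_zero]
  refine squeeze_zero' (.of_forall fun _ ↦ norm_nonneg _) ?_
    (by simpa only [mul_zero] using hε.const_mul (comparisonConst c M))
  filter_upwards [H, P, hh, hl, hsmall] with i Hi Pi hi hli hsi
  have h0 := Hi.partition_gaussWeight_ne_zero (l i)
  rw [div_sub_one h0, norm_div, div_le_iff₀ (norm_pos_iff.2 h0)]
  exact Hi.norm_partition_sub_le Pi hi hli hsi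

lemma re_cpow_two_inv_pos {z : ℂ} (hz : 0 < z.re) : 0 < (z ^ (2⁻¹ : ℂ)).re := by
  rw [Complex.cpow_inv_two_re]
  positivity

lemma continuousAt_frequency {γ : ℂ} (hγ : 0 < γ.re) :
    ContinuousAt (fun h : ℝ≥0 ↦ (2 * γ + h ^ 2 * γ ^ 2) ^ (2⁻¹ : ℂ)) 0 := by
  refine (continuousAt_cpow_const ?_).comp_of_eq (f := fun h : ℝ≥0 ↦ 2 * γ + (h : ℂ) ^ 2 * γ ^ 2)
    (y := 2 * γ) (by fun_prop) (by simp)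
  exact .inl (by simpa using hγ)

theorem exists_eventually_isFrequency {γ : ℂ} (hγ : 0 < γ.re) :
    ∃ c M : ℝ, ∀ᶠ h : ℝ≥0 in 𝓝 0,
      IsFrequency h γ ((2 * γ + h ^ 2 * γ ^ 2) ^ (2⁻¹ : ℂ)) c M := by
  set Ω : ℝ≥0 → ℂ := fun h ↦ (2 * γ + h ^ 2 * γ ^ 2) ^ (2⁻¹ : ℂ)
  have hcont : ContinuousAt Ω 0 := continuousAt_frequency hγ
  have hre : 0 < (Ω 0).re := re_cpow_two_inv_pos (by simpa using hγ)
  have hcoe : ContinuousAt (fun h : ℝ≥0 ↦ (h : ℝ)) 0 := by fun_prop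
  obtain ⟨c, hc, hcγ, hcγ', hcΩ⟩ : ∃ c : ℝ, 0 < c ∧ 16 * c < γ.re ∧ 128 * c ^ 2 < γ.re ∧
      8 * c < (Ω 0).re := by
    have hlt {f : ℝ → ℝ} (hf : Continuous f) (h0 : f 0 = 0) {b : ℝ} (hb : 0 < b) :
        ∀ᶠ c in 𝓝[>] 0, f c < b :=
      (hf.tendsto' 0 0 h0).mono_left nhdsWithin_le_nhds |>.eventually_lt_const hb
    exact (eventually_mem_nhdsWithin.and <| (hlt (by fun_prop) (by simp) hγ).and <|
      (hlt (by fun_prop) (by simp) hγ).and <| hlt (by fun_prop) (by simp) hre).exists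
  refine ⟨c, (‖Ω 0‖ + 1) / c, ?_⟩
  have hstep : ∀ᶠ h : ℝ≥0 in 𝓝 0, 8 * c * h < 1 :=
    (continuousAt_const.mul hcoe).eventually_lt continuousAt_const (by simp)
  have hgap : ∀ᶠ h : ℝ≥0 in 𝓝 0, 8 * c < (Ω h - h * γ).re :=
    continuousAt_const.eventually_lt (by fun_prop) (by simpa using hcΩ)
  have hnorm : ∀ᶠ h : ℝ≥0 in 𝓝 0, ‖Ω h‖ + h * ‖γ‖ < ‖Ω 0‖ + 1 :=
    (hcont.norm.add (hcoe.mul continuousAt_const)).eventually_lt continuousAt_const (by simp)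
  filter_upwards [hstep, hgap, hnorm] with h h1 h2 h3
  exact ⟨cpow_two_inv_sq _, hc, hcγ.le, hcγ'.le, h1.le, h2.le, by
    rw [div_mul_cancel₀ _ hc.ne']
    exact h3.le⟩

end Limit

section SiteWeight

lemma pow_four_le_exp {c : ℝ} (hc : 0 < c) (y : ℝ) :
    y ^ 4 ≤ 2 / c ^ 2 * Real.exp (c * y ^ 2) := by
  have hexp := Real.pow_div_factorial_le_exp (c * y ^ 2) (by positivity) 2
  calc y ^ 4 = 2 / c ^ 2 * ((c * y ^ 2) ^ 2 / Nat.factorial 2) := by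
        rw [Nat.factorial_two]
        push_cast
        field_simp
    _ ≤ _ := by gcongr

lemma one_add_pow_four_le_exp {c : ℝ} (hc : 0 < c) (y : ℝ) :
    1 + y ^ 4 ≤ (1 + 2 / c ^ 2) * Real.exp (c * y ^ 2) := by
  rw [add_mul, one_mul]
  exact add_le_add (Real.one_le_exp (by positivity)) (pow_four_le_exp hc y)

lemma abs_pow_three_le_exp {c : ℝ} (hc : 0 < c) (y : ℝ) :
    |y| ^ 3 ≤ (1 + 2 / c ^ 2) * Real.exp (c * y ^ 2) := by
  refine le_trans ?_ (one_add_pow_four_le_exp hc y)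
  rw [← Even.pow_abs (by decide : Even 4)]
  obtain hy | hy := le_total |y| 1
  · exact (pow_le_one₀ (abs_nonneg y) hy).trans (le_add_of_nonneg_right (by positivity))
  · exact (pow_le_pow_right₀ hy (by norm_num)).trans (le_add_of_nonneg_left zero_le_one)

variable {h : ℝ≥0} {γ : ℂ} {φ : ℝ → ℂ} {c C δ b s : ℝ}

lemma measurable_cutoffExp (hφ : Measurable φ) (δ : ℝ) : Measurable (cutoffExp φ δ) :=
  Measurable.ite (measurableSet_le (by fun_prop) (by fun_prop)) (by fun_prop) measurable_const

lemma norm_cutoffExp_le (hφ : ∀ s, |s| ≤ δ → ‖φ s‖ ≤ b * s ^ 2) (s : ℝ) :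
    ‖cutoffExp φ δ s‖ ≤ Real.exp (b * s ^ 2) := by
  rw [cutoffExp]
  split_ifs with hs
  · rw [Complex.norm_exp]
    gcongr
    exact (Complex.re_le_norm _).trans ((norm_neg _).trans_le (hφ s hs))
  · simpa using Real.exp_nonneg _

lemma norm_cutoffExp_sub_one_le (hs : |s| ≤ δ) (hφ : ‖φ s‖ ≤ b * s ^ 2) :
    ‖cutoffExp φ δ s - 1‖ ≤ ‖φ s‖ * Real.exp (b * s ^ 2) := by
  rw [cutoffExp, if_pos hs]
  refine (norm_cexp_sub_one_le _).trans ?_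
  rw [norm_neg]
  gcongr

lemma norm_cutoffExp_sub_one_of_lt (hs : δ < |s|) : ‖cutoffExp φ δ s - 1‖ = 1 := by
  rw [cutoffExp, if_neg hs.not_ge, zero_sub, norm_neg, norm_one]

lemma norm_cexp_neg_sub_one_add_le {z : ℂ} (hz : ‖z‖ ≤ 1) :
    ‖Complex.exp (-z) - 1 + z‖ ≤ ‖z‖ ^ 2 := by
  simpa [sub_neg_eq_add] using
    Complex.norm_exp_sub_one_sub_id_le (x := -z) ((norm_neg z).trans_le hz)

lemma siteWeight_sub_gaussWeight (h : ℝ) (γ : ℂ) (φ : ℝ → ℂ) (δ y : ℝ) :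
    siteWeight h γ φ δ y - gaussWeight h γ y =
      gaussWeight h γ y * (cutoffExp φ δ (√h * y) - 1) := by
  rw [siteWeight, mul_sub_one]

lemma gaussWeight_neg (h : ℝ) (γ : ℂ) (y : ℝ) : gaussWeight h γ (-y) = gaussWeight h γ y := by
  rw [gaussWeight, gaussWeight, Complex.ofReal_neg, neg_sq]

lemma one_le_sq_mul_exp_of_lt (hc : 0 < c) (hδ : 0 ≤ δ)
    (hout : 1 ≤ (h : ℝ) ^ 2 * Real.exp (c * (δ ^ 2 / h))) {y : ℝ} (hy : δ < |√h * y|) :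
    1 ≤ (h : ℝ) ^ 2 * Real.exp (c * y ^ 2) := by
  have hsq : δ ^ 2 ≤ y ^ 2 * h := by
    calc δ ^ 2 ≤ |√h * y| ^ 2 := by gcongr
      _ = y ^ 2 * h := by rw [sq_abs, mul_pow, Real.sq_sqrt h.coe_nonneg, mul_comm]
  exact hout.trans (by gcongr; exact div_le_of_le_mul₀ h.coe_nonneg (sq_nonneg y) hsq)

/-- `φ` is small of third order on `[-δ, δ]`, and its even part is small of fourth order. -/
structure IsCubicallySmall (φ : ℝ → ℂ) (C δ : ℝ) : Prop where
  measurable : Measurable φ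
  nonneg : 0 ≤ C
  norm_le : ∀ s, |s| ≤ δ → ‖φ s‖ ≤ C * |s| ^ 3
  norm_add_neg_le : ∀ s, |s| ≤ δ → ‖φ s + φ (-s)‖ ≤ C * s ^ 4

namespace IsCubicallySmall

lemma norm_le_sq (hφ : IsCubicallySmall φ C δ) (hs : |s| ≤ δ) : ‖φ s‖ ≤ C * δ * s ^ 2 := by
  have hC := hφ.nonneg
  calc ‖φ s‖ ≤ C * |s| ^ 3 := hφ.norm_le s hs
    _ = C * |s| * s ^ 2 := by rw [← sq_abs s]; ring
    _ ≤ C * δ * s ^ 2 := by gcongr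

lemma norm_cutoffExp_even_le (hφ : IsCubicallySmall φ C δ) (hδ : δ ≤ 1) (hCδ : C * δ ≤ 1)
    (hs : |s| ≤ δ) :
    ‖cutoffExp φ δ s - 1 + (cutoffExp φ δ (-s) - 1)‖ ≤ (2 * C ^ 2 + C) * s ^ 4 := by
  have := hφ.nonneg
  have hs1 : |s| ≤ 1 := hs.trans hδ
  have hquad {t : ℝ} (ht : |t| = |s|) : ‖Complex.exp (-φ t) - 1 + φ t‖ ≤ C ^ 2 * s ^ 4 := by
    have hts : |t| ≤ δ := ht.trans_le hs
    have hφt := hφ.norm_le t hts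
    have hle : ‖φ t‖ ≤ 1 := (hφ.norm_le_sq hts).trans (by
      have : t ^ 2 ≤ 1 := (sq_le_one_iff_abs_le_one t).2 (hts.trans hδ)
      have := (abs_nonneg t).trans hts
      exact mul_le_one₀ hCδ (by positivity) ‹_›)
    calc _ ≤ ‖φ t‖ ^ 2 := norm_cexp_neg_sub_one_add_le hle
      _ ≤ (C * |t| ^ 3) ^ 2 := by gcongr
      _ = C ^ 2 * s ^ 4 * |s| ^ 2 := by
        rw [ht, ← Even.pow_abs (by decide : Even 4) s]
        ring
      _ ≤ C ^ 2 * s ^ 4 := mul_le_of_le_one_right (by positivity) (pow_le_one₀ (abs_nonneg s) hs1)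
  rw [cutoffExp, cutoffExp, if_pos hs, if_pos (by rwa [abs_neg])]
  calc _ = ‖(Complex.exp (-φ s) - 1 + φ s) + (Complex.exp (-φ (-s)) - 1 + φ (-s)) -
          (φ s + φ (-s))‖ := by ring_nf
    _ ≤ C ^ 2 * s ^ 4 + C ^ 2 * s ^ 4 + C * s ^ 4 :=
      norm_sub_le_of_le (norm_add_le_of_le (hquad rfl) (hquad (abs_neg s)))
        (hφ.norm_add_neg_le s hs)
    _ = _ := by ring

lemma norm_cutoffExp_sub_one_le_exp (hφ : IsCubicallySmall φ C δ) (hc : 0 < c) (hδ : 0 ≤ δ)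
    (hCγ : C * δ ≤ γ.re / 2) (hh : (h : ℝ) ≤ 1)
    (hout : 1 ≤ (h : ℝ) ^ 2 * Real.exp (c * (δ ^ 2 / h))) (y : ℝ) :
    ‖cutoffExp φ δ (√h * y) - 1‖ ≤ 2 * (C + 1) * (1 + 2 / c ^ 2) * √h * h *
      Real.exp (c * y ^ 2) * Real.exp (γ.re / 2 * h * y ^ 2) := by
  have hC := hφ.nonneg
  have hs2 : (√h * y) ^ 2 = h * y ^ 2 := by rw [mul_pow, Real.sq_sqrt h.coe_nonneg]
  have hs3 : |√h * y| ^ 3 = √h * h * |y| ^ 3 := by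
    rw [abs_mul, abs_of_nonneg (Real.sqrt_nonneg _), mul_pow, pow_succ' √h,
      Real.sq_sqrt h.coe_nonneg]
  rw [mul_assoc (γ.re / 2), ← hs2]
  obtain hs | hs := le_or_gt |√h * y| δ
  · calc _ ≤ ‖φ (√h * y)‖ * Real.exp (γ.re / 2 * (√h * y) ^ 2) :=
          norm_cutoffExp_sub_one_le hs ((hφ.norm_le_sq hs).trans
            (mul_le_mul_of_nonneg_right hCγ (sq_nonneg _)))
      _ ≤ C * (√h * h * ((1 + 2 / c ^ 2) * Real.exp (c * y ^ 2))) *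
          Real.exp (γ.re / 2 * (√h * y) ^ 2) := by
          gcongr
          exact (hφ.norm_le _ hs).trans (by rw [hs3]; gcongr; exact abs_pow_three_le_exp hc y)
      _ = C * (1 + 2 / c ^ 2) * √h * h * Real.exp (c * y ^ 2) *
          Real.exp (γ.re / 2 * (√h * y) ^ 2) := by ring
      _ ≤ _ := by gcongr; linarith
  · have hK : 1 ≤ 2 * (C + 1) * (1 + 2 / c ^ 2) :=
      one_le_mul_of_one_le_of_one_le (by linarith) (le_add_of_nonneg_right (by positivity))
    calc ‖cutoffExp φ δ (√h * y) - 1‖ = 1 := norm_cutoffExp_sub_one_of_lt hs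
      _ ≤ (h : ℝ) ^ 2 * Real.exp (c * y ^ 2) := one_le_sq_mul_exp_of_lt hc hδ hout hs
      _ = 1 * h * h * Real.exp (c * y ^ 2) * 1 := by ring
      _ ≤ _ := by
          gcongr
          · exact Real.le_sqrt_of_sq_le (pow_le_of_le_one h.coe_nonneg hh two_ne_zero)
          · exact Real.one_le_exp (mul_nonneg ((mul_nonneg hC hδ).trans hCγ) (sq_nonneg _))

lemma norm_cutoffExp_even_le_exp (hφ : IsCubicallySmall φ C δ) (hc : 0 < c) (hδ : 0 ≤ δ)
    (hδ1 : δ ≤ 1) (hCδ : C * δ ≤ 1)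
    (hout : 1 ≤ (h : ℝ) ^ 2 * Real.exp (c * (δ ^ 2 / h))) (y : ℝ) :
    ‖cutoffExp φ δ (√h * y) - 1 + (cutoffExp φ δ (√h * -y) - 1)‖ ≤
      (2 * (C + 1) * (1 + 2 / c ^ 2) * √h) ^ 2 * h * Real.exp (c * y ^ 2) := by
  have hC := hφ.nonneg
  have hs4 : (√h * y) ^ 4 = h ^ 2 * y ^ 4 := by
    rw [mul_pow, show √(h : ℝ) ^ 4 = (√h ^ 2) ^ 2 by ring, Real.sq_sqrt h.coe_nonneg]
  have hε : (2 * (C + 1) * (1 + 2 / c ^ 2) * √h) ^ 2 * h =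
      4 * (C + 1) ^ 2 * (1 + 2 / c ^ 2) ^ 2 * h ^ 2 := by
    rw [mul_pow _ √(h : ℝ), Real.sq_sqrt h.coe_nonneg]
    ring
  have hone : 1 ≤ 1 + 2 / c ^ 2 := le_add_of_nonneg_right (by positivity)
  rw [mul_neg, hε]
  obtain hs | hs := le_or_gt |√h * y| δ
  · calc _ ≤ (2 * C ^ 2 + C) * (√h * y) ^ 4 := hφ.norm_cutoffExp_even_le hδ1 hCδ hs
      _ ≤ (2 * C ^ 2 + C) * (h ^ 2 * ((1 + 2 / c ^ 2) * Real.exp (c * y ^ 2))) := by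
          rw [hs4]
          gcongr
          exact (le_add_of_nonneg_left zero_le_one).trans (one_add_pow_four_le_exp hc y)
      _ = (2 * C ^ 2 + C) * (1 + 2 / c ^ 2) * h ^ 2 * Real.exp (c * y ^ 2) := by ring
      _ ≤ _ := by
          gcongr ?_ * ?_ * _ * _
          · nlinarith
          · exact le_self_pow₀ hone two_ne_zero
  · calc _ ≤ (1 : ℝ) + 1 := norm_add_le_of_le (norm_cutoffExp_sub_one_of_lt hs).le
          (norm_cutoffExp_sub_one_of_lt (by rwa [abs_neg])).le
      _ = 2 * 1 := by norm_num
      _ ≤ 2 * (h ^ 2 * Real.exp (c * y ^ 2)) := by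
          gcongr
          exact one_le_sq_mul_exp_of_lt hc hδ hout hs
      _ = 2 * 1 * h ^ 2 * Real.exp (c * y ^ 2) := by ring
      _ ≤ _ := by
          gcongr ?_ * ?_ * _ * _
          · nlinarith
          · exact one_le_pow₀ hone

theorem isSmallPerturbation_siteWeight (hφ : IsCubicallySmall φ C δ) (hγ : 0 < γ.re) (hc : 0 < c)
    (hδ : 0 ≤ δ) (hδ1 : δ ≤ 1) (hCδ : C * δ ≤ 1) (hCγ : C * δ ≤ γ.re / 2) (hh : (h : ℝ) ≤ 1)
    (hout : 1 ≤ (h : ℝ) ^ 2 * Real.exp (c * (δ ^ 2 / h))) :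
    IsSmallPerturbation h γ c (2 * (C + 1) * (1 + 2 / c ^ 2) * √h) (siteWeight h γ φ δ) where
  measurable := (measurable_gaussWeight h γ).mul
    ((measurable_cutoffExp hφ.measurable δ).comp (by fun_prop))
  nonneg := by have := hφ.nonneg; positivity
  norm_le y := by
    have hcut := norm_cutoffExp_le (fun s hs ↦ (hφ.norm_le_sq hs).trans
      (mul_le_mul_of_nonneg_right hCγ (sq_nonneg s))) (√h * y)
    rw [siteWeight, norm_mul, norm_gaussWeight]
    calc _ ≤ Real.exp (-(h * γ.re) * y ^ 2) * Real.exp (γ.re / 2 * (√h * y) ^ 2) := by gcongr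
      _ = _ := by rw [← Real.exp_add, mul_pow, Real.sq_sqrt h.coe_nonneg]; ring_nf
  norm_sub_le y := by
    rw [siteWeight_sub_gaussWeight, norm_mul, norm_gaussWeight]
    calc _ ≤ Real.exp (-(h * γ.re) * y ^ 2) * (2 * (C + 1) * (1 + 2 / c ^ 2) * √h * h *
          Real.exp (c * y ^ 2) * Real.exp (γ.re / 2 * h * y ^ 2)) := by
          gcongr
          exact hφ.norm_cutoffExp_sub_one_le_exp hc hδ hCγ hh hout y
      _ = 2 * (C + 1) * (1 + 2 / c ^ 2) * √h * h * Real.exp (c * y ^ 2) *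
          (Real.exp (-(h * γ.re) * y ^ 2) * Real.exp (γ.re / 2 * h * y ^ 2)) := by ring
      _ = _ := by rw [← Real.exp_add]; ring_nf
  norm_even_le y := by
    rw [siteWeight_sub_gaussWeight, siteWeight_sub_gaussWeight, gaussWeight_neg, ← mul_add,
      norm_mul]
    refine (mul_le_of_le_one_left (norm_nonneg _) ?_).trans
      (hφ.norm_cutoffExp_even_le_exp hc hδ hδ1 hCδ hout y)
    rw [norm_gaussWeight, Real.exp_le_one_iff, neg_mul]
    exact neg_nonpos.2 (by positivity)

end IsCubicallySmall

end SiteWeight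

section Asymptotics

open Filter Topology

variable {θ κ : ℝ}

lemma tendsto_two_mul_add_one_atTop : Tendsto (fun n : ℕ ↦ 2 * (n : ℝ) + 1) atTop atTop :=
  tendsto_atTop_add_const_right _ _ (tendsto_natCast_atTop_atTop.const_mul_atTop two_pos)

lemma Wn_pos (θ : ℝ) (n : ℕ) : 0 < Wn θ n := Real.rpow_pos_of_pos (by positivity) _

lemma tendsto_Wn_atTop (hθ : -1 < θ) : Tendsto (Wn θ) atTop atTop :=
  (tendsto_rpow_atTop (by linarith)).comp tendsto_two_mul_add_one_atTop

lemma tendsto_dl (hθ : -1 < θ) (hκ : 0 < κ) : Tendsto (dl θ κ) atTop (𝓝 0) :=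
  (tendsto_rpow_neg_atTop hκ).comp (tendsto_Wn_atTop hθ)

lemma dl_nonneg (θ κ : ℝ) (n : ℕ) : 0 ≤ dl θ κ n := Real.rpow_nonneg (Wn_pos θ n).le _

/-- The step `h = 1 / W` of the rescaled chain. -/
noncomputable def latticeStep (θ : ℝ) (n : ℕ) : ℝ≥0 := ⟨(Wn θ n)⁻¹, (inv_pos.2 (Wn_pos θ n)).le⟩

lemma coe_latticeStep (θ : ℝ) (n : ℕ) : (latticeStep θ n : ℝ) = (Wn θ n)⁻¹ := rfl

lemma latticeStep_ne_zero (θ : ℝ) (n : ℕ) : latticeStep θ n ≠ 0 :=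
  NNReal.coe_ne_zero.1 (inv_pos.2 (Wn_pos θ n)).ne'

instance (θ : ℝ) (n : ℕ) : NeZero (latticeStep θ n) := ⟨latticeStep_ne_zero θ n⟩

lemma tendsto_latticeStep (hθ : -1 < θ) : Tendsto (latticeStep θ) atTop (𝓝 0) :=
  NNReal.tendsto_coe.1 (tendsto_inv_atTop_zero.comp (tendsto_Wn_atTop hθ))

lemma half_le_two_mul_latticeStep (hθ : θ ≤ 1) {n : ℕ} (hn : 1 ≤ n) :
    1 / 2 ≤ ((2 * n : ℕ) : ℝ) * latticeStep θ n := by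
  have hn' : (1 : ℝ) ≤ n := by exact_mod_cast hn
  have hW : Wn θ n ≤ 2 * n + 1 := by
    calc Wn θ n ≤ (2 * (n : ℝ) + 1) ^ (1 : ℝ) :=
          Real.rpow_le_rpow_of_exponent_le (by linarith) (by linarith)
      _ = _ := Real.rpow_one _
  rw [coe_latticeStep, ← div_eq_mul_inv, div_le_div_iff₀ two_pos (Wn_pos θ n)]
  push_cast
  linarith

lemma tendsto_two_mul_latticeStep_sq (hθ : 0 < θ) :
    Tendsto (fun n : ℕ ↦ ((2 * n : ℕ) : ℝ) * latticeStep θ n ^ 2) atTop (𝓝 0) := by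
  refine squeeze_zero (fun n ↦ by positivity) (fun n ↦ ?_)
    ((tendsto_rpow_neg_atTop hθ).comp tendsto_two_mul_add_one_atTop)
  have hN : (0 : ℝ) < 2 * n + 1 := by positivity
  have hW : Wn θ n ^ 2 = (2 * (n : ℝ) + 1) ^ (1 + θ) := by
    rw [Wn, ← Real.rpow_mul_natCast hN.le]
    norm_num
  calc ((2 * n : ℕ) : ℝ) * latticeStep θ n ^ 2 ≤ (2 * n + 1) * latticeStep θ n ^ 2 := by
        gcongr
        push_cast
        linarith
    _ = (2 * (n : ℝ) + 1) ^ (-θ) := by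
        rw [coe_latticeStep, inv_pow, hW, Real.rpow_add hN, Real.rpow_one, Real.rpow_neg hN.le]
        field_simp

lemma eventually_one_le_sq_mul_exp (hθ : -1 < θ) (hκ : κ < 1 / 2) {c : ℝ} (hc : 0 < c) :
    ∀ᶠ n in atTop, 1 ≤ (latticeStep θ n : ℝ) ^ 2 *
      Real.exp (c * (dl θ κ n ^ 2 / latticeStep θ n)) := by
  have hp : 0 < 1 - 2 * κ := by linarith
  filter_upwards [(((tendsto_exp_mul_div_rpow_atTop (2 / (1 - 2 * κ)) c hc).comp
    (tendsto_rpow_atTop hp)).comp (tendsto_Wn_atTop hθ)).eventually_ge_atTop 1] with n hn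
  have hW := Wn_pos θ n
  have hsq : (Wn θ n ^ (1 - 2 * κ)) ^ (2 / (1 - 2 * κ)) = Wn θ n ^ 2 := by
    rw [← Real.rpow_mul hW.le, mul_div_cancel₀ _ hp.ne', Real.rpow_two]
  have hdl : dl θ κ n ^ 2 / latticeStep θ n = Wn θ n ^ (1 - 2 * κ) := by
    rw [coe_latticeStep, div_inv_eq_mul, dl, ← Real.rpow_mul_natCast hW.le,
      ← Real.rpow_add_one hW.ne']
    push_cast
    ring_nf
  simp only [Function.comp_apply, hsq] at hn
  rwa [hdl, coe_latticeStep, inv_pow, inv_mul_eq_div]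

lemma IsCubicallySmall.mono {φ : ℝ → ℂ} {C δ δ' : ℝ} (hφ : IsCubicallySmall φ C δ)
    (hδ : δ' ≤ δ) : IsCubicallySmall φ C δ' where
  measurable := hφ.measurable
  nonneg := hφ.nonneg
  norm_le s hs := hφ.norm_le s (hs.trans hδ)
  norm_add_neg_le s hs := hφ.norm_add_neg_le s (hs.trans hδ)

lemma isCubicallySmall_zero (δ : ℝ) : IsCubicallySmall 0 0 δ where
  measurable := measurable_zero
  nonneg := le_rfl
  norm_le s _ := by simp
  norm_add_neg_le s _ := by simp

variable {γ : ℂ} {φ : ℝ → ℂ} {C δ : ℝ}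

lemma IsCubicallySmall.eventually_isSmallPerturbation (hφ : IsCubicallySmall φ C δ) (hδ : 0 < δ)
    (hγ : 0 < γ.re) {c : ℝ} (hc : 0 < c) (hθ : -1 < θ) (hκ : 0 < κ) (hκ' : κ < 1 / 2) :
    ∀ᶠ n in atTop, IsSmallPerturbation (latticeStep θ n) γ c
      (2 * (C + 1) * (1 + 2 / c ^ 2) * √(latticeStep θ n))
      (siteWeight (latticeStep θ n) γ φ (dl θ κ n)) := by
  have hdl := tendsto_dl hθ hκ
  have hCdl : Tendsto (fun n ↦ C * dl θ κ n) atTop (𝓝 0) := by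
    simpa only [mul_zero] using hdl.const_mul C
  filter_upwards [hdl.eventually_le_const hδ, hdl.eventually_le_const one_pos,
    hCdl.eventually_le_const one_pos, hCdl.eventually_le_const (half_pos hγ),
    (tendsto_latticeStep hθ).eventually_le_const one_pos,
    eventually_one_le_sq_mul_exp hθ hκ' hc] with n h1 h2 h3 h4 h5 h6
  exact (hφ.mono h1).isSmallPerturbation_siteWeight hγ hc (dl_nonneg θ κ n) h2 h3 h4
    (by exact_mod_cast h5) h6

theorem tendsto_partition_siteWeight_div (hφ : IsCubicallySmall φ C δ) (hδ : 0 < δ)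
    (hγ : 0 < γ.re) (hθ : 0 < θ) (hθ' : θ ≤ 1) (hκ : 0 < κ) (hκ' : κ < 1 / 2) :
    Tendsto (fun n ↦
      partition (latticeStep θ n) (siteWeight (latticeStep θ n) γ φ (dl θ κ n)) (2 * n) /
        partition (latticeStep θ n) (gaussWeight (latticeStep θ n) γ) (2 * n)) atTop (𝓝 1) := by
  have hθ₁ : -1 < θ := by linarith
  have hh := tendsto_latticeStep hθ₁
  obtain ⟨c, M, H⟩ := exists_eventually_isFrequency hγ
  refine tendsto_partition_div_partition_gaussWeight (hh.eventually H)
    (hφ.eventually_isSmallPerturbation hδ hγ H.self_of_nhds.pos hθ₁ hκ hκ') ?_ ?_ ?_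
  · exact (hh.eventually_le_const one_pos).mono fun n hn ↦ by exact_mod_cast hn
  · exact (eventually_ge_atTop 1).mono fun n ↦ half_le_two_mul_latticeStep hθ'
  · generalize 2 * (C + 1) * (1 + 2 / c ^ 2) = K
    have hsqrt : Tendsto (fun n ↦ √(latticeStep θ n : ℝ)) atTop (𝓝 0) := by
      simpa using (NNReal.tendsto_coe.2 hh).sqrt
    have hlim := (hsqrt.const_mul K).add ((tendsto_two_mul_latticeStep_sq hθ).const_mul (K ^ 2))
    rw [mul_zero, mul_zero, add_zero] at hlim
    refine hlim.congr fun n ↦ ?_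
    rw [mul_pow K, Real.sq_sqrt (NNReal.coe_nonneg _)]
    ring

theorem tendsto_avg0_exp_neg_sum (hφ : IsCubicallySmall φ C δ) (hδ : 0 < δ) (hγ : 0 < γ.re)
    (hθ : 0 < θ) (hθ' : θ ≤ 1) (hκ : 0 < κ) (hκ' : κ < 1 / 2) :
    Tendsto (fun n ↦ avg0 n (Wn θ n) (dl θ κ n) γ
      fun x ↦ Complex.exp (-(∑ j, φ (x j / Wn θ n)))) atTop (𝓝 1) := by
  have hfree : ∀ᶠ n in atTop,
      partition (latticeStep θ n) (gaussWeight (latticeStep θ n) γ) (2 * n) ≠ 0 := by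
    obtain ⟨c, M, H⟩ := exists_eventually_isFrequency hγ
    exact ((tendsto_latticeStep (by linarith)).eventually H).mono fun n Hn ↦
      Hn.partition_gaussWeight_ne_zero _
  have hquot := (tendsto_partition_siteWeight_div hφ hδ hγ hθ hθ' hκ hκ').div
    (tendsto_partition_siteWeight_div (isCubicallySmall_zero δ) hδ hγ hθ hθ' hκ hκ') one_ne_zero
  rw [div_one] at hquot
  refine hquot.congr' (hfree.mono fun n hn ↦ ?_)
  simp only [Pi.div_apply]
  rw [avg0_exp_neg_sum (latticeStep_ne_zero θ n) (mul_inv_cancel₀ (Wn_pos θ n).ne')]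
  exact div_div_div_cancel_right₀ hn _ _

end Asymptotics

section Phi

lemma isCubicallySmall_of_norm_sub_le {φ : ℝ → ℂ} {β : ℂ} {C δ : ℝ} (hφ : Measurable φ)
    (hC : 0 ≤ C) (hδ : δ ≤ 1) (H : ∀ s : ℝ, |s| ≤ δ → ‖φ s - β * s ^ 3‖ ≤ C * s ^ 4) :
    IsCubicallySmall φ (‖β‖ + 2 * C) δ where
  measurable := hφ
  nonneg := by positivity
  norm_le s hs := by
    have hs4 : s ^ 4 ≤ |s| ^ 3 := by
      rw [← Even.pow_abs (by decide) s]
      exact pow_le_pow_of_le_one (abs_nonneg s) (hs.trans hδ) (by norm_num)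
    calc ‖φ s‖ = ‖(φ s - β * s ^ 3) + β * s ^ 3‖ := by rw [sub_add_cancel]
      _ ≤ ‖φ s - β * s ^ 3‖ + ‖β * s ^ 3‖ := norm_add_le _ _
      _ ≤ C * |s| ^ 3 + ‖β‖ * |s| ^ 3 := by
        gcongr
        · exact (H s hs).trans (by gcongr)
        · simp
      _ ≤ (‖β‖ + 2 * C) * |s| ^ 3 := by nlinarith [pow_nonneg (abs_nonneg s) 3]
  norm_add_neg_le s hs := by
    have hneg := H (-s) (by rwa [abs_neg])
    calc ‖φ s + φ (-s)‖ = ‖(φ s - β * s ^ 3) + (φ (-s) - β * (-s : ℝ) ^ 3)‖ := by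
          congr 1
          push_cast
          ring
      _ ≤ C * s ^ 4 + C * (-s) ^ 4 := (norm_add_le _ _).trans (add_le_add (H s hs) hneg)
      _ = 2 * C * s ^ 4 := by ring
      _ ≤ (‖β‖ + 2 * C) * s ^ 4 := by
        gcongr
        exact le_add_of_nonneg_left (norm_nonneg β)

lemma norm_logTaylor_sub_log_le {z : ℂ} (hz : ‖z‖ ≤ 1 / 2) :
    ‖Complex.logTaylor 4 z - Complex.log (1 + z)‖ ≤ ‖z‖ ^ 4 := by
  have hinv : (1 - ‖z‖)⁻¹ ≤ 2 := by
    rw [inv_le_comm₀ (by linarith) two_pos]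
    linarith
  rw [norm_sub_rev]
  calc ‖Complex.log (1 + z) - Complex.logTaylor 4 z‖
      ≤ ‖z‖ ^ 4 * (1 - ‖z‖)⁻¹ / 4 :=
        (Complex.norm_log_sub_logTaylor_le 3 (by linarith)).trans_eq (by norm_num)
    _ ≤ ‖z‖ ^ 4 * 2 / 4 := by gcongr
    _ ≤ ‖z‖ ^ 4 := by linarith [pow_nonneg (norm_nonneg z) 4]

/-- The point `ζ = a + iλ₀/2`; it lies on the unit circle for `a = a_±`. -/
noncomputable def saddle (l0 a : ℝ) : ℂ := a + Complex.I * l0 / 2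

variable {l0 a : ℝ}

lemma norm_saddle (ha : a ^ 2 + l0 ^ 2 / 4 = 1) : ‖saddle l0 a‖ = 1 := by
  have hre : (saddle l0 a).re = a := by simp [saddle]
  have him : (saddle l0 a).im = l0 / 2 := by simp [saddle]
  rw [Complex.norm_eq_sqrt_sq_add_sq, hre, him, div_pow, Real.sqrt_eq_one]
  linarith

lemma inv_eq_saddle (ha : a ^ 2 + l0 ^ 2 / 4 = 1) :
    ((a : ℂ) - Complex.I * l0 / 2)⁻¹ = saddle l0 a := by
  have haC : (a : ℂ) ^ 2 + (l0 : ℂ) ^ 2 / 4 = 1 := by exact_mod_cast ha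
  refine inv_eq_of_mul_eq_one_left ?_
  rw [saddle]
  linear_combination haC - (l0 : ℂ) ^ 2 / 4 * Complex.I_sq

/-- The choice of `c` is what makes the quadratic Taylor coefficient vanish. -/
lemma phiPM_sub_cube (ha : a ^ 2 + l0 ^ 2 / 4 = 1) (s : ℝ) :
    phiPM l0 a ((1 + saddle l0 a ^ 2) / 2) s - -(saddle l0 a ^ 3 / 3) * s ^ 3 =
      Complex.logTaylor 4 (saddle l0 a * s) - Complex.log (1 + saddle l0 a * s) := by
  have hT (z : ℂ) : Complex.logTaylor 4 z = z - z ^ 2 / 2 + z ^ 3 / 3 := by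
    simp [Complex.logTaylor, Finset.sum_range_succ]
    ring
  have hadd : (a : ℂ) + s + Complex.I * l0 / 2 = saddle l0 a + s := by
    rw [saddle]
    ring
  rw [phiPM, hT, div_eq_inv_mul (s : ℂ), inv_eq_saddle ha, hadd, ← saddle]
  ring

lemma measurable_phiPM (l0 a : ℝ) (c : ℂ) : Measurable (phiPM l0 a c) := by
  have : Measurable fun y : ℝ ↦ Complex.log (1 + (y : ℂ) / ((a : ℂ) - Complex.I * l0 / 2)) :=
    Complex.measurable_log.comp (by fun_prop)
  unfold phiPM
  fun_prop

theorem isCubicallySmall_phiPM (ha : a ^ 2 + l0 ^ 2 / 4 = 1) :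
    IsCubicallySmall (phiPM l0 a ((1 + saddle l0 a ^ 2) / 2))
      (‖-(saddle l0 a ^ 3 / 3)‖ + 2 * 1) (1 / 2) := by
  refine isCubicallySmall_of_norm_sub_le (measurable_phiPM l0 a _) zero_le_one (by norm_num)
    fun s hs ↦ ?_
  have hnorm : ‖saddle l0 a * s‖ = |s| := by
    rw [norm_mul, norm_saddle ha, one_mul, Complex.norm_real, Real.norm_eq_abs]
  rw [phiPM_sub_cube ha, one_mul, ← Even.pow_abs (by decide) s, ← hnorm]
  exact norm_logTaylor_sub_log_le (hnorm.trans_le hs)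

lemma aplus_eq_sqrt (l0 : ℝ) : aplus l0 = √(1 - l0 ^ 2 / 4) := by
  rw [aplus, show 1 - l0 ^ 2 / 4 = (4 - l0 ^ 2) / 2 ^ 2 by ring,
    Real.sqrt_div' _ (sq_nonneg 2), Real.sqrt_sq zero_le_two]

lemma aplus_sq_add (hl0 : l0 ∈ Set.Ioo (-2 : ℝ) 2) : aplus l0 ^ 2 + l0 ^ 2 / 4 = 1 := by
  rw [aplus_eq_sqrt, Real.sq_sqrt (by nlinarith [hl0.1, hl0.2])]
  ring

lemma cplus_eq_saddle (hl0 : l0 ∈ Set.Ioo (-2 : ℝ) 2) :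
    cplus l0 = (1 + saddle l0 (aplus l0) ^ 2) / 2 := by
  have ha : (aplus l0 : ℂ) ^ 2 + (l0 : ℂ) ^ 2 / 4 = 1 := by exact_mod_cast aplus_sq_add hl0
  rw [cplus, saddle, ← aplus_eq_sqrt]
  push_cast
  linear_combination -ha / 2 - (l0 : ℂ) ^ 2 / 8 * Complex.I_sq

lemma cminus_eq_saddle (hl0 : l0 ∈ Set.Ioo (-2 : ℝ) 2) :
    cminus l0 = (1 + saddle l0 (-aplus l0) ^ 2) / 2 := by
  have ha : (aplus l0 : ℂ) ^ 2 + (l0 : ℂ) ^ 2 / 4 = 1 := by exact_mod_cast aplus_sq_add hl0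
  rw [cminus, saddle, ← aplus_eq_sqrt]
  push_cast
  linear_combination -ha / 2 - (l0 : ℂ) ^ 2 / 8 * Complex.I_sq

lemma re_cplus_pos (hl0 : l0 ∈ Set.Ioo (-2 : ℝ) 2) : 0 < (cplus l0).re := by
  have hre : (cplus l0).re = 1 - l0 ^ 2 / 4 := by simp [cplus, pow_two]
  nlinarith [hl0.1, hl0.2]

lemma re_cminus_pos (hl0 : l0 ∈ Set.Ioo (-2 : ℝ) 2) : 0 < (cminus l0).re := by
  have hre : (cminus l0).re = 1 - l0 ^ 2 / 4 := by simp [cminus, pow_two]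
  nlinarith [hl0.1, hl0.2]

end Phi

end BandChain

theorem avg_phi_tendsto_one_general (l0 : ℝ) (hl0 : l0 ∈ Set.Ioo (-2 : ℝ) 2)
    (θ κ : ℝ) (hθ : 0 < θ) (hθ1 : θ ≤ 1) (hκ : 0 < κ) (hκ' : κ < 1 / 2) :
    Filter.Tendsto (fun n : ℕ =>
        avg0 n (Wn θ n) (dl θ κ n) (cplus l0)
          (fun x => Complex.exp (-(∑ j, phiPM l0 (aplus l0) (cplus l0) (x j / Wn θ n)))))
      Filter.atTop (nhds 1) ∧
    Filter.Tendsto (fun n : ℕ =>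
        avg0 n (Wn θ n) (dl θ κ n) (cminus l0)
          (fun x => Complex.exp (-(∑ j, phiPM l0 (-aplus l0) (cminus l0) (x j / Wn θ n)))))
      Filter.atTop (nhds 1) := by
  have ha := BandChain.aplus_sq_add hl0
  have hplus := BandChain.isCubicallySmall_phiPM ha
  have hminus := BandChain.isCubicallySmall_phiPM (l0 := l0) (a := -aplus l0) (by rwa [neg_sq])
  rw [← BandChain.cplus_eq_saddle hl0] at hplus
  rw [← BandChain.cminus_eq_saddle hl0] at hminus
  exact ⟨BandChain.tendsto_avg0_exp_neg_sum hplus one_half_pos (BandChain.re_cplus_pos hl0)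
      hθ hθ1 hκ hκ',
    BandChain.tendsto_avg0_exp_neg_sum hminus one_half_pos (BandChain.re_cminus_pos hl0)
      hθ hθ1 hκ hκ'⟩

/-- `⟨exp{−∑_j φ_±(x_j/W)}⟩₀ → 1` as `n → ∞`, with `γ = c_±` respectively. -/
theorem avg_phi_tendsto_one (l0 : ℝ) (hl0 : l0 ∈ Set.Ioo (-2 : ℝ) 2)
    (θ κ : ℝ) (hθ : 0 < θ) (hθ1 : θ ≤ 1) (hκ : 0 < κ) (hκθ : κ < θ / 8) :
    Filter.Tendsto (fun n : ℕ =>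
        avg0 n (Wn θ n) (dl θ κ n) (cplus l0)
          (fun x => Complex.exp (-(∑ j, phiPM l0 (aplus l0) (cplus l0) (x j / Wn θ n)))))
      Filter.atTop (nhds 1) ∧
    Filter.Tendsto (fun n : ℕ =>
        avg0 n (Wn θ n) (dl θ κ n) (cminus l0)
          (fun x => Complex.exp (-(∑ j, phiPM l0 (-aplus l0) (cminus l0) (x j / Wn θ n)))))
      Filter.atTop (nhds 1) :=
  avg_phi_tendsto_one_general l0 hl0 θ κ hθ hθ1 hκ (by linarith)
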